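/- For every integer α ≥ 1 there exist integers d(0,0) and d(n,0), d(n,1), d(n,2) for n ≥ 1 such that, in the d_3 tower, L_{2α} = d(0,0)·7^α·p_0 + p_0·∑_{n≥1} d(n,0)·7^{⌊(7n−4)/4⌋+α}·t^n + p_1·∑_{n≥1} d(n,1)·7^{⌊(7n−7)/4⌋+α}·t^n + ∑_{n≥1} d(n,2)·7^{⌊(7n−7)/4⌋+α}·t^n, where the infinite sums converge coefficientwise since t^n has q-order n. -/

import Mathlib

noncomputable section

/-- `J b = ∏_{k=1}^∞ (1 - q^{b·k})` as a formal power series with integer coefficients. -/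
def J (b : ℕ) : PowerSeries ℤ :=
  PowerSeries.mk fun n =>
    PowerSeries.coeff n
      (∏ k ∈ Finset.range (n + 1), (1 - (PowerSeries.X : PowerSeries ℤ) ^ (b * (k + 1))))

/-- The coefficientwise-convergent sum `∑_{n≥0} c(n)·t^n`: since `t` has q-order 1, the
coefficient of `q^m` only receives contributions from `n ≤ m`. -/
def tpowSum (t : PowerSeries ℤ) (c : ℕ → ℤ) : PowerSeries ℤ :=
  PowerSeries.mk fun m =>
    ∑ n ∈ Finset.range (m + 1), c n * PowerSeries.coeff m (t ^ n)

/-!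
Write `ξ = q⁻² J₁ / J₄₉`, `ξ₂ = ξ(q²)` and `τ = 1 / t(q⁷)`, so that `t = τ ξ⁻⁴`. By the Jacobi
triple product `ξ = A + B + C - 1`, where the exponents of `A`, `B`, `C` lie in three residue
classes modulo `7`. Jacobi's identity for `J₁³`, which has no exponents in three of the residue
classes, gives `C = A² - A B²` and its cyclic variants, and hence `A B C = -1`. Together with the
dissection of `ξ² / ξ₂` these relations express all functions involved through three parameters
`v`, `λ`, `h`: here `v` and `λ` are series in `q⁷` with `λ` cubic over `ℤ[v]`, and
`h⁷ = v³ - v²`, while the powers `1, h, …, h⁶` have their exponents in the seven different residue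
classes. In the basis `λⁱ hʲ` the operator `U₇` is a coefficient extraction, so the equation of
degree `7` of `ξ` over `ℤ[t(q⁷)⁻¹]`, and the values of `U₇` on `φ ξᵏ` for seven consecutive `k` and
each of the six functions `φ = 1, p₀, p₁, A₃, A₃ p₀, A₃ p₁`, become identities between explicit
polynomials.

The equation of `ξ` is a recurrence for `U₇ (φ ξ⁻ⁿ)` that turns these values into lower bounds for
the `7`-adic valuations of the coefficients of all `U₇ (φ tⁿ)`, growing like `(7 m - n) / 4` in the
coefficient of `tᵐ`. Hence the tower alternates between two lattices, and every second step gains a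
factor `7`, except possibly in the coefficient of `p₀` alone; there the gain follows from the
constant term, which is preserved by `U₇` and vanishes on the lattice of the odd steps.
-/

namespace D3Tower

open PowerSeries Filter Topology
open scoped PowerSeries.WithPiTopology

/-! ### Infinite products -/

section QProducts

/-- The partial product `∏_{k < N} (1 - q^{a + r k})`. -/
def qProdUpTo (a r N : ℕ) : ℤ⟦X⟧ :=
  ∏ k ∈ Finset.range N, (1 - X ^ (a + r * k))

/-- The infinite product `(q^a; q^r)_∞`, encoded coefficientwise in the same way as `J`. -/
def qProd (a r : ℕ) : ℤ⟦X⟧ :=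
  PowerSeries.mk fun n => coeff n (qProdUpTo a r (n + 1))

variable {a r : ℕ}

lemma J_eq_qProd (b : ℕ) : J b = qProd b b := by
  ext n
  simp only [J, qProd, qProdUpTo, coeff_mk, mul_add, mul_one, add_comm b]

lemma coeff_qProdUpTo (ha : 0 < a) (hr : 0 < r) {n N : ℕ} (h : n < N) :
    coeff n (qProdUpTo a r N) = coeff n (qProd a r) := by
  induction N, h using Nat.le_induction with
  | base => simp [qProd]
  | succ N hN ih =>
    have hexp : ¬ a + r * N ≤ n := by nlinarith
    rw [← ih, qProdUpTo, Finset.prod_range_succ, ← qProdUpTo, mul_sub, mul_one, map_sub,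
      coeff_mul_X_pow', if_neg hexp, sub_zero]

lemma X_pow_dvd_qProdUpTo_sub (ha : 0 < a) (hr : 0 < r) {n N : ℕ} (h : n ≤ N) :
    X ^ n ∣ qProdUpTo a r N - qProd a r := by
  refine X_pow_dvd_iff.2 fun m hm => ?_
  rw [map_sub, coeff_qProdUpTo ha hr (hm.trans_le h), sub_self]

lemma tendsto_qProdUpTo (ha : 0 < a) (hr : 0 < r) :
    Tendsto (qProdUpTo a r) atTop (𝓝 (qProd a r)) := by
  rw [PowerSeries.WithPiTopology.tendsto_iff_coeff_tendsto]
  refine fun d => tendsto_const_nhds.congr' ?_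
  filter_upwards [eventually_gt_atTop d] with N hN
  exact (coeff_qProdUpTo ha hr hN).symm

lemma prod_range_mul_eq_prod_residues {M : Type*} [CommMonoid M] (f : ℕ → M) (s N : ℕ) :
    ∏ k ∈ Finset.range (s * N), f k =
      ∏ i ∈ Finset.range s, ∏ k ∈ Finset.range N, f (i + s * k) := by
  induction N with
  | zero => simp
  | succ N ih =>
    rw [mul_add, mul_one, Finset.prod_range_add, ih, ← Finset.prod_mul_distrib]
    simp only [Finset.prod_range_succ, add_comm (s * N)]

lemma prod_qProd_residues (ha : 0 < a) (hr : 0 < r) {s : ℕ} (hs : 0 < s) :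
    ∏ i ∈ Finset.range s, qProd (a + r * i) (r * s) = qProd a r := by
  have hleft : Tendsto (fun N => ∏ i ∈ Finset.range s, qProdUpTo (a + r * i) (r * s) N) atTop
      (𝓝 (∏ i ∈ Finset.range s, qProd (a + r * i) (r * s))) :=
    tendsto_finsetProd _ fun i _ => tendsto_qProdUpTo (by omega) (Nat.mul_pos hr hs)
  have hright : Tendsto (fun N => qProdUpTo a r (s * N)) atTop (𝓝 (qProd a r)) :=
    (tendsto_qProdUpTo ha hr).comp
      (tendsto_atTop_mono (fun n => Nat.le_mul_of_pos_left n hs) tendsto_id)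
  refine tendsto_nhds_unique (hleft.congr fun N => ?_) hright
  simp only [qProdUpTo, prod_range_mul_eq_prod_residues, mul_add, add_assoc, mul_assoc]

lemma constantCoeff_qProd (ha : 0 < a) (r : ℕ) : constantCoeff (qProd a r) = 1 := by
  rw [← coeff_zero_eq_constantCoeff_apply]
  simp [qProd, qProdUpTo, ha.ne']

lemma constantCoeff_J {b : ℕ} (hb : 0 < b) : constantCoeff (J b) = 1 := by
  rw [J_eq_qProd, constantCoeff_qProd hb]

lemma isUnit_J {b : ℕ} (hb : 0 < b) : IsUnit (J b) := by
  rw [PowerSeries.isUnit_iff_constantCoeff, constantCoeff_J hb]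
  exact isUnit_one

end QProducts

section GaussBinom

variable {R : Type*} [CommRing R] (p : R)

/-- The Gaussian binomial coefficient `[N choose m]_p`. -/
def gaussBinom : ℕ → ℕ → R
  | _, 0 => 1
  | 0, _ + 1 => 0
  | N + 1, m + 1 => gaussBinom N m + p ^ (m + 1) * gaussBinom N (m + 1)

lemma gaussBinom_succ_succ (N m : ℕ) :
    gaussBinom p (N + 1) (m + 1) = gaussBinom p N m + p ^ (m + 1) * gaussBinom p N (m + 1) := rfl

@[simp] lemma gaussBinom_zero_right (N : ℕ) : gaussBinom p N 0 = 1 := by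
  cases N <;> rfl

lemma gaussBinom_eq_zero_of_lt {N m : ℕ} (h : N < m) : gaussBinom p N m = 0 := by
  induction N generalizing m with
  | zero => obtain ⟨m, rfl⟩ := Nat.exists_eq_add_one.2 h; rfl
  | succ N ih =>
    obtain ⟨m, rfl⟩ := Nat.exists_eq_add_one.2 (Nat.zero_lt_of_lt h)
    rw [gaussBinom_succ_succ, ih (by omega), ih (by omega), mul_zero, add_zero]

lemma map_gaussBinom {S : Type*} [CommRing S] (φ : R →+* S) (N m : ℕ) :
    φ (gaussBinom p N m) = gaussBinom (φ p) N m := by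
  induction N generalizing m with
  | zero => cases m <;> simp [gaussBinom]
  | succ N ih => cases m <;> simp [gaussBinom, ih]

lemma gaussBinom_succ_succ' {N m : ℕ} (h : m ≤ N) :
    gaussBinom p (N + 1) (m + 1) = p ^ (N - m) * gaussBinom p N m + gaussBinom p N (m + 1) := by
  induction N generalizing m with
  | zero =>
    obtain rfl : m = 0 := by omega
    simp [gaussBinom]
  | succ N ih =>
    rcases eq_or_lt_of_le h with rfl | hlt
    · rw [gaussBinom_succ_succ, gaussBinom_eq_zero_of_lt p (by omega : N + 1 < N + 1 + 1)]
      simp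
    · obtain ⟨d, rfl⟩ := Nat.exists_eq_add_of_le (Nat.lt_succ_iff.1 hlt)
      cases m with
      | zero =>
        have h1 := ih (m := 0) (by omega)
        have e1 := gaussBinom_succ_succ p (0 + d) 0
        rw [gaussBinom_succ_succ]
        simp only [gaussBinom_zero_right, Nat.sub_zero] at h1 e1 ⊢
        linear_combination p * h1 - e1
      | succ m =>
        have h1 := ih (m := m) (by omega)
        have h2 := ih (m := m + 1) (by omega)
        rw [show m + 1 + d - m = d + 1 by omega] at h1
        rw [show m + 1 + d - (m + 1) = d by omega] at h2
        rw [gaussBinom_succ_succ, show m + 1 + d + 1 - (m + 1) = d + 1 by omega]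
        have e1 := gaussBinom_succ_succ p (m + 1 + d) m
        have e2 := gaussBinom_succ_succ p (m + 1 + d) (m + 1)
        linear_combination p ^ (m + 1 + 1) * h2 + h1 - p ^ (d + 1) * e1 - e2

lemma gaussBinom_mul_prod_mul_prod (m n : ℕ) :
    gaussBinom p (m + n) m * (∏ k ∈ Finset.range m, (1 - p ^ (k + 1))) *
      (∏ k ∈ Finset.range n, (1 - p ^ (k + 1))) =
        ∏ k ∈ Finset.range (m + n), (1 - p ^ (k + 1)) := by
  induction hN : m + n generalizing m n with
  | zero =>
    obtain ⟨rfl, rfl⟩ : m = 0 ∧ n = 0 := by omega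
    simp
  | succ N ih =>
    rcases m with _ | m
    · obtain rfl : n = N + 1 := by omega
      simp
    rcases n with _ | n
    · obtain rfl : N = m := by omega
      have h := ih N 0 rfl
      rw [Finset.prod_range_zero, mul_one] at h ⊢
      rw [gaussBinom_succ_succ, gaussBinom_eq_zero_of_lt p N.lt_succ_self, Finset.prod_range_succ]
      linear_combination (1 - p ^ (N + 1)) * h
    · obtain rfl : N = m + n + 1 := by omega
      have h1 := ih m (n + 1) (by omega)
      have h2 := ih (m + 1) n (by omega)
      rw [gaussBinom_succ_succ, Finset.prod_range_succ _ (m + n + 1)]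
      rw [Finset.prod_range_succ _ n] at h1 ⊢
      rw [Finset.prod_range_succ _ m] at h2 ⊢
      linear_combination (1 - p ^ (m + 1)) * h1 + p ^ (m + 1) * (1 - p ^ (n + 1)) * h2

lemma X_pow_dvd_J_mul_gaussBinom_sub_one {r K m n : ℕ} (hr : 0 < r) (hm : K ≤ m) (hn : K ≤ n) :
    X ^ K ∣ J r * gaussBinom ((X : ℤ⟦X⟧) ^ r) (m + n) m - 1 := by
  have hprod : ∀ N, ∏ k ∈ Finset.range N, (1 - ((X : ℤ⟦X⟧) ^ r) ^ (k + 1)) = qProdUpTo r r N := by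
    intro N
    simp only [qProdUpTo, ← pow_mul, mul_add, mul_one, add_comm]
  have hfact := gaussBinom_mul_prod_mul_prod ((X : ℤ⟦X⟧) ^ r) m n
  rw [hprod, hprod, hprod] at hfact
  have happrox : ∀ N, K ≤ N → X ^ K ∣ qProdUpTo r r N - J r := fun N hN => by
    rw [J_eq_qProd]
    exact X_pow_dvd_qProdUpTo_sub hr hr hN
  obtain ⟨u, hu⟩ := happrox m hm
  obtain ⟨v, hv⟩ := happrox n hn
  obtain ⟨w, hw⟩ := happrox (m + n) (by omega)
  obtain ⟨J', hJ'⟩ := (isUnit_J hr).exists_left_inv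
  set g := gaussBinom ((X : ℤ⟦X⟧) ^ r) (m + n) m
  refine ⟨J' * (w - g * u * qProdUpTo r r n - g * J r * v), ?_⟩
  linear_combination J' * (hfact + hw - g * qProdUpTo r r n * hu - g * J r * hv) -
    (J r * g - 1) * hJ'

end GaussBinom

/-! ### The Jacobi triple product -/

/-- The triangular number `j (j + 1) / 2` of an arbitrary integer `j`. -/
def triangular (j : ℤ) : ℕ := (j * (j + 1) / 2).toNat

lemma two_mul_triangular (j : ℤ) : 2 * (triangular j : ℤ) = j * (j + 1) := by
  have heven : 2 ∣ j * (j + 1) := (Int.even_mul_succ_self j).two_dvd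
  have hnonneg : 0 ≤ j * (j + 1) := by
    rcases le_or_gt 0 j with h | h
    · positivity
    · nlinarith
  unfold triangular
  omega

lemma triangular_sub_one_add (j : ℤ) : (triangular (j - 1) : ℤ) + j = triangular j := by
  linarith [two_mul_triangular j, two_mul_triangular (j - 1)]

lemma abs_le_triangular_sub_one_add_one (j : ℤ) : |j| ≤ triangular (j - 1) + 1 := by
  have h := two_mul_triangular (j - 1)
  rw [abs_le]
  constructor
  · rcases le_or_gt 0 j with hj | hj <;> nlinarith
  · rcases le_or_gt j 1 with hj | hj <;> nlinarith

section FiniteTripleProduct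

variable {R : Type*} [CommRing R] (x y : R)

/-- The `j`-th term `(-1)^j x^{j(j+1)/2} y^{j(j-1)/2}` of Ramanujan's theta function
`f(-x, -y)`. -/
def thetaTerm (j : ℤ) : R :=
  (((j.negOnePow : ℤˣ) : ℤ) : R) * x ^ triangular j * y ^ triangular (j - 1)

lemma pow_mul_thetaTerm_add_one {a m : ℕ} {j : ℤ} (h : a + j = m) :
    (x * y) ^ a * thetaTerm x y (j + 1) = -(x * (x * y) ^ m) * thetaTerm x y j := by
  have htri := triangular_sub_one_add (j + 1)
  have htri' := triangular_sub_one_add j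
  rw [add_sub_cancel_right] at htri
  have hx : x ^ a * x ^ triangular (j + 1) = x ^ (m + 1) * x ^ triangular j := by
    rw [← pow_add, ← pow_add]; congr 1; omega
  have hy : y ^ a * y ^ triangular j = y ^ m * y ^ triangular (j - 1) := by
    rw [← pow_add, ← pow_add]; congr 1; omega
  simp only [thetaTerm, Int.negOnePow_succ, add_sub_cancel_right, Units.val_neg, Int.cast_neg,
    mul_pow]
  linear_combination -((j.negOnePow : ℤ) : R) * (y ^ a * y ^ triangular j * hx +
    x ^ (m + 1) * x ^ triangular j * hy)

lemma pow_mul_thetaTerm_sub_one {a n : ℕ} {j : ℤ} (h : (a : ℤ) = n + j) :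
    (x * y) ^ a * thetaTerm x y (j - 1) = -(y * (x * y) ^ n) * thetaTerm x y j := by
  have htri := triangular_sub_one_add (j - 1)
  have htri' := triangular_sub_one_add j
  have hx : x ^ a * x ^ triangular (j - 1) = x ^ n * x ^ triangular j := by
    rw [← pow_add, ← pow_add]; congr 1; omega
  have hy : y ^ a * y ^ triangular (j - 1 - 1) = y ^ (n + 1) * y ^ triangular (j - 1) := by
    rw [← pow_add, ← pow_add]; congr 1; omega
  simp only [thetaTerm, Int.negOnePow_sub, Int.negOnePow_one, mul_neg_one, Units.val_neg,
    Int.cast_neg, mul_pow]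
  linear_combination -((j.negOnePow : ℤ) : R) * (y ^ a * y ^ triangular (j - 1 - 1) * hx +
    x ^ n * x ^ triangular j * hy)

/-- A finite form of the right-hand side of the Jacobi triple product. -/
def thetaSum (m n : ℕ) : R :=
  ∑ i ∈ Finset.range (m + n + 1), thetaTerm x y (i - n) * gaussBinom (x * y) (m + n) i

lemma thetaSum_succ_left (m n : ℕ) :
    thetaSum x y (m + 1) n = (1 - x * (x * y) ^ m) * thetaSum x y m n := by
  have hstep : ∀ i ∈ Finset.range (m + n + 1),
      thetaTerm x y ((i + 1 : ℕ) - n) * gaussBinom (x * y) (m + n + 1) (i + 1) =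
        -(x * (x * y) ^ m) * (thetaTerm x y (i - n) * gaussBinom (x * y) (m + n) i) +
          thetaTerm x y ((i + 1 : ℕ) - n) * gaussBinom (x * y) (m + n) (i + 1) := by
    intro i hi
    have hi' : i ≤ m + n := Nat.lt_succ_iff.1 (Finset.mem_range.1 hi)
    have h := pow_mul_thetaTerm_add_one x y (a := m + n - i) (m := m) (j := i - n) (by omega)
    rw [show (i : ℤ) - n + 1 = (i + 1 : ℕ) - n by push_cast; ring] at h
    rw [gaussBinom_succ_succ' _ hi']
    linear_combination gaussBinom (x * y) (m + n) i * h
  have hlast : gaussBinom (x * y) (m + n) (m + n + 1) = 0 :=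
    gaussBinom_eq_zero_of_lt _ (Nat.lt_succ_self _)
  have hold : thetaSum x y m n = (∑ i ∈ Finset.range (m + n + 1),
      thetaTerm x y ((i + 1 : ℕ) - n) * gaussBinom (x * y) (m + n) (i + 1)) +
        thetaTerm x y ((0 : ℕ) - n) := by
    rw [Finset.sum_range_succ, hlast, mul_zero, add_zero, thetaSum, Finset.sum_range_succ',
      gaussBinom_zero_right, mul_one]
  rw [thetaSum, show m + 1 + n = m + n + 1 by ring, Finset.sum_range_succ',
    Finset.sum_congr rfl hstep, Finset.sum_add_distrib, ← Finset.mul_sum, ← thetaSum,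
    gaussBinom_zero_right, mul_one, add_assoc, ← hold]
  ring

lemma thetaSum_succ_right (m n : ℕ) :
    thetaSum x y m (n + 1) = (1 - y * (x * y) ^ n) * thetaSum x y m n := by
  have hstep : ∀ i : ℕ,
      (x * y) ^ i * thetaTerm x y (i - (n + 1 : ℕ)) * gaussBinom (x * y) (m + n) i =
        -(y * (x * y) ^ n) * (thetaTerm x y (i - n) * gaussBinom (x * y) (m + n) i) := by
    intro i
    have h := pow_mul_thetaTerm_sub_one x y (a := i) (n := n) (j := i - n) (by omega)
    rw [show (i : ℤ) - n - 1 = i - (n + 1 : ℕ) by push_cast; ring] at h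
    linear_combination gaussBinom (x * y) (m + n) i * h
  have hlast : gaussBinom (x * y) (m + n) (m + n + 1) = 0 :=
    gaussBinom_eq_zero_of_lt _ (Nat.lt_succ_self _)
  have hshift : ∀ i : ℕ,
      thetaTerm x y ((i + 1 : ℕ) - (n + 1 : ℕ)) * gaussBinom (x * y) (m + n + 1) (i + 1) =
        thetaTerm x y (i - n) * gaussBinom (x * y) (m + n) i +
          (x * y) ^ (i + 1) * thetaTerm x y ((i + 1 : ℕ) - (n + 1 : ℕ)) *
            gaussBinom (x * y) (m + n) (i + 1) := by
    intro i
    rw [gaussBinom_succ_succ, show ((i + 1 : ℕ) : ℤ) - (n + 1 : ℕ) = i - n by push_cast; ring]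
    ring
  have hsecond : -(y * (x * y) ^ n) * thetaSum x y m n = (∑ i ∈ Finset.range (m + n + 1),
      (x * y) ^ (i + 1) * thetaTerm x y ((i + 1 : ℕ) - (n + 1 : ℕ)) *
        gaussBinom (x * y) (m + n) (i + 1)) + thetaTerm x y ((0 : ℕ) - (n + 1 : ℕ)) := by
    rw [Finset.sum_range_succ, hlast, mul_zero, add_zero, thetaSum, Finset.mul_sum,
      ← Finset.sum_congr rfl fun i _ => hstep i, Finset.sum_range_succ', gaussBinom_zero_right,
      pow_zero, one_mul, mul_one]
  rw [thetaSum, ← add_assoc m n 1, Finset.sum_range_succ', Finset.sum_congr rfl fun i _ => hshift i,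
    Finset.sum_add_distrib, ← thetaSum, gaussBinom_zero_right, mul_one, add_assoc, ← hsecond]
  ring

theorem prod_mul_prod_eq_thetaSum (m n : ℕ) :
    (∏ k ∈ Finset.range m, (1 - x * (x * y) ^ k)) * ∏ k ∈ Finset.range n, (1 - y * (x * y) ^ k) =
      thetaSum x y m n := by
  induction m with
  | zero =>
    induction n with
    | zero => simp [thetaSum, thetaTerm, triangular]
    | succ n ih =>
      rw [thetaSum_succ_right, ← ih, Finset.prod_range_succ _ n]
      ring
  | succ m ih =>
    rw [thetaSum_succ_left, ← ih, Finset.prod_range_succ]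
    ring

end FiniteTripleProduct

section BilateralSeries

/-- The bilateral series `∑_{j ∈ ℤ} c_j q^{e_j}`, meaningful when the exponent function `e` has
finite fibres. -/
def bilateralSeries (c : ℤ → ℤ) (e : ℤ → ℕ) : ℤ⟦X⟧ :=
  PowerSeries.mk fun n => ∑ᶠ (j : ℤ) (_ : e j = n), c j

variable {c : ℤ → ℤ} {e : ℤ → ℕ}

lemma coeff_bilateralSeries {n : ℕ} {S : Finset ℤ} (hS : ∀ j, e j = n → j ∈ S) :
    coeff n (bilateralSeries c e) = ∑ j ∈ S with e j = n, c j := by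
  rw [bilateralSeries, coeff_mk]
  refine finsum_mem_eq_sum_of_inter_support_eq _ ?_
  ext j
  simp only [Set.mem_inter_iff, Set.mem_ofPred_eq, Finset.coe_filter, Function.mem_support]
  exact ⟨fun h => ⟨⟨hS j h.1, h.1⟩, h.2⟩, fun h => ⟨h.1.2, h.2⟩⟩

lemma coeff_sum_mul_gaussBinom (he : ∀ j, |j| ≤ e j + 1) {r : ℕ} (hr : 0 < r) {K n : ℕ}
    (hn : 2 * K + 2 ≤ n) :
    coeff K (J r * ∑ i ∈ Finset.range (n + n + 1),
      C (c (i - n)) * X ^ e (i - n) * gaussBinom ((X : ℤ⟦X⟧) ^ r) (n + n) i) =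
        coeff K (bilateralSeries c e) := by
  have hterm : ∀ i ∈ Finset.range (n + n + 1), coeff K (J r *
      (C (c (i - n)) * X ^ e (i - n) * gaussBinom ((X : ℤ⟦X⟧) ^ r) (n + n) i)) =
        if e (i - n) = K then c (i - n) else 0 := by
    intro i hi
    set j : ℤ := i - n
    have hej := abs_le.1 (he j)
    have hi' := Finset.mem_range.1 hi
    rw [mul_comm (J r), mul_assoc, mul_assoc, coeff_C_mul, coeff_X_pow_mul',
      mul_comm (gaussBinom _ _ _)]
    by_cases hK : e j ≤ K
    · have hdvd := X_pow_dvd_J_mul_gaussBinom_sub_one hr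
        (K := K + 1) (m := i) (n := n + n - i) (by omega) (by omega)
      rw [show i + (n + n - i) = n + n by omega] at hdvd
      have hcoeff := X_pow_dvd_iff.1 hdvd (K - e j) (by omega)
      rw [map_sub, sub_eq_zero] at hcoeff
      rw [if_pos hK, hcoeff, coeff_one]
      by_cases h : e j = K
      · simp [h]
      · rw [if_neg h, if_neg (by omega), mul_zero]
    · rw [if_neg hK, if_neg (by omega), mul_zero]
  have hfibre : ∀ j, e j = K →
      j ∈ (Finset.range (n + n + 1)).image fun i : ℕ => (i : ℤ) - n := by
    intro j hj
    have hej := abs_le.1 (he j)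
    exact Finset.mem_image.2 ⟨(j + n).toNat, Finset.mem_range.2 (by omega), by omega⟩
  rw [coeff_bilateralSeries hfibre, Finset.sum_filter, Finset.sum_image (by intro; simp),
    Finset.mul_sum, map_sum, Finset.sum_congr rfl hterm]

lemma J_mul_eq_bilateralSeries (he : ∀ j, |j| ≤ e j + 1) {r : ℕ} (hr : 0 < r) {F : ℤ⟦X⟧}
    (hF : Tendsto (fun n : ℕ => ∑ i ∈ Finset.range (n + n + 1),
      C (c (i - n)) * X ^ e (i - n) * gaussBinom ((X : ℤ⟦X⟧) ^ r) (n + n) i) atTop (𝓝 F)) :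
    J r * F = bilateralSeries c e := by
  refine tendsto_nhds_unique ((tendsto_const_nhds (x := J r)).mul hF) ?_
  rw [PowerSeries.WithPiTopology.tendsto_iff_coeff_tendsto]
  refine fun K => tendsto_const_nhds.congr' ?_
  filter_upwards [eventually_ge_atTop (2 * K + 2)] with n hn
  exact (coeff_sum_mul_gaussBinom he hr hn).symm

end BilateralSeries

section TripleProduct

/-- Ramanujan's theta function `f(-q^a, -q^b) = ∑_j (-1)^j q^{a j(j+1)/2 + b j(j-1)/2}`. -/
def ramanujanTheta (a b : ℕ) : ℤ⟦X⟧ :=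
  bilateralSeries (fun j => j.negOnePow) fun j => a * triangular j + b * triangular (j - 1)

lemma abs_le_thetaExponent_add_one (a : ℕ) {b : ℕ} (hb : 0 < b) (j : ℤ) :
    |j| ≤ (a * triangular j + b * triangular (j - 1) : ℕ) + 1 := by
  have h := abs_le_triangular_sub_one_add_one j
  have h2 : triangular (j - 1) ≤ b * triangular (j - 1) := Nat.le_mul_of_pos_left _ hb
  push_cast
  nlinarith

theorem ramanujanTheta_eq_prod {a b : ℕ} (ha : 0 < a) (hb : 0 < b) :
    ramanujanTheta a b = J (a + b) * (qProd a (a + b) * qProd b (a + b)) := by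
  refine (J_mul_eq_bilateralSeries (abs_le_thetaExponent_add_one a hb) (by omega) ?_).symm
  refine ((tendsto_qProdUpTo ha (by omega)).mul (tendsto_qProdUpTo hb (by omega))).congr
    fun n => ?_
  have h := prod_mul_prod_eq_thetaSum ((X : ℤ⟦X⟧) ^ a) (X ^ b) n n
  have hterm : ∀ j : ℤ, thetaTerm ((X : ℤ⟦X⟧) ^ a) (X ^ b) j =
      C ((j.negOnePow : ℤˣ) : ℤ) * X ^ (a * triangular j + b * triangular (j - 1)) := by
    intro j
    simp [thetaTerm, pow_add, pow_mul, mul_assoc]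
  simpa only [thetaSum, hterm, ← pow_add, ← pow_mul, qProdUpTo] using h

lemma J_one_eq_ramanujanTheta : J 1 = ramanujanTheta 1 2 := by
  have h := prod_qProd_residues (a := 1) (r := 1) one_pos one_pos (s := 3) (by norm_num)
  norm_num [Finset.prod_range_succ] at h
  rw [ramanujanTheta_eq_prod one_pos two_pos, J_eq_qProd, J_eq_qProd, ← h]
  norm_num
  ring

lemma constantCoeff_ramanujanTheta {a b : ℕ} (ha : 0 < a) (hb : 0 < b) :
    constantCoeff (ramanujanTheta a b) = 1 := by
  simp only [ramanujanTheta_eq_prod ha hb, map_mul, constantCoeff_J (add_pos ha hb),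
    constantCoeff_qProd ha, constantCoeff_qProd hb, mul_one]

lemma J_one_sq_eq : J 1 ^ 2 = J 2 * ramanujanTheta 1 1 := by
  have h := prod_qProd_residues (a := 1) (r := 1) one_pos one_pos (s := 2) (by norm_num)
  norm_num [Finset.prod_range_succ] at h
  rw [ramanujanTheta_eq_prod one_pos one_pos, J_eq_qProd, J_eq_qProd, J_eq_qProd, ← h]
  norm_num
  ring

end TripleProduct

/-! ### Dissections of theta functions and Jacobi's identity -/

section Dissection

variable {c : ℤ → ℤ} {e : ℤ → ℕ}

lemma coeff_bilateralSeries_eq_zero {n : ℕ} (h : ∀ j, e j ≠ n) :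
    coeff n (bilateralSeries c e) = 0 := by
  simp [coeff_bilateralSeries (S := ∅) fun j hj => (h j hj).elim]

lemma expand_bilateralSeries {N : ℕ} (hN : N ≠ 0) :
    expand N hN (bilateralSeries c e) = bilateralSeries c fun j => N * e j := by
  ext n
  by_cases h : N ∣ n
  · obtain ⟨k, rfl⟩ := h
    simp [bilateralSeries, coeff_expand_mul, hN]
  · rw [coeff_expand_of_not_dvd N hN _ h, coeff_bilateralSeries_eq_zero]
    exact fun j hj => h ⟨e j, hj.symm⟩

lemma bilateralSeries_smul_add (ε : ℤ) (K : ℕ) :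
    bilateralSeries (fun j => ε * c j) (fun j => e j + K) =
      C ε * X ^ K * bilateralSeries c e := by
  ext n
  rw [mul_assoc, coeff_C_mul, coeff_X_pow_mul']
  split_ifs with h
  · simp only [bilateralSeries, coeff_mk, ← smul_eq_mul (a := ε), smul_finsum,
      show ∀ j, e j + K = n ↔ e j = n - K by omega]
  · rw [mul_zero, coeff_bilateralSeries_eq_zero fun j hj => h (by omega)]

lemma eq_biUnion_residues (S : Set ℤ) {m : ℕ} (hm : 0 < m) (l : ℤ) :
    S = ⋃ i ∈ Finset.range m,
      (fun k : ℤ => m * k + (i - l)) '' ((fun k : ℤ => m * k + (i - l)) ⁻¹' S) := by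
  ext j
  simp only [Set.mem_preimage, Set.mem_iUnion, Set.mem_image, Finset.mem_range, exists_prop]
  constructor
  · intro hj
    have hm' : (m : ℤ) ≠ 0 := by exact_mod_cast hm.ne'
    have hnonneg := Int.emod_nonneg (j + l) hm'
    have hlt := Int.emod_lt_of_pos (j + l) (by exact_mod_cast hm : (0 : ℤ) < m)
    have hdiv := Int.mul_ediv_add_emod (j + l) m
    have hj' : (m : ℤ) * ((j + l) / m) + (((j + l) % m).toNat - l) = j := by omega
    exact ⟨((j + l) % m).toNat, by omega, (j + l) / m, by rwa [hj'], hj'⟩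
  · rintro ⟨i, -, k, hk, rfl⟩
    exact hk

lemma pairwiseDisjoint_residues (T : ℕ → Set ℤ) (m : ℕ) (l : ℤ) :
    (Finset.range m : Set ℕ).PairwiseDisjoint fun i : ℕ =>
      (fun k : ℤ => m * k + (i - l)) '' T i := by
  intro i hi i' hi' hne
  refine Set.disjoint_left.2 ?_
  rintro _ ⟨k, -, rfl⟩ ⟨k', -, h⟩
  simp only [Finset.coe_range, Set.mem_Iio] at hi hi' h
  have hmod := congrArg (· % (m : ℤ)) (show (m : ℤ) * k' + i' = m * k + i by linarith)
  simp only [Int.mul_add_emod_self_left] at hmod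
  rw [Int.emod_eq_of_lt (by omega) (by omega), Int.emod_eq_of_lt (by omega) (by omega)] at hmod
  omega

lemma bilateralSeries_eq_sum_residues (he : ∀ n, {j | e j = n}.Finite) {m : ℕ} (hm : 0 < m)
    (l : ℤ) :
    bilateralSeries c e = ∑ i ∈ Finset.range m,
      bilateralSeries (fun k => c (m * k + (i - l))) fun k => e (m * k + (i - l)) := by
  ext n
  simp only [map_sum, bilateralSeries, coeff_mk]
  have hinj (i : ℤ) : Function.Injective fun k : ℤ => m * k + (i - l) := fun k k' h => by
    simpa [hm.ne'] using h
  calc ∑ᶠ (j : ℤ) (_ : e j = n), c j = ∑ᶠ j ∈ {j | e j = n}, c j := rfl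
    _ = _ := by
      rw [eq_biUnion_residues {j | e j = n} hm l, ← Finset.set_biUnion_coe,
        finsum_mem_biUnion (pairwiseDisjoint_residues _ m l) (Finset.finite_toSet _)
          fun i _ => ((he n).preimage (hinj i).injOn).image _,
        finsum_mem_coe_finset]
      refine Finset.sum_congr rfl fun i _ => ?_
      rw [finsum_mem_image (hinj i).injOn]
      rfl

end Dissection

section Theta

variable {a b : ℕ}

lemma expand_ramanujanTheta {N : ℕ} (hN : N ≠ 0) :
    expand N hN (ramanujanTheta a b) = ramanujanTheta (N * a) (N * b) := by
  simp only [ramanujanTheta, expand_bilateralSeries, mul_add, mul_assoc]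

lemma ramanujanTheta_comm (ha : 0 < a) (hb : 0 < b) : ramanujanTheta a b = ramanujanTheta b a := by
  rw [ramanujanTheta_eq_prod ha hb, ramanujanTheta_eq_prod hb ha, add_comm b a]
  ring

lemma finite_thetaExponent_fibre (a : ℕ) (hb : 0 < b) (n : ℕ) :
    {j : ℤ | a * triangular j + b * triangular (j - 1) = n}.Finite := by
  refine (Set.finite_Icc (-(n + 1) : ℤ) (n + 1)).subset ?_
  rintro j (rfl : _ = n)
  exact abs_le.1 (abs_le_thetaExponent_add_one a hb j)

lemma ramanujanTheta_dissection (a : ℕ) (hb : 0 < b) (l : ℕ) :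
    ramanujanTheta a b = ∑ i ∈ Finset.range (2 * l + 1),
      C ((Int.negOnePow (i - l) : ℤˣ) : ℤ) *
        X ^ (a * triangular (i - l) + b * triangular (i - l - 1)) *
        ramanujanTheta ((2 * l + 1) * (a + (a + b) * i))
          ((2 * l + 1) * (b + (a + b) * (2 * l - i))) := by
  rw [ramanujanTheta, bilateralSeries_eq_sum_residues (finite_thetaExponent_fibre a hb)
    (Nat.succ_pos (2 * l)) l]
  refine Finset.sum_congr rfl fun i hi => ?_
  rw [ramanujanTheta, ← bilateralSeries_smul_add]
  congr 1 <;> ext k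
  · have hodd : Int.negOnePow (((2 * l).succ : ℕ) * k) = Int.negOnePow k := by
      rw [Int.negOnePow_eq_iff]
      exact ⟨l * k, by push_cast; ring⟩
    rw [Int.negOnePow_add, hodd, Units.val_mul, mul_comm]
  · have hi' : i ≤ 2 * l := Nat.lt_succ_iff.1 (Finset.mem_range.1 hi)
    have h1 := two_mul_triangular (((2 * l).succ : ℕ) * k + (i - l))
    have h2 := two_mul_triangular (((2 * l).succ : ℕ) * k + (i - l) - 1)
    have h3 := two_mul_triangular (i - l)
    have h4 := two_mul_triangular (i - l - 1)
    have h5 := two_mul_triangular k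
    have h6 := two_mul_triangular (k - 1)
    zify [hi']
    push_cast at h1 h2 ⊢
    refine mul_left_cancel₀ two_ne_zero ?_
    linear_combination a * h1 + b * h2 - a * h3 - b * h4 -
      ((2 * l + 1) * (a + (a + b) * i)) * h5 - ((2 * l + 1) * (b + (a + b) * (2 * l - i))) * h6

lemma expand_J {N b : ℕ} (hN : N ≠ 0) (hb : 0 < b) : expand N hN (J b) = J (N * b) := by
  have hNb : 0 < N * b := Nat.mul_pos (Nat.pos_of_ne_zero hN) hb
  have hfin : ∀ M, expand N hN (qProdUpTo b b M) = qProdUpTo (N * b) (N * b) M := fun M => by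
    simp [qProdUpTo, map_prod, ← pow_mul, mul_add, mul_assoc]
  ext n
  rw [J_eq_qProd, J_eq_qProd, ← coeff_qProdUpTo hNb hNb n.lt_succ_self, ← hfin, coeff_expand,
    coeff_expand, coeff_qProdUpTo hb hb (Nat.lt_succ_of_le (Nat.div_le_self n N))]

/-- The part of `J 1` with exponents divisible by `7`, as a series in `q^7`. -/
def jPartZero : ℤ⟦X⟧ := ramanujanTheta 10 11 + X * ramanujanTheta 4 17

/-- The quotient by `q` of the part of `J 1` with exponents congruent to `1` modulo `7`, as a series
in `q^7`. -/
def jPartOne : ℤ⟦X⟧ := -(ramanujanTheta 13 8 + X ^ 2 * ramanujanTheta 1 20)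

/-- The quotient by `q^5` of the part of `J 1` with exponents congruent to `5` modulo `7`, as a
series in `q^7`. -/
def jPartFive : ℤ⟦X⟧ := ramanujanTheta 16 5 - X * ramanujanTheta 19 2

lemma triangular_small : triangular (-4) = 6 ∧ triangular (-3) = 3 ∧ triangular (-2) = 1 ∧
    triangular (-1) = 0 ∧ triangular 0 = 0 ∧ triangular 1 = 1 ∧ triangular 2 = 3 ∧
    triangular 3 = 6 := by decide

lemma J_one_dissection :
    J 1 = expand 7 (by norm_num) jPartZero + X * expand 7 (by norm_num) jPartOne +
      X ^ 5 * expand 7 (by norm_num) jPartFive - X ^ 2 * J 49 := by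
  have hJ : J 49 = ramanujanTheta 49 98 := by
    rw [← expand_J (N := 49) (b := 1) (by norm_num) one_pos, J_one_eq_ramanujanTheta,
      expand_ramanujanTheta]
  rw [J_one_eq_ramanujanTheta, ramanujanTheta_dissection 1 two_pos 3, hJ]
  norm_num [Finset.sum_range_succ, triangular_small, jPartZero, jPartOne,
    jPartFive, expand_ramanujanTheta]
  ring

lemma ramanujanTheta_one_one_dissection :
    ramanujanTheta 1 1 = ramanujanTheta 49 49 - 2 * X * ramanujanTheta 63 35 +
      2 * X ^ 4 * ramanujanTheta 77 21 - 2 * X ^ 9 * ramanujanTheta 91 7 := by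
  rw [ramanujanTheta_dissection 1 one_pos 3]
  norm_num [Finset.sum_range_succ, triangular_small,
    ramanujanTheta_comm (a := 7), ramanujanTheta_comm (a := 21), ramanujanTheta_comm (a := 35)]
  ring

lemma ramanujanTheta_49_49_mul : ramanujanTheta 49 49 * J 98 = J 49 ^ 2 := by
  have h := congrArg (expand 49 (by norm_num)) J_one_sq_eq
  rw [map_pow, map_mul, expand_J _ one_pos, expand_J _ two_pos, expand_ramanujanTheta] at h
  norm_num at h
  rw [h, mul_comm]

lemma ramanujanTheta_mul_mul :
    ramanujanTheta 63 35 * ramanujanTheta 91 7 * ramanujanTheta 77 21 * (J 14 * J 49) =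
      J 98 ^ 4 * J 7 := by
  have h1 := prod_qProd_residues (a := 7) (r := 7) (s := 2) (by norm_num) (by norm_num) two_pos
  have h2 := prod_qProd_residues (a := 7) (r := 14) (s := 7) (by norm_num) (by norm_num)
    (by norm_num)
  have h3 := prod_qProd_residues (a := 49) (r := 49) (s := 2) (by norm_num) (by norm_num) two_pos
  norm_num [Finset.prod_range_succ] at h1 h2 h3
  simp only [ramanujanTheta_eq_prod (a := 63) (b := 35) (by norm_num) (by norm_num),
    ramanujanTheta_eq_prod (a := 91) (b := 7) (by norm_num) (by norm_num),
    ramanujanTheta_eq_prod (a := 77) (b := 21) (by norm_num) (by norm_num), J_eq_qProd,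
    ← h1, ← h3]
  norm_num [← h2]
  ring

end Theta

section JacobiCube

variable {R : Type*} [CommRing R]

open TrivSqZeroExt in
lemma snd_thetaTerm_one_add_eps (p : R) (j : ℤ) :
    snd (thetaTerm (1 + DualNumber.eps) (inl p * (1 - DualNumber.eps)) j) =
      (((j.negOnePow : ℤˣ) * j : ℤ) : R) * p ^ triangular (j - 1) := by
  have hadd : ∀ n : ℕ, (1 + DualNumber.eps : DualNumber R) ^ n = 1 + inr (n : R) := fun n => by
    ext <;> simp [snd_pow]
  have hsub : ∀ n : ℕ, (1 - DualNumber.eps : DualNumber R) ^ n = 1 - inr (n : R) := fun n => by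
    ext <;> simp [snd_pow]
  have hint : ∀ k : ℤ, (k : DualNumber R) = inl (k : R) := fun k => by simp
  have htri := congrArg (Int.cast : ℤ → R) (triangular_sub_one_add j)
  push_cast at htri
  rw [thetaTerm, mul_pow, hadd, hsub, hint]
  simp [← htri]
  ring

open TrivSqZeroExt in
/-- Differentiate the finite triple product in `x` at `x = 1` with `p = x y` fixed. -/
lemma prod_mul_prod_eq_neg_sum (p : R) (m n : ℕ) :
    (∏ k ∈ Finset.range m, (1 - p ^ (k + 1))) * ∏ k ∈ Finset.range n, (1 - p ^ (k + 1)) =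
      ∑ i ∈ Finset.range (m + 1 + n + 1), ((-(((i - n : ℤ).negOnePow : ℤˣ) * (i - n)) : ℤ) : R) *
        p ^ triangular (i - n - 1) * gaussBinom p (m + 1 + n) i := by
  have h := congrArg snd (prod_mul_prod_eq_thetaSum (1 + DualNumber.eps : DualNumber R)
    (inl p * (1 - DualNumber.eps)) (m + 1) n)
  have hxy : (1 + DualNumber.eps) * (inl p * (1 - DualNumber.eps)) = inlHom R R p := by
    ext <;> simp
  have hfst : ∀ (f : ℕ → DualNumber R) (N : ℕ),
      fst (∏ k ∈ Finset.range N, f k) = ∏ k ∈ Finset.range N, fst (f k) := fun f N =>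
    map_prod (fstHom R R R) f _
  have hright : ∀ i : ℕ, snd (thetaTerm (1 + DualNumber.eps) (inl p * (1 - DualNumber.eps))
      (i - n) * gaussBinom (inlHom R R p) (m + 1 + n) i) =
        ((((i - n : ℤ).negOnePow : ℤˣ) * (i - n) : ℤ) : R) *
          p ^ triangular (i - n - 1) * gaussBinom p (m + 1 + n) i := fun i => by
    rw [← map_gaussBinom, inlHom_apply, snd_mul, snd_thetaTerm_one_add_eps]
    simp [mul_comm]
  rw [thetaSum, hxy, Finset.prod_range_succ', snd_sum,
    Finset.sum_congr rfl fun i _ => hright i] at h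
  rw [← neg_inj, ← Finset.sum_neg_distrib]
  simp only [Int.cast_neg, neg_mul, neg_neg]
  rw [← h]
  simp [hfst, pow_succ', mul_comm]

lemma J_one_cube : J 1 ^ 3 =
    bilateralSeries (fun j => -((j.negOnePow : ℤˣ) * j)) fun j => triangular (j - 1) := by
  rw [← J_mul_eq_bilateralSeries (F := J 1 * J 1) abs_le_triangular_sub_one_add_one one_pos]
  · ring
  · rw [← tendsto_add_atTop_iff_nat 1, J_eq_qProd]
    have hlim := tendsto_qProdUpTo (a := 1) (r := 1) one_pos one_pos
    refine (hlim.mul ((tendsto_add_atTop_iff_nat 1).2 hlim)).congr fun n => ?_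
    simpa [qProdUpTo, add_comm 1] using prod_mul_prod_eq_neg_sum (X : ℤ⟦X⟧) n (n + 1)

lemma coeff_J_one_cube_eq_zero {n : ℕ} (h : n % 7 = 2 ∨ n % 7 = 4 ∨ n % 7 = 5) :
    coeff n (J 1 ^ 3) = 0 := by
  rw [J_one_cube, coeff_bilateralSeries_eq_zero]
  rintro j rfl
  have htri := two_mul_triangular (j - 1)
  obtain ⟨k, r, rfl, hr⟩ : ∃ k r : ℤ, j = 7 * k + r ∧ 0 ≤ r ∧ r < 7 :=
    ⟨j / 7, j % 7, by omega, by omega⟩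
  obtain ⟨hr0, hr7⟩ := hr
  interval_cases r <;> ring_nf at htri h <;> omega

end JacobiCube

/-! ### The norm of `J 1` over the roots of unity -/

section Norm

lemma prod_range_sub_pow_mul {A : Type*} [CommRing A] [IsDomain A] {n : ℕ} {ζ : A}
    (hζ : IsPrimitiveRoot ζ n) (hn : 0 < n) (x y : A) :
    ∏ j ∈ Finset.range n, (x - ζ ^ j * y) = x ^ n - y ^ n := by
  rw [hζ.pow_sub_pow_eq_prod_sub_mul x y hn]
  refine Finset.prod_nbij (ζ ^ ·) (fun j _ => ?_) (fun i hi j hj h => ?_) (fun w hw => ?_)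
    fun _ _ => rfl
  · rw [Polynomial.mem_nthRootsFinset hn, pow_right_comm, hζ.pow_eq_one, one_pow]
  · exact hζ.pow_inj (Finset.mem_range.1 hi) (Finset.mem_range.1 hj) h
  · have : NeZero n := ⟨hn.ne'⟩
    obtain ⟨j, hj, rfl⟩ := hζ.eq_pow_of_pow_eq_one ((Polynomial.mem_nthRootsFinset hn _).1 hw)
    exact ⟨j, Finset.mem_coe.2 (Finset.mem_range.2 hj), rfl⟩

/-- The twist `f(q) ↦ f(ζ q)` of an integral power series, with complex coefficients. -/
def twist (ζ : ℂ) : ℤ⟦X⟧ →+* ℂ⟦X⟧ :=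
  (rescale ζ).comp (PowerSeries.map (Int.castRingHom ℂ))

variable {p : ℕ} {ζ : ℂ}

lemma twist_X (ζ : ℂ) : twist ζ X = C ζ * X := by
  simp [twist, rescale_X]

lemma twist_expand (hζ : ζ ^ p = 1) (hp : p ≠ 0) (f : ℤ⟦X⟧) :
    twist ζ (expand p hp f) = twist 1 (expand p hp f) := by
  ext n
  by_cases hn : p ∣ n
  · obtain ⟨k, rfl⟩ := hn
    simp [twist, coeff_rescale, pow_mul, hζ]
  · simp [twist, coeff_rescale, coeff_expand_of_not_dvd _ hp _ hn]

lemma twist_one_injective : Function.Injective (twist 1) := fun f g h => by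
  ext n
  simpa [twist, coeff_rescale] using congrArg (coeff n) h

lemma tendsto_twist_qProdUpTo (ζ : ℂ) {a r : ℕ} (ha : 0 < a) (hr : 0 < r) :
    Tendsto (fun N => twist ζ (qProdUpTo a r N)) atTop (𝓝 (twist ζ (qProd a r))) := by
  rw [PowerSeries.WithPiTopology.tendsto_iff_coeff_tendsto]
  refine fun d => tendsto_const_nhds.congr' ?_
  filter_upwards [eventually_gt_atTop d] with N hN
  simp [twist, coeff_rescale, coeff_qProdUpTo ha hr hN]

lemma prod_twist_one_sub_X_pow (hp : p.Prime) (hζ : IsPrimitiveRoot ζ p) {k : ℕ} (hk : ¬ p ∣ k) :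
    ∏ j ∈ Finset.range p, twist (ζ ^ j) (1 - X ^ k) = twist 1 (1 - X ^ (p * k)) := by
  have hroot : IsPrimitiveRoot (C (ζ ^ k)) p :=
    (hζ.pow_of_coprime k ((hp.coprime_iff_not_dvd.2 hk).symm)).map_of_injective C_injective
  have h := prod_range_sub_pow_mul hroot hp.pos 1 (X ^ k)
  simp only [map_sub, map_one, map_pow, twist_X, one_mul, mul_pow]
  rw [mul_comm p, pow_mul, ← one_pow p (M := ℂ⟦X⟧), ← h]
  simp only [map_pow, ← pow_mul, mul_comm, one_pow]

lemma prod_twist_qProd (hp : p.Prime) (hζ : IsPrimitiveRoot ζ p) {a r : ℕ} (ha : ¬ p ∣ a)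
    (hr : 0 < r) (hpr : p ∣ r) :
    ∏ j ∈ Finset.range p, twist (ζ ^ j) (qProd a r) = twist 1 (qProd (p * a) (p * r)) := by
  have ha0 : 0 < a := Nat.pos_of_ne_zero fun h => ha (h ▸ dvd_zero p)
  have hleft := tendsto_finsetProd (Finset.range p) fun j _ =>
    tendsto_twist_qProdUpTo (ζ ^ j) ha0 hr
  refine tendsto_nhds_unique hleft ((tendsto_twist_qProdUpTo 1 (Nat.mul_pos hp.pos ha0)
    (Nat.mul_pos hp.pos hr)).congr fun N => ?_)
  simp only [qProdUpTo, map_prod]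
  rw [Finset.prod_comm]
  refine Finset.prod_congr rfl fun k _ => ?_
  have hk : ¬ p ∣ a + r * k := fun h => ha ((Nat.dvd_add_left (hpr.mul_right k)).1 h)
  rw [prod_twist_one_sub_X_pow hp hζ hk, mul_add, mul_assoc]

theorem prod_twist_J_one (hp : p.Prime) (hζ : IsPrimitiveRoot ζ p) :
    (∏ j ∈ Finset.range p, twist (ζ ^ j) (J 1)) * twist 1 (J (p * p)) =
      twist 1 (J p) ^ (p + 1) := by
  obtain ⟨m, rfl⟩ : ∃ m, p = m + 1 := ⟨p - 1, (Nat.succ_pred hp.ne_zero).symm⟩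
  have hpos : 0 < m + 1 := m.succ_pos
  have hfix : ∀ j, twist (ζ ^ j) (J (m + 1)) = twist 1 (J (m + 1)) := fun j => by
    rw [← mul_one (m + 1), ← expand_J hpos.ne' one_pos]
    exact twist_expand (by rw [pow_right_comm, hζ.pow_eq_one, one_pow]) _ _
  have hJ1 := prod_qProd_residues one_pos one_pos hpos
  have hJp := prod_qProd_residues hpos hpos hpos
  rw [← J_eq_qProd, Finset.prod_range_succ] at hJ1 hJp
  simp only [one_mul] at hJ1
  rw [add_comm 1 m, ← J_eq_qProd] at hJ1
  rw [show m + 1 + (m + 1) * m = (m + 1) * (m + 1) by ring, ← J_eq_qProd] at hJp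
  have hcoprime : ∏ j ∈ Finset.range (m + 1), twist (ζ ^ j)
      (∏ i ∈ Finset.range m, qProd (1 + i) (m + 1)) = 
        twist 1 (∏ i ∈ Finset.range m, qProd (m + 1 + (m + 1) * i) ((m + 1) * (m + 1))) := by
    simp only [map_prod]
    rw [Finset.prod_comm]
    refine Finset.prod_congr rfl fun i hi => ?_
    have hi' : ¬ m + 1 ∣ 1 + i := fun h => by
      have := Nat.le_of_dvd (by omega) h
      exact absurd (Finset.mem_range.1 hi) (by omega)
    rw [prod_twist_qProd hp hζ hi' hpos dvd_rfl, mul_add, mul_one]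
  rw [← hJ1]
  simp only [map_mul, Finset.prod_mul_distrib, hfix, hcoprime, Finset.prod_const, Finset.card_range]
  rw [pow_succ _ (m + 1)]
  nth_rw 3 [← hJp]
  rw [map_mul]
  ring

end Norm

section SepticNorm

variable {A : Type*} [CommRing A] (a b c d : A)

/-- With `η = ζ + ζ² + ζ⁴` for a primitive seventh root of unity `ζ`, the product of
`a + z b + z⁵ c + z² d` over `z = ζ, ζ², ζ⁴` is `quadraticNormFst + η * quadraticNormSnd`. -/
def quadraticNormFst : A :=
  a ^ 3 + b ^ 3 + c ^ 3 + d ^ 3 - c * d ^ 2 - b * d ^ 2 - b * c * d - b * c ^ 2 - a * d ^ 2 -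
    a * c * d - a * b * d + 3 * a * b * c - a * b ^ 2 - a ^ 2 * c

/-- The coefficient of `η` in the product described at `quadraticNormFst`. -/
def quadraticNormSnd : A :=
  c ^ 2 * d - c * d ^ 2 - b * d ^ 2 - b * c ^ 2 + b ^ 2 * d + b ^ 2 * c - a * d ^ 2 + a * c ^ 2 +
    a * b * c - a * b ^ 2 + a ^ 2 * d - a ^ 2 * c + a ^ 2 * b

/-- The product of `a + z b + z⁵ c + z² d` over all seventh roots of unity `z`. -/
def septicNorm : A :=
  (a + b + c + d) * (quadraticNormFst a b c d ^ 2 -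
    quadraticNormFst a b c d * quadraticNormSnd a b c d + 2 * quadraticNormSnd a b c d ^ 2)

variable {a b c d} in
lemma map_septicNorm {B : Type*} [CommRing B] (f : A →+* B) :
    f (septicNorm a b c d) = septicNorm (f a) (f b) (f c) (f d) := by
  simp only [septicNorm, quadraticNormFst, quadraticNormSnd, map_mul, map_add, map_sub, map_pow,
    map_ofNat]

variable {z : A}

lemma prod_quadratic_residues (hz : 1 + z + z ^ 2 + z ^ 3 + z ^ 4 + z ^ 5 + z ^ 6 = 0) :
    (a + z * b + z ^ 5 * c + z ^ 2 * d) * (a + z ^ 2 * b + z ^ 3 * c + z ^ 4 * d) *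
        (a + z ^ 4 * b + z ^ 6 * c + z * d) =
      quadraticNormFst a b c d + (z + z ^ 2 + z ^ 4) * quadraticNormSnd a b c d := by
  unfold quadraticNormFst quadraticNormSnd
  grind

lemma prod_seventh_roots (hz : 1 + z + z ^ 2 + z ^ 3 + z ^ 4 + z ^ 5 + z ^ 6 = 0) :
    ∏ j ∈ Finset.range 7, (a + z ^ j * b + (z ^ j) ^ 5 * c + (z ^ j) ^ 2 * d) =
      septicNorm a b c d := by
  have hz7 : z ^ 7 = 1 := by linear_combination (z - 1) * hz
  have hz' : 1 + z ^ 6 + (z ^ 6) ^ 2 + (z ^ 6) ^ 3 + (z ^ 6) ^ 4 + (z ^ 6) ^ 5 + (z ^ 6) ^ 6 =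
      0 := by grind
  have hη : (z + z ^ 2 + z ^ 4) * (-1 - (z + z ^ 2 + z ^ 4)) = 2 := by grind
  have hη' : z ^ 6 + z ^ 5 + z ^ 3 = -1 - (z + z ^ 2 + z ^ 4) := by linear_combination hz
  have hresidues := prod_quadratic_residues a b c d hz
  have hnonresidues := prod_quadratic_residues a b c d hz'
  have hpow : ∀ n, z ^ n = z ^ (n % 7) := fun n => pow_eq_pow_mod n hz7
  simp only [← pow_mul, Nat.reduceMul, hpow 12, hpow 18, hpow 24, hpow 30, hpow 36,
    Nat.reduceMod, pow_one] at hnonresidues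
  simp only [Finset.prod_range_succ, Finset.prod_range_zero, ← pow_mul, Nat.reduceMul, hpow 8,
    hpow 10, hpow 12, hpow 15, hpow 20, hpow 25, hpow 30, Nat.reduceMod, pow_one, pow_zero, one_mul]
  have hgroup : ∀ f₀ f₁ f₂ f₃ f₄ f₅ f₆ : A, f₀ * f₁ * f₂ * f₃ * f₄ * f₅ * f₆ =
      f₀ * (f₁ * f₂ * f₄) * (f₆ * f₅ * f₃) := by intros; ring
  rw [hgroup, hresidues, hnonresidues, hη', septicNorm]
  linear_combination (a + b + c + d) * quadraticNormSnd a b c d ^ 2 * hη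

lemma geom_sum_seventh_root [IsDomain A] (hz : IsPrimitiveRoot z 7) :
    1 + z + z ^ 2 + z ^ 3 + z ^ 4 + z ^ 5 + z ^ 6 = 0 := by
  simpa [Finset.sum_range_succ] using hz.geom_sum_eq_zero (by norm_num)

theorem septicNorm_J_one :
    septicNorm (expand 7 (by norm_num) jPartZero) (X * expand 7 (by norm_num) jPartOne)
      (X ^ 5 * expand 7 (by norm_num) jPartFive) (-(X ^ 2 * J 49)) * J 49 = J 7 ^ 8 := by
  obtain ⟨ζ, hζ⟩ : ∃ ζ : ℂ, IsPrimitiveRoot ζ 7 := ⟨_, Complex.isPrimitiveRoot_exp 7 (by norm_num)⟩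
  have hCζ : IsPrimitiveRoot (C ζ) 7 := hζ.map_of_injective C_injective
  have hfix : ∀ j f, twist (ζ ^ j) (expand 7 (by norm_num) f) =
      twist 1 (expand 7 (by norm_num) f) := fun j f =>
    twist_expand (by rw [pow_right_comm, hζ.pow_eq_one, one_pow]) _ _
  have hJ49 : J 49 = expand 7 (by norm_num) (J 7) := by rw [expand_J _ (by norm_num)]
  have htwist : ∀ j, twist (ζ ^ j) (J 1) =
      twist 1 (expand 7 (by norm_num) jPartZero) +
        C ζ ^ j * twist 1 (X * expand 7 (by norm_num) jPartOne) +
        (C ζ ^ j) ^ 5 * twist 1 (X ^ 5 * expand 7 (by norm_num) jPartFive) +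
        (C ζ ^ j) ^ 2 * twist 1 (-(X ^ 2 * J 49)) := fun j => by
    rw [J_one_dissection, hJ49]
    simp only [map_sub, map_add, map_mul, map_neg, map_pow, twist_X, hfix, map_one]
    ring
  apply twist_one_injective
  have h := prod_twist_J_one (by norm_num) hζ
  rw [Finset.prod_congr rfl fun j _ => htwist j,
    prod_seventh_roots _ _ _ _ (geom_sum_seventh_root hCζ), ← map_septicNorm] at h
  rw [map_mul, map_pow, h]

end SepticNorm

end D3Tower

namespace D3Tower

open PowerSeries
open scoped LaurentSeries

/-! ### Laurent series, residue classes of exponents and the operator `U` -/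

section Laurent

/-- The embedding of power series into Laurent series. -/
abbrev toLaurent : ℤ⟦X⟧ →+* ℤ⸨X⸩ := HahnSeries.ofPowerSeries ℤ ℤ

lemma coeff_toLaurent_natCast (f : ℤ⟦X⟧) (n : ℕ) : (toLaurent f).coeff (n : ℤ) = coeff n f :=
  HahnSeries.ofPowerSeries_apply_coeff f n

lemma coeff_toLaurent_of_neg (f : ℤ⟦X⟧) {n : ℤ} (h : n < 0) : (toLaurent f).coeff n = 0 :=
  (PowerSeries.coeff_coe (R := ℤ) f n).trans (if_pos h)

/-- The monomial `q^n`. -/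
def qPow (n : ℤ) : ℤ⸨X⸩ := HahnSeries.single n 1

lemma qPow_add (m n : ℤ) : qPow (m + n) = qPow m * qPow n := by
  simp [qPow, HahnSeries.single_mul_single]

lemma qPow_zero : qPow 0 = 1 := rfl

lemma qPow_natCast (n : ℕ) : qPow n = toLaurent (X ^ n) := by
  rw [qPow, HahnSeries.ofPowerSeries_X_pow]

lemma coeff_qPow_mul (n m : ℤ) (f : ℤ⸨X⸩) : (qPow n * f).coeff m = f.coeff (m - n) := by
  have h := HahnSeries.coeff_single_mul_add (r := (1 : ℤ)) (x := f) (a := m - n) (b := n)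
  rwa [sub_add_cancel, one_mul] at h

variable (m : ℕ) [NeZero m]

/-- The substitution `q ↦ q^m`. -/
def dilate : ℤ⸨X⸩ →+* ℤ⸨X⸩ :=
  HahnSeries.embDomainRingHom (AddMonoidHom.mulLeft (m : ℤ))
    (mul_right_injective₀ (Nat.cast_ne_zero.2 (NeZero.ne m)))
    fun _ _ => (mul_le_mul_iff_right₀ (Nat.cast_pos.2 (NeZero.pos m)))

lemma coeff_dilate_mul (f : ℤ⸨X⸩) (n : ℤ) : (dilate m f).coeff (m * n) = f.coeff n :=
  HahnSeries.embDomain_mk_coeff (Γ' := ℤ) (f := fun n : ℤ => (m : ℤ) * n) _ _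

lemma coeff_dilate_of_not_dvd (f : ℤ⸨X⸩) {n : ℤ} (h : ¬ (m : ℤ) ∣ n) :
    (dilate m f).coeff n = 0 := by
  apply HahnSeries.embDomain_of_notMem_range
  rintro ⟨k, hk⟩
  exact h ⟨k, hk.symm⟩

lemma eq_dilate_of_coeff {f g : ℤ⸨X⸩} (hmul : ∀ n : ℤ, g.coeff (m * n) = f.coeff n)
    (hzero : ∀ n : ℤ, ¬ (m : ℤ) ∣ n → g.coeff n = 0) : dilate m f = g := by
  ext n
  by_cases hn : (m : ℤ) ∣ n
  · obtain ⟨k, rfl⟩ := hn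
    rw [coeff_dilate_mul, hmul]
  · rw [coeff_dilate_of_not_dvd m f hn, hzero n hn]

lemma dilate_injective : Function.Injective (dilate m) := fun f g h => by
  ext n
  rw [← coeff_dilate_mul m, h, coeff_dilate_mul]

lemma dilate_toLaurent (f : ℤ⟦X⟧) :
    dilate m (toLaurent f) = toLaurent (expand m (NeZero.ne m) f) := by
  have hm : (0 : ℤ) < m := Nat.cast_pos.2 (NeZero.pos m)
  refine eq_dilate_of_coeff m (fun n => ?_) fun n hn => ?_
  · rcases lt_or_ge n 0 with h | h
    · rw [coeff_toLaurent_of_neg _ h, coeff_toLaurent_of_neg _ (mul_neg_of_pos_of_neg hm h)]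
    · lift n to ℕ using h
      rw [coeff_toLaurent_natCast, ← Nat.cast_mul, coeff_toLaurent_natCast, coeff_expand_mul]
  · rcases lt_or_ge n 0 with h | h
    · exact coeff_toLaurent_of_neg _ h
    · lift n to ℕ using h
      rw [coeff_toLaurent_natCast, coeff_expand_of_not_dvd]
      exact_mod_cast hn

lemma dilate_qPow (n : ℤ) : dilate m (qPow n) = qPow (m * n) := by
  refine eq_dilate_of_coeff m (fun k => ?_) fun k hk => ?_
  · simp [qPow, HahnSeries.coeff_single, NeZero.ne m]
  · exact HahnSeries.coeff_single_of_ne fun h => hk ⟨n, h⟩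

end Laurent

section ResidueClass

variable {N : ℕ}

/-- The Laurent series all of whose exponents lie in the residue class `r` modulo `N`. -/
def residueClass (r : ZMod N) : AddSubgroup ℤ⸨X⸩ where
  carrier := {f | ∀ n : ℤ, (n : ZMod N) ≠ r → f.coeff n = 0}
  zero_mem' := fun _ _ => rfl
  add_mem' := fun hf hg n hn => by simp [hf n hn, hg n hn]
  neg_mem' := fun hf n hn => by simp [hf n hn]

/-- The part of a Laurent series supported on the residue class `r` modulo `N`. -/
def component (r : ZMod N) : ℤ⸨X⸩ →+ ℤ⸨X⸩ where
  toFun f := ⟨fun n => if (n : ZMod N) = r then f.coeff n else 0,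
    f.isPWO_support.mono fun _ hn h => hn (by simp [h])⟩
  map_zero' := by ext; simp
  map_add' f g := by ext; simp only [HahnSeries.coeff_add]; split_ifs <;> simp

lemma coeff_component (r : ZMod N) (f : ℤ⸨X⸩) (n : ℤ) :
    (component r f).coeff n = if (n : ZMod N) = r then f.coeff n else 0 := rfl

lemma component_mem_residueClass (r : ZMod N) (f : ℤ⸨X⸩) : component r f ∈ residueClass r :=
  fun n hn => by rw [coeff_component, if_neg hn]

lemma component_of_mem {r : ZMod N} {f : ℤ⸨X⸩} (hf : f ∈ residueClass r) (s : ZMod N) :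
    component s f = if s = r then f else 0 := by
  ext n
  rw [coeff_component]
  by_cases hn : (n : ZMod N) = r
  · rw [hn]; simp only [eq_comm (a := r)]; split_ifs <;> rfl
  · rw [hf n hn]; split_ifs <;> simp [hf n hn]

lemma mul_mem_residueClass {r s t : ZMod N} {f g : ℤ⸨X⸩} (hf : f ∈ residueClass r)
    (hg : g ∈ residueClass s) (ht : r + s = t := by decide) : f * g ∈ residueClass t := by
  intro n hn
  rw [HahnSeries.coeff_mul]
  refine Finset.sum_eq_zero fun ij hij => ?_
  rw [Finset.mem_antidiagonal] at hij
  by_cases hi : (ij.1 : ZMod N) = r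
  · have hj : (ij.2 : ZMod N) ≠ s := fun hj => hn (by rw [← hij.2.2, Int.cast_add, hi, hj, ht])
    rw [hg _ hj, mul_zero]
  · rw [hf _ hi, zero_mul]

lemma component_mul {r : ZMod N} {f : ℤ⸨X⸩} (hf : f ∈ residueClass r) (s : ZMod N) (g : ℤ⸨X⸩) :
    component s (f * g) = f * component (s - r) g := by
  have hrest : component s (f * (g - component (s - r) g)) = 0 := by
    ext n
    rw [coeff_component]
    split_ifs with hn
    · rw [HahnSeries.coeff_mul]
      refine Finset.sum_eq_zero fun ij hij => ?_
      rw [Finset.mem_antidiagonal] at hij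
      by_cases hi : (ij.1 : ZMod N) = r
      · have hj : (ij.2 : ZMod N) = s - r := by
          rw [eq_sub_iff_add_eq', ← hi, ← Int.cast_add, hij.2.2, hn]
        rw [HahnSeries.coeff_sub, coeff_component, if_pos hj, sub_self, mul_zero]
      · rw [hf _ hi, zero_mul]
    · rfl
  have hmem : f * component (s - r) g ∈ residueClass s :=
    mul_mem_residueClass hf (component_mem_residueClass _ _) (add_sub_cancel r s)
  rw [mul_sub, map_sub, sub_eq_zero] at hrest
  rw [hrest, component_of_mem hmem, if_pos rfl]

lemma qPow_mem_residueClass (n : ℤ) : qPow n ∈ residueClass (n : ZMod N) := fun m hm =>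
  HahnSeries.coeff_single_of_ne fun h => hm (by rw [h])

lemma one_mem_residueClass : (1 : ℤ⸨X⸩) ∈ residueClass (0 : ZMod N) := by
  simpa [qPow_zero] using qPow_mem_residueClass (N := N) 0

lemma pow_mem_residueClass {r : ZMod N} {f : ℤ⸨X⸩} (hf : f ∈ residueClass r) (n : ℕ) :
    f ^ n ∈ residueClass ((n : ZMod N) * r) := by
  induction n with
  | zero => simpa using one_mem_residueClass
  | succ n ih =>
    rw [pow_succ]
    exact mul_mem_residueClass ih hf (by push_cast; ring)

lemma dilate_mem_residueClass (m : ℕ) [NeZero m] {r s : ZMod N} {f : ℤ⸨X⸩}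
    (hf : f ∈ residueClass r) (hs : m * r = s := by decide) : dilate m f ∈ residueClass s := by
  intro n hn
  by_cases hd : (m : ℤ) ∣ n
  · obtain ⟨k, rfl⟩ := hd
    rw [coeff_dilate_mul]
    exact hf k fun hk => hn (by rw [← hs, ← hk]; push_cast; rfl)
  · exact coeff_dilate_of_not_dvd m f hd

lemma dilate_self_mem_residueClass [NeZero N] (f : ℤ⸨X⸩) :
    dilate N f ∈ residueClass (0 : ZMod N) :=
  fun n hn => coeff_dilate_of_not_dvd N f
    fun h => hn ((ZMod.intCast_zmod_eq_zero_iff_dvd n N).2 h)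

end ResidueClass

section AtkinU

variable (m : ℕ) [NeZero m]

/-- The operator `U_m`. -/
def atkinU : ℤ⸨X⸩ →+ ℤ⸨X⸩ where
  toFun f := HahnSeries.ofSuppBddBelow (fun n => f.coeff (m * n)) <|
    ⟨-|f.order|, fun n hn => not_lt.1 fun hlt => hn <|
      HahnSeries.coeff_eq_zero_of_lt_order <| by
        have hm : (1 : ℤ) ≤ m := Nat.one_le_cast.2 NeZero.one_le
        have := neg_abs_le f.order
        have := abs_nonneg f.order
        nlinarith⟩
  map_zero' := by ext; simp
  map_add' f g := by ext; rfl

lemma coeff_atkinU (f : ℤ⸨X⸩) (n : ℤ) : (atkinU m f).coeff n = f.coeff (m * n) := rfl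

lemma dilate_atkinU (f : ℤ⸨X⸩) : dilate m (atkinU m f) = component (0 : ZMod m) f :=
  eq_dilate_of_coeff m
    (fun n => by rw [coeff_component, if_pos (by simp), coeff_atkinU])
    fun n hn => by
      rw [coeff_component, if_neg fun h => hn ((ZMod.intCast_zmod_eq_zero_iff_dvd n m).1 h)]

lemma atkinU_dilate_mul (g f : ℤ⸨X⸩) : atkinU m (dilate m g * f) = g * atkinU m f := by
  apply dilate_injective m
  rw [map_mul (dilate m), dilate_atkinU, dilate_atkinU,
    component_mul (dilate_self_mem_residueClass g), sub_zero]

end AtkinU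

section LeadingTerm

/-- `f` has the form `ε q^n + ⋯` with no terms of lower order (`ε = 0` is allowed). -/
def HasLeadingTerm (n ε : ℤ) (f : ℤ⸨X⸩) : Prop :=
  ∃ g : ℤ⟦X⟧, f = qPow n * toLaurent g ∧ constantCoeff g = ε

namespace HasLeadingTerm

variable {m n ε δ : ℤ} {f g : ℤ⸨X⸩}

lemma mul (hf : HasLeadingTerm m ε f) (hg : HasLeadingTerm n δ g) :
    HasLeadingTerm (m + n) (ε * δ) (f * g) := by
  obtain ⟨u, rfl, rfl⟩ := hf
  obtain ⟨v, rfl, rfl⟩ := hg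
  refine ⟨u * v, ?_, map_mul _ _ _⟩
  rw [qPow_add, map_mul]
  ring

lemma pow (hf : HasLeadingTerm m ε f) (k : ℕ) : HasLeadingTerm (k * m) (ε ^ k) (f ^ k) := by
  induction k with
  | zero => exact ⟨1, by simp [qPow_zero], by simp⟩
  | succ k ih => simpa only [pow_succ, Nat.cast_succ, add_mul, one_mul] using ih.mul hf

lemma neg (hf : HasLeadingTerm m ε f) : HasLeadingTerm m (-ε) (-f) := by
  obtain ⟨u, rfl, rfl⟩ := hf
  exact ⟨-u, by rw [map_neg, mul_neg], map_neg _ _⟩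

lemma dilate (k : ℕ) [NeZero k] (hf : HasLeadingTerm m ε f) :
    HasLeadingTerm (k * m) ε (dilate k f) := by
  obtain ⟨u, rfl, rfl⟩ := hf
  exact ⟨expand k (NeZero.ne k) u, by rw [map_mul, dilate_qPow, dilate_toLaurent],
    constantCoeff_expand _ _ _⟩

lemma coeff_eq (hf : HasLeadingTerm m ε f) : f.coeff m = ε := by
  obtain ⟨u, rfl, rfl⟩ := hf
  rw [coeff_qPow_mul, sub_self, ← coeff_zero_eq_constantCoeff_apply]
  exact coeff_toLaurent_natCast u 0

lemma coeff_eq_zero (hf : HasLeadingTerm m ε f) {k : ℤ} (hk : k < m) : f.coeff k = 0 := by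
  obtain ⟨u, rfl, -⟩ := hf
  rw [coeff_qPow_mul, coeff_toLaurent_of_neg u (sub_neg.2 hk)]

lemma ne_zero (hf : HasLeadingTerm m ε f) (hε : ε ≠ 0) : f ≠ 0 := by
  rintro rfl
  exact hε hf.coeff_eq.symm

end HasLeadingTerm

lemma hasLeadingTerm_toLaurent (f : ℤ⟦X⟧) : HasLeadingTerm 0 (constantCoeff f) (toLaurent f) :=
  ⟨f, by rw [qPow_zero, one_mul], rfl⟩
end LeadingTerm

/-! ### The dissection of `J 1` and its relations -/

section JLaurent

/-- `J b` as a Laurent series. -/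
def jL (b : ℕ) : ℤ⸨X⸩ := toLaurent (J b)

/-- The inverse of `J b` as a Laurent series. -/
def jInv (b : ℕ) : ℤ⸨X⸩ := toLaurent (invOfUnit (J b) 1)

variable (m b : ℕ) [NeZero m] [NeZero b]

lemma jL_mul_jInv : jL b * jInv b = 1 := by
  rw [jL, jInv, ← map_mul, mul_invOfUnit _ _ (constantCoeff_J (NeZero.pos b)), map_one]

lemma dilate_jL : dilate m (jL b) = jL (m * b) := by
  rw [jL, dilate_toLaurent, expand_J _ (NeZero.pos b), jL]

lemma dilate_jInv : dilate m (jInv b) = jInv (m * b) := by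
  have h := congrArg (dilate m) (jL_mul_jInv b)
  rw [map_mul, map_one, dilate_jL] at h
  exact inv_unique h (jL_mul_jInv (m * b))

end JLaurent

section XiDissection

/-- `q⁻² J₁ / J₄₉`, normalised so that the constant part of its `7`-dissection is `-1`. -/
def xi : ℤ⸨X⸩ := qPow (-2) * jL 1 * jInv 49

/-- The part of `xi` with exponents congruent to `5` modulo `7`, see `xi_eq`. -/
def xiA : ℤ⸨X⸩ := qPow (-2) * dilate 7 (toLaurent jPartZero * jInv 7)

/-- The part of `xi` with exponents congruent to `6` modulo `7`. -/
def xiB : ℤ⸨X⸩ := qPow (-1) * dilate 7 (toLaurent jPartOne * jInv 7)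

/-- The part of `xi` with exponents congruent to `3` modulo `7`. -/
def xiC : ℤ⸨X⸩ := qPow 3 * dilate 7 (toLaurent jPartFive * jInv 7)

lemma xi_eq : xi = xiA + xiB + xiC - 1 := by
  have hJ := congrArg toLaurent J_one_dissection
  simp only [map_add, map_sub, map_mul, ← dilate_toLaurent, ← qPow_natCast] at hJ
  have hX : toLaurent X = qPow 1 := by simpa using (qPow_natCast 1).symm
  have h1 : qPow (-1) = qPow (-2) * qPow 1 := (qPow_add (-2) 1).symm ▸ rfl
  have h3 : qPow 3 = qPow (-2) * qPow 5 := (qPow_add (-2) 5).symm ▸ rfl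
  have h0 : qPow (-2) * qPow 2 = 1 := (qPow_add (-2) 2).symm ▸ qPow_zero
  have hinv := jL_mul_jInv 49
  rw [jL] at hinv
  simp only [xi, jL, xiA, xiB, xiC, hJ, map_mul, dilate_jInv, h1, h3, hX]
  push_cast
  linear_combination -toLaurent (J 49) * jInv 49 * h0 - hinv

lemma qPow_mul_dilate_mem_residueClass {N : ℕ} [NeZero N] (n : ℤ) (f : ℤ⸨X⸩) {r : ZMod N}
    (hr : n = r := by decide) : qPow n * dilate N f ∈ residueClass r :=
  mul_mem_residueClass (qPow_mem_residueClass n) (dilate_self_mem_residueClass f)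
    (by rw [add_zero, hr])

lemma xiA_mem_residueClass : xiA ∈ residueClass (5 : ZMod 7) :=
  qPow_mul_dilate_mem_residueClass _ _

lemma xiB_mem_residueClass : xiB ∈ residueClass (6 : ZMod 7) :=
  qPow_mul_dilate_mem_residueClass _ _

lemma xiC_mem_residueClass : xiC ∈ residueClass (3 : ZMod 7) :=
  qPow_mul_dilate_mem_residueClass _ _

lemma hasLeadingTerm_qPow_mul_dilate (n : ℤ) (f : ℤ⟦X⟧) :
    HasLeadingTerm n (constantCoeff f) (qPow n * dilate 7 (toLaurent f * jInv 7)) :=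
  ⟨expand 7 (by norm_num) (f * invOfUnit (J 7) 1),
    by rw [jInv, ← map_mul, dilate_toLaurent], by simp⟩

lemma hasLeadingTerm_xiA : HasLeadingTerm (-2) 1 xiA := by
  have h := hasLeadingTerm_qPow_mul_dilate (-2) jPartZero
  rwa [show constantCoeff jPartZero = 1 by simp [jPartZero, constantCoeff_ramanujanTheta]] at h

lemma hasLeadingTerm_xiB : HasLeadingTerm (-1) (-1) xiB := by
  have h := hasLeadingTerm_qPow_mul_dilate (-1) jPartOne
  rwa [show constantCoeff jPartOne = -1 by simp [jPartOne, constantCoeff_ramanujanTheta]] at h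

lemma hasLeadingTerm_xiC : HasLeadingTerm 3 1 xiC := by
  have h := hasLeadingTerm_qPow_mul_dilate 3 jPartFive
  rwa [show constantCoeff jPartFive = 1 by simp [jPartFive, constantCoeff_ramanujanTheta]] at h

lemma component_xi_cube_eq_zero {r : ZMod 7} (hr : r = 3 ∨ r = 5 ∨ r = 6) :
    component r (xi ^ 3) = 0 := by
  have hxi : xi ^ 3 = dilate 7 (jInv 7 ^ 3) * (qPow (-6) * toLaurent (J 1 ^ 3)) := by
    have hq : qPow (-6) = qPow (-2) * qPow (-2) * qPow (-2) := by
      rw [← qPow_add, ← qPow_add]; rfl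
    rw [xi, hq, map_pow, map_pow, dilate_jInv, jL]
    ring
  have hJ : component (r - ((-6 : ℤ) : ZMod 7)) (toLaurent (J 1 ^ 3)) = 0 := by
    ext n
    rw [coeff_component]
    split_ifs with hn
    · rcases lt_or_ge n 0 with h | h
      · exact coeff_toLaurent_of_neg _ h
      · lift n to ℕ using h
        rw [coeff_toLaurent_natCast]
        apply coeff_J_one_cube_eq_zero
        have : ((n : ℤ) : ZMod 7) = ((2 : ℤ) : ZMod 7) ∨ ((n : ℤ) : ZMod 7) = ((4 : ℤ) : ZMod 7) ∨
            ((n : ℤ) : ZMod 7) = ((5 : ℤ) : ZMod 7) := by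
          rw [hn]; clear hn; revert r; decide
        simp only [ZMod.intCast_eq_intCast_iff_dvd_sub] at this
        omega
    · rfl
  rw [hxi, component_mul (dilate_self_mem_residueClass _), sub_zero,
    component_mul (qPow_mem_residueClass _), hJ, mul_zero, mul_zero]

lemma component_xi_mul (r : ZMod 7) (f : ℤ⸨X⸩) :
    component r (xi * f) = xiA * component (r - 5) f + xiB * component (r - 6) f +
      xiC * component (r - 3) f - component r f := by
  simp only [xi_eq, add_mul, sub_mul, one_mul, map_add, map_sub,
    component_mul xiA_mem_residueClass, component_mul xiB_mem_residueClass,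
    component_mul xiC_mem_residueClass]

lemma component_xi (r : ZMod 7) : component r xi = (if r = 5 then xiA else 0) +
    (if r = 6 then xiB else 0) + (if r = 3 then xiC else 0) - if r = 0 then 1 else 0 := by
  simp only [xi_eq, map_add, map_sub, component_of_mem xiA_mem_residueClass,
    component_of_mem xiB_mem_residueClass, component_of_mem xiC_mem_residueClass,
    component_of_mem one_mem_residueClass]

instance : CharZero ℤ⸨X⸩ := charZero_of_injective_ringHom HahnSeries.C_injective

lemma xiC_eq : xiC = xiA ^ 2 - xiA * xiB ^ 2 := by
  have h := component_xi_cube_eq_zero (r := 3) (by decide)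
  simp +decide only [pow_three, component_xi_mul, component_xi, if_true, if_false] at h
  refine mul_left_cancel₀ (OfNat.ofNat_ne_zero 3 : (3 : ℤ⸨X⸩) ≠ 0) ?_
  linear_combination h

lemma xiA_eq : xiA = xiB ^ 2 - xiB * xiC ^ 2 := by
  have h := component_xi_cube_eq_zero (r := 5) (by decide)
  simp +decide only [pow_three, component_xi_mul, component_xi, if_true, if_false] at h
  refine mul_left_cancel₀ (OfNat.ofNat_ne_zero 3 : (3 : ℤ⸨X⸩) ≠ 0) ?_
  linear_combination h

lemma xiB_eq : xiB = xiC ^ 2 - xiC * xiA ^ 2 := by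
  have h := component_xi_cube_eq_zero (r := 6) (by decide)
  simp +decide only [pow_three, component_xi_mul, component_xi, if_true, if_false] at h
  refine mul_left_cancel₀ (OfNat.ofNat_ne_zero 3 : (3 : ℤ⸨X⸩) ≠ 0) ?_
  linear_combination h

lemma xiA_mul_xiB_mul_xiC : xiA * xiB * xiC = -1 := by
  refine mul_left_cancel₀ (hasLeadingTerm_xiB.ne_zero (by norm_num)) ?_
  linear_combination xiB_eq + xiC * xiC_eq

/-- `xi` at `q²`. -/
def xi₂ : ℤ⸨X⸩ := dilate 2 xi

/-- `xiA` at `q²`. -/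
def xiA₂ : ℤ⸨X⸩ := dilate 2 xiA

/-- `xiB` at `q²`. -/
def xiB₂ : ℤ⸨X⸩ := dilate 2 xiB

/-- `xiC` at `q²`. -/
def xiC₂ : ℤ⸨X⸩ := dilate 2 xiC

lemma xi₂_eq : xi₂ = xiA₂ + xiB₂ + xiC₂ - 1 := by
  simp only [xi₂, xi_eq, map_add, map_sub, map_one, xiA₂, xiB₂, xiC₂]

lemma xi₂_eq_jL : xi₂ = qPow (-4) * jL 2 * jInv 98 := by
  simp only [xi₂, xi, map_mul, dilate_qPow, dilate_jL, dilate_jInv]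
  rfl

lemma xiA₂_mul_xiB₂_mul_xiC₂ : xiA₂ * xiB₂ * xiC₂ = -1 := by
  simpa [xiA₂, xiB₂, xiC₂] using congrArg (dilate 2) xiA_mul_xiB_mul_xiC

lemma component_xi₂_mul (r : ZMod 7) (f : ℤ⸨X⸩) :
    component r (xi₂ * f) = xiA₂ * component (r - 3) f + xiB₂ * component (r - 5) f +
      xiC₂ * component (r - 6) f - component r f := by
  have hA : xiA₂ ∈ residueClass (3 : ZMod 7) := dilate_mem_residueClass 2 xiA_mem_residueClass
  have hB : xiB₂ ∈ residueClass (5 : ZMod 7) := dilate_mem_residueClass 2 xiB_mem_residueClass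
  have hC : xiC₂ ∈ residueClass (6 : ZMod 7) := dilate_mem_residueClass 2 xiC_mem_residueClass
  simp only [xi₂_eq, add_mul, sub_mul, one_mul, map_add, map_sub, component_mul hA,
    component_mul hB, component_mul hC]

end XiDissection

section PhiDissection

/-- The part of `xi² / xi₂` with exponents congruent to `1` modulo `7`, see `xi_sq`. -/
def phi1 : ℤ⸨X⸩ := qPow 1 * dilate 7 (-2 * toLaurent (ramanujanTheta 9 5) * jL 14 * jInv 7 ^ 2)

/-- The part of `xi² / xi₂` with exponents congruent to `2` modulo `7`. -/
def phi2 : ℤ⸨X⸩ := qPow 9 * dilate 7 (-2 * toLaurent (ramanujanTheta 13 1) * jL 14 * jInv 7 ^ 2)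

/-- The part of `xi² / xi₂` with exponents congruent to `4` modulo `7`. -/
def phi4 : ℤ⸨X⸩ := qPow 4 * dilate 7 (2 * toLaurent (ramanujanTheta 11 3) * jL 14 * jInv 7 ^ 2)

lemma one_add_phi_eq :
    1 + phi1 + phi2 + phi4 = toLaurent (ramanujanTheta 1 1) * jL 98 * jInv 49 ^ 2 := by
  have hsplit := congrArg toLaurent ramanujanTheta_one_one_dissection
  have h49 := congrArg toLaurent ramanujanTheta_49_49_mul
  have hX : toLaurent X = qPow 1 := by simpa using (qPow_natCast 1).symm
  simp only [map_add, map_sub, map_mul, map_ofNat, ← qPow_natCast, hX] at hsplit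
  rw [map_mul, map_pow] at h49
  have hinv := jL_mul_jInv 49
  simp only [phi1, phi2, phi4, map_mul, map_neg, map_pow, map_ofNat, dilate_jL, dilate_jInv,
    dilate_toLaurent, expand_ramanujanTheta, hsplit]
  simp only [jL] at hinv ⊢
  norm_num
  linear_combination (-1 - toLaurent (J 49) * jInv 49) * hinv - jInv 49 ^ 2 * h49

lemma xi_sq : xi ^ 2 = xi₂ * (1 + phi1 + phi2 + phi4) := by
  have hsq := congrArg toLaurent J_one_sq_eq
  rw [map_mul, map_pow] at hsq
  change jL 1 ^ 2 = jL 2 * _ at hsq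
  have hq : qPow (-4) = qPow (-2) * qPow (-2) := (qPow_add (-2) (-2)).symm ▸ rfl
  rw [one_add_phi_eq, xi₂_eq_jL, xi, hq]
  linear_combination (qPow (-2) * jInv 49) ^ 2 * hsq -
    qPow (-2) ^ 2 * jL 2 * jInv 49 ^ 2 * toLaurent (ramanujanTheta 1 1) * jL_mul_jInv 98

lemma component_xi_sq (r : ZMod 7) : component r (xi * xi) =
    xiA₂ * component (r - 3) (1 + phi1 + phi2 + phi4) +
      xiB₂ * component (r - 5) (1 + phi1 + phi2 + phi4) +
      xiC₂ * component (r - 6) (1 + phi1 + phi2 + phi4) -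
      component r (1 + phi1 + phi2 + phi4) := by
  rw [← pow_two, xi_sq, component_xi₂_mul]

lemma component_one_add_phi (r : ZMod 7) : component r (1 + phi1 + phi2 + phi4) =
    (if r = 0 then 1 else 0) + (if r = 1 then phi1 else 0) + (if r = 2 then phi2 else 0) +
      if r = 4 then phi4 else 0 := by
  have h1 : phi1 ∈ residueClass (1 : ZMod 7) := qPow_mul_dilate_mem_residueClass _ _
  have h2 : phi2 ∈ residueClass (2 : ZMod 7) := qPow_mul_dilate_mem_residueClass _ _
  have h4 : phi4 ∈ residueClass (4 : ZMod 7) := qPow_mul_dilate_mem_residueClass _ _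
  simp only [map_add, component_of_mem one_mem_residueClass, component_of_mem h1,
    component_of_mem h2, component_of_mem h4]

lemma phi_relations_quadratic : xiC₂ * phi2 - phi1 = 2 * (xiA * xiC) ∧
    xiB₂ * phi4 - phi2 = 2 * (xiB * xiC) ∧ xiA₂ * phi1 - phi4 = 2 * (xiA * xiB) := by
  refine ⟨?_, ?_, ?_⟩
  on_goal 1 => have h := component_xi_sq 1
  on_goal 2 => have h := component_xi_sq 2
  on_goal 3 => have h := component_xi_sq 4
  all_goals
    simp +decide only [component_xi_mul, component_xi, component_one_add_phi, if_true,
      if_false] at h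
    linear_combination -h

lemma phi_relations_linear : xiA₂ + xiC₂ * phi4 = xiA ^ 2 - 2 * xiC ∧
    xiB₂ + xiA₂ * phi2 = xiB ^ 2 - 2 * xiA ∧ xiC₂ + xiB₂ * phi1 = xiC ^ 2 - 2 * xiB := by
  refine ⟨?_, ?_, ?_⟩
  on_goal 1 => have h := component_xi_sq 3
  on_goal 2 => have h := component_xi_sq 5
  on_goal 3 => have h := component_xi_sq 6
  all_goals
    simp +decide only [component_xi_mul, component_xi, component_one_add_phi, if_true,
      if_false] at h
    linear_combination -h

lemma phi1_eq : phi1 = -(xiA * xiC + xiB * xiC * xiC₂ + xiA * xiB * xiB₂ * xiC₂) := by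
  obtain ⟨h1, h2, h4⟩ := phi_relations_quadratic
  refine mul_left_cancel₀ (two_ne_zero (α := ℤ⸨X⸩)) ?_
  linear_combination -h1 - xiC₂ * h2 - xiB₂ * xiC₂ * h4 + phi1 * xiA₂_mul_xiB₂_mul_xiC₂

lemma phi2_eq : phi2 = -(xiB * xiC + xiA * xiB * xiB₂ + xiA * xiC * xiA₂ * xiB₂) := by
  obtain ⟨h1, h2, h4⟩ := phi_relations_quadratic
  refine mul_left_cancel₀ (two_ne_zero (α := ℤ⸨X⸩)) ?_
  linear_combination -h2 - xiB₂ * h4 - xiA₂ * xiB₂ * h1 + phi2 * xiA₂_mul_xiB₂_mul_xiC₂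

lemma phi4_eq : phi4 = -(xiA * xiB + xiA * xiC * xiA₂ + xiB * xiC * xiA₂ * xiC₂) := by
  obtain ⟨h1, h2, h4⟩ := phi_relations_quadratic
  refine mul_left_cancel₀ (two_ne_zero (α := ℤ⸨X⸩)) ?_
  linear_combination -h4 - xiA₂ * h1 - xiA₂ * xiC₂ * h2 + phi4 * xiA₂_mul_xiB₂_mul_xiC₂

end PhiDissection

/-! ### Parametrisation by `v`, `λ` and `h` -/

section CyclicElimination

variable {R : Type*} [CommRing R] {l m n x y z : R}

lemma cyclic_defect (hlmn : l * m * n = 1)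
    (hrel : (1 + n) * (1 + l + x) + 1 = l * n ^ 2 * y) :
    y * n - (1 + m) = ((1 + l) * (1 + m) * (1 + n) - 1) + (1 + n) * (x * m - (1 + l)) := by
  linear_combination (-m) * hrel - y * n * hlmn

lemma cyclic_sum_mul_eq_zero (hlmn : l * m * n = 1)
    (hxy : (1 + n) * (1 + l + x) + 1 = l * n ^ 2 * y)
    (hyz : (1 + l) * (1 + m + y) + 1 = m * l ^ 2 * z)
    (hzx : (1 + m) * (1 + n + z) + 1 = n * m ^ 2 * x) :
    ((1 + l) * (1 + m) * (1 + n) - 1) * (2 + y * n + 2 * n + m * n) = 0 := by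
  have hy := cyclic_defect hlmn hxy
  have hz := cyclic_defect (l := m) (m := n) (by linear_combination hlmn) hyz
  have hx := cyclic_defect (l := n) (m := l) (by linear_combination hlmn) hzx
  linear_combination -hy - (1 + n) * hx - (1 + n) * (1 + m) * hz

lemma defect_mul_eq_zero (hlmn : l * m * n = 1)
    (hxy : (1 + n) * (1 + l + x) + 1 = l * n ^ 2 * y) (hx : x * (1 + y) = -1)
    (hsum : (1 + l) * (1 + m) * (1 + n) = 1) :
    (x * m - (1 + l)) * (y * n + 2 * n + 1 + l + n * l) = 0 := by
  have hy := cyclic_defect hlmn hxy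
  linear_combination m * n * hx - (1 + l) * hy - (2 + l) * hsum + hlmn

end CyclicElimination

section Parameters

/-- A monomial in `xiA`, `xiB`, `xiC` with all exponents divisible by `7`. -/
def cycA : ℤ⸨X⸩ := xiA ^ 3 * xiB

/-- The image of `cycA` under the cyclic shift `xiA ↦ xiB ↦ xiC ↦ xiA`. -/
def cycB : ℤ⸨X⸩ := xiB ^ 3 * xiC

/-- The image of `cycB` under the cyclic shift `xiA ↦ xiB ↦ xiC ↦ xiA`. -/
def cycC : ℤ⸨X⸩ := xiC ^ 3 * xiA

/-- The parameter `λ` with `xiA₂ = λ * xiC`. -/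
def lam : ℤ⸨X⸩ := -(xiA * xiB * xiA₂)

/-- The cyclic companion `μ` of `λ`, with `xiB₂ = μ * xiA`. -/
def mu : ℤ⸨X⸩ := -(xiB * xiC * xiB₂)

/-- The cyclic companion `ν` of `λ`, with `xiC₂ = ν * xiB`. -/
def nu : ℤ⸨X⸩ := -(xiA * xiC * xiC₂)

lemma hasLeadingTerm_cycA : HasLeadingTerm (-7) (-1) cycA := by
  simpa [cycA] using (hasLeadingTerm_xiA.pow 3).mul hasLeadingTerm_xiB

lemma hasLeadingTerm_cycB : HasLeadingTerm 0 (-1) cycB := by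
  simpa [cycB] using (hasLeadingTerm_xiB.pow 3).mul hasLeadingTerm_xiC

lemma hasLeadingTerm_cycC : HasLeadingTerm 7 1 cycC := by
  simpa [cycC] using (hasLeadingTerm_xiC.pow 3).mul hasLeadingTerm_xiA

lemma hasLeadingTerm_lam : HasLeadingTerm (-7) 1 lam :=
  ((hasLeadingTerm_xiA.mul hasLeadingTerm_xiB).mul (hasLeadingTerm_xiA.dilate 2)).neg

lemma hasLeadingTerm_mu : HasLeadingTerm 0 (-1) mu :=
  ((hasLeadingTerm_xiB.mul hasLeadingTerm_xiC).mul (hasLeadingTerm_xiB.dilate 2)).neg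

lemma hasLeadingTerm_nu : HasLeadingTerm 7 (-1) nu :=
  ((hasLeadingTerm_xiA.mul hasLeadingTerm_xiC).mul (hasLeadingTerm_xiC.dilate 2)).neg

lemma xiA₂_eq : xiA₂ = lam * xiC := by
  rw [lam]
  linear_combination xiA₂ * xiA_mul_xiB_mul_xiC

lemma xiB₂_eq : xiB₂ = mu * xiA := by
  rw [mu]
  linear_combination xiB₂ * xiA_mul_xiB_mul_xiC

lemma xiC₂_eq : xiC₂ = nu * xiB := by
  rw [nu]
  linear_combination xiC₂ * xiA_mul_xiB_mul_xiC

lemma lam_mul_mu_mul_nu : lam * mu * nu = 1 := by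
  have h := xiA₂_mul_xiB₂_mul_xiC₂
  rw [xiA₂_eq, xiB₂_eq, xiC₂_eq] at h
  linear_combination -h + lam * mu * nu * xiA_mul_xiB_mul_xiC

lemma cycA_mul : cycA * (1 + cycB) = -1 := by
  rw [cycA, cycB]
  linear_combination (xiA ^ 2 * xiB ^ 3 + 1) * xiA_mul_xiB_mul_xiC - xiA * xiB * xiC_eq

lemma cycB_mul : cycB * (1 + cycC) = -1 := by
  rw [cycB, cycC]
  linear_combination (xiB ^ 2 * xiC ^ 3 + 1) * xiA_mul_xiB_mul_xiC - xiB * xiC * xiA_eq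

lemma cycC_mul : cycC * (1 + cycA) = -1 := by
  rw [cycC, cycA]
  linear_combination (xiC ^ 2 * xiA ^ 3 + 1) * xiA_mul_xiB_mul_xiC - xiC * xiA * xiB_eq

lemma cyc_relation_AB : (1 + nu) * (1 + lam + cycA) + 1 = lam * nu ^ 2 * cycB := by
  have h := phi_relations_linear.1
  rw [phi4_eq, xiA₂_eq, xiC₂_eq] at h
  refine mul_left_cancel₀ (hasLeadingTerm_xiC.ne_zero one_ne_zero) ?_
  rw [cycA, cycB]
  linear_combination h + nu * xiC_eq +
    (xiA ^ 2 * (1 + nu) + lam * nu * xiC) * xiA_mul_xiB_mul_xiC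

lemma cyc_relation_BC : (1 + lam) * (1 + mu + cycB) + 1 = mu * lam ^ 2 * cycC := by
  have h := phi_relations_linear.2.1
  rw [phi2_eq, xiA₂_eq, xiB₂_eq] at h
  refine mul_left_cancel₀ (hasLeadingTerm_xiA.ne_zero one_ne_zero) ?_
  rw [cycB, cycC]
  linear_combination h + lam * xiA_eq +
    (xiB ^ 2 * (1 + lam) + lam * mu * xiA) * xiA_mul_xiB_mul_xiC

lemma cyc_relation_CA : (1 + mu) * (1 + nu + cycC) + 1 = nu * mu ^ 2 * cycA := by
  have h := phi_relations_linear.2.2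
  rw [phi1_eq, xiB₂_eq, xiC₂_eq] at h
  refine mul_left_cancel₀ (hasLeadingTerm_xiB.ne_zero (by norm_num)) ?_
  rw [cycC, cycA]
  linear_combination h + mu * xiB_eq +
    (xiC ^ 2 * (1 + mu) + nu * mu * xiB) * xiA_mul_xiB_mul_xiC

lemma one_add_lam_mul_mul : (1 + lam) * (1 + mu) * (1 + nu) = 1 := by
  have h := cyclic_sum_mul_eq_zero lam_mul_mu_mul_nu cyc_relation_AB cyc_relation_BC
    cyc_relation_CA
  refine sub_eq_zero.1 ((mul_eq_zero.1 h).resolve_right fun h0 => ?_)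
  have hcoeff := congrArg (fun f => HahnSeries.coeff f 0) h0
  rw [← one_add_one_eq_two, add_mul, one_mul] at hcoeff
  simp only [HahnSeries.coeff_add, HahnSeries.coeff_zero,
    HahnSeries.coeff_one, hasLeadingTerm_nu.coeff_eq_zero (k := 0) (by norm_num),
    (hasLeadingTerm_cycB.mul hasLeadingTerm_nu).coeff_eq_zero (k := 0) (by norm_num),
    (hasLeadingTerm_mu.mul hasLeadingTerm_nu).coeff_eq_zero (k := 0) (by norm_num)] at hcoeff
  norm_num at hcoeff

lemma cycA_mul_mu : cycA * mu = 1 + lam := by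
  have h := defect_mul_eq_zero lam_mul_mu_mul_nu cyc_relation_AB cycA_mul one_add_lam_mul_mul
  refine sub_eq_zero.1 ((mul_eq_zero.1 h).resolve_right fun h0 => ?_)
  have hcoeff := congrArg (fun f => HahnSeries.coeff f (-7)) h0
  simp only [two_mul, HahnSeries.coeff_add, HahnSeries.coeff_zero, HahnSeries.coeff_one,
    hasLeadingTerm_nu.coeff_eq_zero (k := -7) (by norm_num), hasLeadingTerm_lam.coeff_eq,
    (hasLeadingTerm_cycB.mul hasLeadingTerm_nu).coeff_eq_zero (k := -7) (by norm_num),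
    (hasLeadingTerm_nu.mul hasLeadingTerm_lam).coeff_eq_zero (k := -7) (by norm_num)] at hcoeff
  norm_num at hcoeff

lemma cycB_mul_nu : cycB * nu = 1 + mu := by
  have h := cyclic_defect lam_mul_mu_mul_nu cyc_relation_AB
  rw [one_add_lam_mul_mul, cycA_mul_mu] at h
  linear_combination h

lemma cycC_mul_lam : cycC * lam = 1 + nu := by
  have h := cyclic_defect (l := mu) (m := nu) (by linear_combination lam_mul_mu_mul_nu)
    cyc_relation_BC
  rw [cycB_mul_nu] at h
  linear_combination h + one_add_lam_mul_mul

/-- The parameter `v`, which generates the function field together with `λ` and `h`, subject to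
`lam_cube` and `hpar_pow_seven`. -/
def vpar : ℤ⸨X⸩ := 1 + cycA

/-- The parameter `h`, see `vpar`. -/
def hpar : ℤ⸨X⸩ := xiA * xiB

lemma vpar_mul_cycC : vpar * cycC = -1 := by
  rw [vpar, mul_comm, cycC_mul]

lemma vpar_mul_nu : vpar * nu = -vpar - lam := by
  linear_combination lam * vpar_mul_cycC - vpar * cycC_mul_lam

lemma lam_cube :
    lam ^ 3 = -(1 + vpar) * lam ^ 2 - vpar * lam - vpar * (vpar - 1) := by
  have hmu : (vpar - 1) * mu = 1 + lam := by rw [vpar, add_sub_cancel_left, cycA_mul_mu]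
  linear_combination vpar * nu * lam * hmu + (lam ^ 2 + lam) * vpar_mul_nu -
    vpar * (vpar - 1) * lam_mul_mu_mul_nu

lemma vpar_mul_xiA : vpar * xiA = hpar ^ 3 := by
  grind [vpar, hpar, cycA, xiC_eq, xiA_mul_xiB_mul_xiC]

lemma xiB_mul_hpar_sq : xiB * hpar ^ 2 = vpar := by
  grind [vpar, hpar, cycA, xiC_eq, xiA_mul_xiB_mul_xiC]

lemma xiC_mul_hpar : xiC * hpar = -1 := by
  rw [hpar]
  linear_combination xiA_mul_xiB_mul_xiC

lemma hpar_pow_seven : hpar ^ 7 = vpar ^ 3 - vpar ^ 2 := by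
  have hX : vpar - 1 = xiA ^ 3 * xiB := add_sub_cancel_left _ _
  calc hpar ^ 7 = (hpar ^ 3) ^ 2 * hpar := by ring
    _ = vpar ^ 2 * (xiA ^ 3 * xiB) := by rw [← vpar_mul_xiA, hpar]; ring
    _ = vpar ^ 3 - vpar ^ 2 := by rw [← hX]; ring

lemma hpar_ne_zero : hpar ≠ 0 :=
  (hasLeadingTerm_xiA.mul hasLeadingTerm_xiB).ne_zero (by norm_num)

lemma vpar_ne_zero : vpar ≠ 0 := fun h => by
  simpa [h] using vpar_mul_cycC

end Parameters

/-! ### Exact arithmetic by Kronecker substitution -/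

lemma polynomial_eq_zero_of_eval_eq_zero {B : ℤ} {f : Polynomial ℤ}
    (hcoeff : ∀ i, |f.coeff i| < B) (heval : f.eval B = 0) : f = 0 := by
  induction h : f.natDegree generalizing f with
  | zero =>
    rw [Polynomial.eq_C_of_natDegree_eq_zero h] at heval ⊢
    simpa using heval
  | succ d ih =>
    have hsplit := Polynomial.divX_mul_X_add f
    have heval' : f.divX.eval B * B + f.coeff 0 = 0 := by
      rw [← hsplit] at heval
      simpa using heval
    have hzero : f.coeff 0 = 0 :=
      Int.eq_zero_of_abs_lt_dvd ⟨-f.divX.eval B, by linear_combination heval'⟩ (hcoeff 0)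
    have hB : B ≠ 0 := ((abs_nonneg _).trans_lt (hcoeff 0)).ne'
    have hdivX : f.divX = 0 := by
      refine ih (fun i => ?_) ?_ ?_
      · rw [Polynomial.coeff_divX]
        exact hcoeff _
      · simpa [hzero, hB] using heval'
      · rw [Polynomial.natDegree_divX_eq_natDegree_tsub_one, h, Nat.add_sub_cancel]
    rw [← hsplit, hdivX, hzero]
    simp

lemma coeff_le_eval_one {g : Polynomial ℤ} (hg : ∀ i, 0 ≤ g.coeff i) (i : ℕ) :
    g.coeff i ≤ g.eval 1 := by
  simp only [Polynomial.eval_eq_sum_range, one_pow, mul_one]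
  by_cases hi : i ∈ Finset.range (g.natDegree + 1)
  · exact Finset.single_le_sum (f := g.coeff) (fun i _ => hg i) hi
  · rw [Polynomial.coeff_eq_zero_of_natDegree_lt (by simpa [Nat.lt_succ_iff] using hi)]
    exact Finset.sum_nonneg fun i _ => hg i

/-- The evaluation point of the Kronecker substitution. -/
def kroneckerBase : ℤ := 2 ^ 600

/-- An integer polynomial, represented for computation by its value at `kroneckerBase` together
with a bound `norm` for the sum of the absolute values of its coefficients. Only `value` and `norm`
are ever evaluated; `poly` and `majorant` carry the meaning of these two numbers. -/
structure KroneckerPoly where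
  poly : Polynomial ℤ
  majorant : Polynomial ℤ
  value : ℤ
  norm : ℕ
  eval_poly : poly.eval kroneckerBase = value
  eval_majorant : majorant.eval 1 = norm
  abs_coeff_le : ∀ i, |poly.coeff i| ≤ majorant.coeff i

namespace KroneckerPoly

instance : Add KroneckerPoly where
  add x y :=
    { poly := x.poly + y.poly
      majorant := x.majorant + y.majorant
      value := Int.add x.value y.value
      norm := Nat.add x.norm y.norm
      eval_poly := by
        rw [Polynomial.eval_add, x.eval_poly, y.eval_poly]
        rfl
      eval_majorant := by
        rw [Polynomial.eval_add, x.eval_majorant, y.eval_majorant]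
        exact (Nat.cast_add _ _).symm
      abs_coeff_le := fun i => by
        rw [Polynomial.coeff_add, Polynomial.coeff_add]
        exact (abs_add_le _ _).trans (add_le_add (x.abs_coeff_le i) (y.abs_coeff_le i)) }

instance : Sub KroneckerPoly where
  sub x y :=
    { poly := x.poly - y.poly
      majorant := x.majorant + y.majorant
      value := Int.sub x.value y.value
      norm := Nat.add x.norm y.norm
      eval_poly := by
        rw [Polynomial.eval_sub, x.eval_poly, y.eval_poly]
        rfl
      eval_majorant := by
        rw [Polynomial.eval_add, x.eval_majorant, y.eval_majorant]
        exact (Nat.cast_add _ _).symm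
      abs_coeff_le := fun i => by
        rw [Polynomial.coeff_sub, Polynomial.coeff_add]
        exact (abs_sub _ _).trans (add_le_add (x.abs_coeff_le i) (y.abs_coeff_le i)) }

instance : Mul KroneckerPoly where
  mul x y :=
    { poly := x.poly * y.poly
      majorant := x.majorant * y.majorant
      value := Int.mul x.value y.value
      norm := Nat.mul x.norm y.norm
      eval_poly := by
        rw [Polynomial.eval_mul, x.eval_poly, y.eval_poly]
        rfl
      eval_majorant := by
        rw [Polynomial.eval_mul, x.eval_majorant, y.eval_majorant]
        exact (Nat.cast_mul _ _).symm
      abs_coeff_le := fun i => by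
        rw [Polynomial.coeff_mul, Polynomial.coeff_mul]
        refine (Finset.abs_sum_le_sum_abs _ _).trans (Finset.sum_le_sum fun p _ => ?_)
        rw [abs_mul]
        exact mul_le_mul (x.abs_coeff_le _) (y.abs_coeff_le _) (abs_nonneg _)
          ((abs_nonneg _).trans (x.abs_coeff_le _)) }

instance : IntCast KroneckerPoly where
  intCast k :=
    { poly := Polynomial.C k
      majorant := Polynomial.C |k|
      value := k
      norm := k.natAbs
      eval_poly := Polynomial.eval_C
      eval_majorant := by simp
      abs_coeff_le := fun i => by
        rw [Polynomial.coeff_C, Polynomial.coeff_C]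
        split_ifs <;> simp }

/-- The indeterminate. -/
def var : KroneckerPoly where
  poly := Polynomial.X
  majorant := Polynomial.X
  value := kroneckerBase
  norm := 1
  eval_poly := Polynomial.eval_X
  eval_majorant := by simp
  abs_coeff_le i := by
    rw [Polynomial.coeff_X]
    split_ifs <;> simp

lemma poly_add (x y : KroneckerPoly) : (x + y).poly = x.poly + y.poly := rfl

lemma poly_sub (x y : KroneckerPoly) : (x - y).poly = x.poly - y.poly := rfl

lemma poly_mul (x y : KroneckerPoly) : (x * y).poly = x.poly * y.poly := rfl

lemma poly_intCast (k : ℤ) : (k : KroneckerPoly).poly = Polynomial.C k := rfl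

lemma poly_var : var.poly = Polynomial.X := rfl

/-- A test for vanishing, complete as long as the coefficients stay below `kroneckerBase`. -/
def isZero (x : KroneckerPoly) : Bool := Int.beq' x.value 0 && Nat.blt x.norm (2 ^ 600)

lemma poly_eq_zero_of_isZero {x : KroneckerPoly} (h : x.isZero = true) : x.poly = 0 := by
  simp only [isZero, Bool.and_eq_true, Int.beq'_eq, Nat.blt_eq] at h
  refine polynomial_eq_zero_of_eval_eq_zero (B := kroneckerBase) (fun i => ?_)
    (x.eval_poly.trans h.1)
  have hnonneg : ∀ i, 0 ≤ x.majorant.coeff i := fun i => (abs_nonneg _).trans (x.abs_coeff_le i)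
  calc |x.poly.coeff i| ≤ x.majorant.coeff i := x.abs_coeff_le i
    _ ≤ x.majorant.eval 1 := coeff_le_eval_one hnonneg i
    _ = (x.norm : ℤ) := x.eval_majorant
    _ < kroneckerBase := by
      rw [kroneckerBase]
      exact_mod_cast h.2

end KroneckerPoly

lemma lam_mem_residueClass : lam ∈ residueClass (0 : ZMod 7) :=
  neg_mem (mul_mem_residueClass (mul_mem_residueClass (t := 4) xiA_mem_residueClass
    xiB_mem_residueClass) (s := 3) (dilate_mem_residueClass 2 xiA_mem_residueClass))

lemma hpar_mem_residueClass : hpar ∈ residueClass (4 : ZMod 7) :=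
  mul_mem_residueClass xiA_mem_residueClass xiB_mem_residueClass

lemma vpar_mem_residueClass : vpar ∈ residueClass (0 : ZMod 7) :=
  add_mem one_mem_residueClass
    (mul_mem_residueClass (pow_mem_residueClass xiA_mem_residueClass 3) xiB_mem_residueClass)

lemma aeval_mem_residueClass_zero {N : ℕ} {f : ℤ⸨X⸩} (hf : f ∈ residueClass (0 : ZMod N))
    (p : Polynomial ℤ) : Polynomial.aeval f p ∈ residueClass (0 : ZMod N) := by
  rw [Polynomial.aeval_eq_sum_range]
  refine sum_mem fun i _ => ?_
  rw [Algebra.smul_def, eq_intCast, ← zsmul_eq_mul]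
  exact zsmul_mem (by simpa using pow_mem_residueClass hf i) _

/-- The element `c₀ + c₁ λ + c₂ λ²` of `ℤ[v, λ]`. -/
structure CubicElt where
  c₀ : KroneckerPoly
  c₁ : KroneckerPoly
  c₂ : KroneckerPoly

namespace CubicElt

/-- The Laurent series represented by an element of `ℤ[v, λ]`. -/
def eval (x : CubicElt) : ℤ⸨X⸩ :=
  Polynomial.aeval vpar x.c₀.poly + Polynomial.aeval vpar x.c₁.poly * lam +
    Polynomial.aeval vpar x.c₂.poly * lam ^ 2

instance : Add CubicElt := ⟨fun x y => ⟨x.c₀ + y.c₀, x.c₁ + y.c₁, x.c₂ + y.c₂⟩⟩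

instance : Sub CubicElt := ⟨fun x y => ⟨x.c₀ - y.c₀, x.c₁ - y.c₁, x.c₂ - y.c₂⟩⟩

instance : IntCast CubicElt := ⟨fun k => ⟨k, (0 : ℤ), (0 : ℤ)⟩⟩

instance : SMul KroneckerPoly CubicElt := ⟨fun k x => ⟨k * x.c₀, k * x.c₁, k * x.c₂⟩⟩

/-- The parameter `v`. -/
def v : CubicElt := ⟨.var, (0 : ℤ), (0 : ℤ)⟩

/-- The parameter `λ`. -/
def l : CubicElt := ⟨(0 : ℤ), (1 : ℤ), (0 : ℤ)⟩

/-- Multiplication by `λ`, using the cubic equation `lam_cube`. -/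
def mulL (x : CubicElt) : CubicElt :=
  ⟨((0 : ℤ) : KroneckerPoly) - .var * (.var - (1 : ℤ)) * x.c₂, x.c₀ - .var * x.c₂,
    x.c₁ - ((1 : ℤ) + .var) * x.c₂⟩

instance : Mul CubicElt := ⟨fun x y => x.c₀ • y + (x.c₁ • y + (x.c₂ • y).mulL).mulL⟩

instance : Pow CubicElt ℕ := ⟨fun x n => (· * x)^[n] (1 : ℤ)⟩

/-- A test for vanishing, complete as long as the coefficients stay below `kroneckerBase`. -/
def isZero (x : CubicElt) : Bool := x.c₀.isZero && x.c₁.isZero && x.c₂.isZero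

lemma eval_add (x y : CubicElt) : (x + y).eval = x.eval + y.eval := by
  change Polynomial.aeval vpar (_ + _) + Polynomial.aeval vpar (_ + _) * lam +
    Polynomial.aeval vpar (_ + _) * lam ^ 2 = _
  simp only [map_add, eval]
  ring

lemma eval_sub (x y : CubicElt) : (x - y).eval = x.eval - y.eval := by
  change Polynomial.aeval vpar (_ - _) + Polynomial.aeval vpar (_ - _) * lam +
    Polynomial.aeval vpar (_ - _) * lam ^ 2 = _
  simp only [map_sub, eval]
  ring

lemma eval_intCast (k : ℤ) : (k : CubicElt).eval = k := by
  change Polynomial.aeval vpar (Polynomial.C k) + Polynomial.aeval vpar (Polynomial.C 0) * lam +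
    Polynomial.aeval vpar (Polynomial.C 0) * lam ^ 2 = k
  simp

lemma eval_smul (k : KroneckerPoly) (x : CubicElt) :
    (k • x).eval = Polynomial.aeval vpar k.poly * x.eval := by
  change Polynomial.aeval vpar (_ * _) + Polynomial.aeval vpar (_ * _) * lam +
    Polynomial.aeval vpar (_ * _) * lam ^ 2 = _
  simp only [map_mul, eval]
  ring

lemma eval_v : v.eval = vpar := by
  simp [eval, v, KroneckerPoly.poly_var, KroneckerPoly.poly_intCast]

lemma eval_l : l.eval = lam := by
  simp [eval, l, KroneckerPoly.poly_intCast]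

lemma eval_mulL (x : CubicElt) : x.mulL.eval = x.eval * lam := by
  simp only [eval, mulL, KroneckerPoly.poly_add, KroneckerPoly.poly_sub, KroneckerPoly.poly_mul,
    KroneckerPoly.poly_intCast, KroneckerPoly.poly_var, map_add, map_sub, map_mul,
    Polynomial.aeval_X, map_one, map_zero]
  linear_combination -Polynomial.aeval vpar x.c₂.poly * lam_cube

lemma eval_mul (x y : CubicElt) : (x * y).eval = x.eval * y.eval := by
  change (x.c₀ • y + (x.c₁ • y + (x.c₂ • y).mulL).mulL).eval = _
  simp only [eval_add, eval_mulL, eval_smul]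
  rw [eval.eq_def x]
  ring

lemma eval_pow (x : CubicElt) (n : ℕ) : (x ^ n).eval = x.eval ^ n := by
  induction n with
  | zero => exact (eval_intCast 1).trans (by simp)
  | succ n ih =>
    change ((· * x)^[n + 1] ((1 : ℤ) : CubicElt)).eval = _
    rw [Function.iterate_succ_apply', eval_mul, pow_succ]
    exact congrArg (· * x.eval) ih

lemma eval_eq_zero_of_isZero {x : CubicElt} (h : x.isZero = true) : x.eval = 0 := by
  simp only [isZero, Bool.and_eq_true] at h
  simp [eval, KroneckerPoly.poly_eq_zero_of_isZero h.1.1,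
    KroneckerPoly.poly_eq_zero_of_isZero h.1.2, KroneckerPoly.poly_eq_zero_of_isZero h.2]

lemma eval_mem_residueClass (x : CubicElt) : x.eval ∈ residueClass (0 : ZMod 7) :=
  have haeval := aeval_mem_residueClass_zero vpar_mem_residueClass
  add_mem (add_mem (haeval _) (mul_mem_residueClass (haeval _) lam_mem_residueClass))
    (mul_mem_residueClass (haeval _) (pow_mem_residueClass lam_mem_residueClass 2))

end CubicElt

/-- The element `∑ dᵢ hⁱ` of `ℤ[v, λ, h]`. -/
structure SepticElt where
  d₀ : CubicElt
  d₁ : CubicElt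
  d₂ : CubicElt
  d₃ : CubicElt
  d₄ : CubicElt
  d₅ : CubicElt
  d₆ : CubicElt

namespace SepticElt

/-- The coefficient of `hⁱ`. -/
def coord (x : SepticElt) : Fin 7 → CubicElt := ![x.d₀, x.d₁, x.d₂, x.d₃, x.d₄, x.d₅, x.d₆]

/-- The Laurent series represented by an element of `ℤ[v, λ, h]`. -/
def eval (x : SepticElt) : ℤ⸨X⸩ := ∑ i, (x.coord i).eval * hpar ^ (i : ℕ)

lemma eval_eq (x : SepticElt) : x.eval = x.d₀.eval + x.d₁.eval * hpar + x.d₂.eval * hpar ^ 2 +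
    x.d₃.eval * hpar ^ 3 + x.d₄.eval * hpar ^ 4 + x.d₅.eval * hpar ^ 5 + x.d₆.eval * hpar ^ 6 := by
  simp [eval, coord, Fin.sum_univ_seven]

instance : Add SepticElt :=
  ⟨fun x y => ⟨x.d₀ + y.d₀, x.d₁ + y.d₁, x.d₂ + y.d₂, x.d₃ + y.d₃, x.d₄ + y.d₄, x.d₅ + y.d₅,
    x.d₆ + y.d₆⟩⟩

instance : SMul CubicElt SepticElt :=
  ⟨fun k x => ⟨k * x.d₀, k * x.d₁, k * x.d₂, k * x.d₃, k * x.d₄, k * x.d₅, k * x.d₆⟩⟩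

instance : IntCast SepticElt :=
  ⟨fun k => ⟨k, (0 : ℤ), (0 : ℤ), (0 : ℤ), (0 : ℤ), (0 : ℤ), (0 : ℤ)⟩⟩

/-- Multiplication by `h`, using the equation `hpar_pow_seven`. -/
def mulH (x : SepticElt) : SepticElt :=
  ⟨(CubicElt.v ^ 3 - CubicElt.v ^ 2) * x.d₆, x.d₀, x.d₁, x.d₂, x.d₃, x.d₄, x.d₅⟩

/-- A test for vanishing, complete as long as the coefficients stay below `kroneckerBase`. -/
def isZero (x : SepticElt) : Bool :=
  x.d₀.isZero && x.d₁.isZero && x.d₂.isZero && x.d₃.isZero && x.d₄.isZero && x.d₅.isZero &&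
    x.d₆.isZero

lemma eval_add (x y : SepticElt) : (x + y).eval = x.eval + y.eval := by
  change eval ⟨_ + _, _ + _, _ + _, _ + _, _ + _, _ + _, _ + _⟩ = _
  simp only [eval_eq, CubicElt.eval_add]
  ring

lemma eval_smul (k : CubicElt) (x : SepticElt) : (k • x).eval = k.eval * x.eval := by
  change eval ⟨_ * _, _ * _, _ * _, _ * _, _ * _, _ * _, _ * _⟩ = _
  simp only [eval_eq, CubicElt.eval_mul]
  ring

lemma eval_intCast (k : ℤ) : (k : SepticElt).eval = k := by
  change eval ⟨(k : ℤ), (0 : ℤ), (0 : ℤ), (0 : ℤ), (0 : ℤ), (0 : ℤ), (0 : ℤ)⟩ = _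
  simp [eval_eq, CubicElt.eval_intCast]

lemma eval_mulH (x : SepticElt) : x.mulH.eval = hpar * x.eval := by
  simp only [eval_eq, mulH, CubicElt.eval_mul, CubicElt.eval_sub, CubicElt.eval_pow,
    CubicElt.eval_v]
  linear_combination -x.d₆.eval * hpar_pow_seven

lemma eval_mulH_iterate (n : ℕ) (x : SepticElt) : (mulH^[n] x).eval = hpar ^ n * x.eval := by
  induction n with
  | zero => simp
  | succ n ih => rw [Function.iterate_succ_apply', eval_mulH, ih, pow_succ', mul_assoc]

lemma eval_eq_zero_of_isZero {x : SepticElt} (h : x.isZero = true) : x.eval = 0 := by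
  simp only [isZero, Bool.and_eq_true] at h
  obtain ⟨⟨⟨⟨⟨⟨h₀, h₁⟩, h₂⟩, h₃⟩, h₄⟩, h₅⟩, h₆⟩ := h
  simp [eval_eq, CubicElt.eval_eq_zero_of_isZero, *]

lemma component_eq_of_eval_eq {x : SepticElt} {f : ℤ⸨X⸩} (i : Fin 7)
    (h : x.eval = hpar ^ (i : ℕ) * f) : component (0 : ZMod 7) f = (x.coord i).eval := by
  have hmem (j : Fin 7) :
      (x.coord j).eval * hpar ^ (j : ℕ) ∈ residueClass ((j : ℕ) * 4 : ZMod 7) :=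
    mul_mem_residueClass (x.coord j).eval_mem_residueClass
      (pow_mem_residueClass hpar_mem_residueClass j) (zero_add _)
  have hinj : ∀ j : Fin 7, ((i : ℕ) * 4 : ZMod 7) = (j : ℕ) * 4 ↔ j = i := by
    clear h
    revert i
    decide
  have hcomp := congrArg (component ((i : ℕ) * 4 : ZMod 7)) h
  rw [eval, map_sum, component_mul (pow_mem_residueClass hpar_mem_residueClass i), sub_self,
    Finset.sum_congr rfl fun j _ => component_of_mem (hmem j) _] at hcomp
  simp only [hinj, Finset.sum_ite_eq', Finset.mem_univ, if_true] at hcomp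
  refine mul_left_cancel₀ (pow_ne_zero (i : ℕ) hpar_ne_zero) ?_
  rw [← hcomp, mul_comm]

end SepticElt

/-! ### The function `t` and the modular equation -/

section Tau

lemma qPow_pow (n : ℤ) (k : ℕ) : qPow n ^ k = qPow (k * n) := by
  induction k with
  | zero => simp [qPow_zero]
  | succ k ih => rw [pow_succ, ih, ← qPow_add, Nat.cast_succ, add_one_mul]

lemma qPow_neg_mul_qPow (n : ℤ) : qPow (-n) * qPow n = 1 := by
  rw [← qPow_add, neg_add_cancel, qPow_zero]

lemma jL_pow_mul_jInv_pow (b : ℕ) [NeZero b] (k : ℕ) : jL b ^ k * jInv b ^ k = 1 := by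
  rw [← mul_pow, jL_mul_jInv, one_pow]

/-- `t = q J₇⁴ / J₁⁴`, as a unit of the ring of Laurent series. -/
def tUnit : ℤ⸨X⸩ˣ where
  val := qPow 1 * jL 7 ^ 4 * jInv 1 ^ 4
  inv := qPow (-1) * jL 1 ^ 4 * jInv 7 ^ 4
  val_inv := by
    linear_combination jL 7 ^ 4 * jInv 7 ^ 4 * jL 1 ^ 4 * jInv 1 ^ 4 * qPow_neg_mul_qPow 1 +
      jL 1 ^ 4 * jInv 1 ^ 4 * jL_pow_mul_jInv_pow 7 4 + jL_pow_mul_jInv_pow 1 4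
  inv_val := by
    linear_combination jL 7 ^ 4 * jInv 7 ^ 4 * jL 1 ^ 4 * jInv 1 ^ 4 * qPow_neg_mul_qPow 1 +
      jL 1 ^ 4 * jInv 1 ^ 4 * jL_pow_mul_jInv_pow 7 4 + jL_pow_mul_jInv_pow 1 4

/-- `t⁻¹` at `q⁷`: the Hauptmodul in which the components of powers of `xi` are expressed. -/
def tau : ℤ⸨X⸩ := dilate 7 ↑tUnit⁻¹

/-- `tau` at `q²`. -/
def tau₂ : ℤ⸨X⸩ := dilate 2 tau

lemma tau_eq_jL : tau = qPow (-7) * jL 7 ^ 4 * jInv 49 ^ 4 := by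
  change dilate 7 (qPow (-1) * jL 1 ^ 4 * jInv 7 ^ 4) = _
  simp only [map_mul, map_pow, dilate_qPow, dilate_jL, dilate_jInv]
  norm_num

lemma tau₂_eq_jL : tau₂ = qPow (-14) * jL 14 ^ 4 * jInv 98 ^ 4 := by
  rw [tau₂, tau_eq_jL]
  simp only [map_mul, map_pow, dilate_qPow, dilate_jL, dilate_jInv]
  norm_num

lemma tau_ne_zero : tau ≠ 0 := (tUnit⁻¹.isUnit.map (dilate 7)).ne_zero

lemma tau₂_ne_zero : tau₂ ≠ 0 := ((tUnit⁻¹.isUnit.map (dilate 7)).map (dilate 2)).ne_zero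

lemma septicNorm_mul {A : Type*} [CommRing A] (r a b c d : A) :
    septicNorm (r * a) (r * b) (r * c) (r * d) = r ^ 7 * septicNorm a b c d := by
  simp only [septicNorm, quadraticNormFst, quadraticNormSnd]
  ring

lemma septicNorm_toLaurent :
    septicNorm (dilate 7 (toLaurent jPartZero)) (qPow 1 * dilate 7 (toLaurent jPartOne))
      (qPow 5 * dilate 7 (toLaurent jPartFive)) (-(qPow 2 * jL 49)) * jL 49 = jL 7 ^ 8 := by
  have hnorm := congrArg toLaurent septicNorm_J_one
  have hX : toLaurent X = qPow 1 := by simpa using (qPow_natCast 1).symm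
  rwa [map_mul, map_septicNorm, map_neg, map_mul, map_mul, map_mul, ← dilate_toLaurent,
    ← dilate_toLaurent, ← dilate_toLaurent, ← qPow_natCast, ← qPow_natCast, hX, map_pow] at hnorm

lemma tau_sq : tau ^ 2 = septicNorm xiA xiB xiC (-1) := by
  have hinv := jL_mul_jInv 49
  have hq : qPow (-2) * qPow 2 = 1 := qPow_neg_mul_qPow 2
  have hq1 : qPow 1 = qPow (-1) * qPow 2 := (qPow_add (-1) 2).symm ▸ rfl
  have hq5 : qPow 5 = qPow 3 * qPow 2 := (qPow_add 3 2).symm ▸ rfl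
  have hq7 : qPow (-7) ^ 2 * qPow 2 ^ 7 = 1 := by
    rw [qPow_pow, qPow_pow, ← qPow_add]
    exact qPow_zero
  have hscale : septicNorm (dilate 7 (toLaurent jPartZero))
      (qPow 1 * dilate 7 (toLaurent jPartOne)) (qPow 5 * dilate 7 (toLaurent jPartFive))
      (-(qPow 2 * jL 49)) = (qPow 2 * jL 49) ^ 7 * septicNorm xiA xiB xiC (-1) := by
    rw [← septicNorm_mul, xiA, xiB, xiC, hq1, hq5]
    simp only [map_mul, dilate_jInv]
    congr 1
    · linear_combination -dilate 7 (toLaurent jPartZero) * (hq + qPow (-2) * qPow 2 * hinv)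
    · linear_combination -qPow 2 * qPow (-1) * dilate 7 (toLaurent jPartOne) * hinv
    · linear_combination -qPow 2 * qPow 3 * dilate 7 (toLaurent jPartFive) * hinv
    · ring
  have hnorm := septicNorm_toLaurent
  rw [hscale] at hnorm
  calc tau ^ 2 = qPow (-7) ^ 2 * jL 7 ^ 8 * jInv 49 ^ 8 := by rw [tau_eq_jL]; ring
    _ = (qPow (-7) ^ 2 * qPow 2 ^ 7) * (jL 49 ^ 8 * jInv 49 ^ 8) *
        septicNorm xiA xiB xiC (-1) := by rw [← hnorm]; ring
    _ = septicNorm xiA xiB xiC (-1) := by rw [hq7, jL_pow_mul_jInv_pow, one_mul, one_mul]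

lemma septicNorm_parameters {A : Type*} [CommRing A] (h v : A) :
    septicNorm (h ^ 5) (v ^ 2) (-(v * h)) (-(v * h ^ 2)) =
      v ^ 14 + h ^ 7 * (-v ^ 7 - 7 * v ^ 8 - 14 * v ^ 9 + 7 * v ^ 11) +
        (h ^ 7) ^ 2 * (-8 * v ^ 7 + 14 * v ^ 8) + (h ^ 7) ^ 3 * (14 * v ^ 4) +
        (h ^ 7) ^ 4 * (-7 * v ^ 2) + (h ^ 7) ^ 5 := by
  simp only [septicNorm, quadraticNormFst, quadraticNormSnd]
  ring

lemma cycA_ne_zero : cycA ≠ 0 := hasLeadingTerm_cycA.ne_zero (by norm_num)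

lemma cycA_mul_cycB : cycA * cycB = -vpar := by
  rw [vpar]
  linear_combination cycA_mul

/-- The common denominator of the functions below as elements of `ℚ(v, λ)`. -/
def denom : ℤ⸨X⸩ := cycA * vpar

lemma denom_ne_zero : denom ≠ 0 := mul_ne_zero cycA_ne_zero vpar_ne_zero

lemma denom_mul_cycB : denom * cycB = -vpar ^ 2 := by
  rw [denom]
  linear_combination vpar * cycA_mul_cycB

lemma denom_mul_cycC : denom * cycC = -cycA := by
  rw [denom]
  linear_combination cycA * vpar_mul_cycC

lemma tau_sq_eq : tau ^ 2 = (8 + cycA + cycB + cycC) ^ 2 := by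
  have hnorm : (vpar * hpar ^ 2) ^ 7 * tau ^ 2 =
      septicNorm (hpar ^ 5) (vpar ^ 2) (-(vpar * hpar)) (-(vpar * hpar ^ 2)) := by
    rw [tau_sq, ← septicNorm_mul]
    congr 1
    · linear_combination hpar ^ 2 * vpar_mul_xiA
    · linear_combination vpar * xiB_mul_hpar_sq
    · linear_combination vpar * hpar * xiC_mul_hpar
    · ring
  rw [septicNorm_parameters, hpar_pow_seven] at hnorm
  have hcyc : denom * (8 + cycA + cycB + cycC) =
      8 * denom + cycA * denom - vpar ^ 2 - cycA := by
    linear_combination denom_mul_cycB + denom_mul_cycC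
  have hpow : (vpar * hpar ^ 2) ^ 7 = vpar ^ 7 * (vpar ^ 3 - vpar ^ 2) ^ 2 := by
    rw [← hpar_pow_seven]
    ring
  refine mul_left_cancel₀ (mul_ne_zero (pow_ne_zero 2 denom_ne_zero) (pow_ne_zero 7
    (mul_ne_zero vpar_ne_zero (pow_ne_zero 2 hpar_ne_zero)))) ?_
  have hcycA : cycA = vpar - 1 := (add_sub_cancel_left _ _).symm
  calc denom ^ 2 * (vpar * hpar ^ 2) ^ 7 * tau ^ 2
      = (vpar * hpar ^ 2) ^ 7 * (denom * (8 + cycA + cycB + cycC)) ^ 2 := by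
        rw [mul_assoc, hnorm, hcyc, hpow, denom, hcycA]
        ring
    _ = _ := by ring

lemma hasLeadingTerm_tUnit : HasLeadingTerm 1 1 (tUnit : ℤ⸨X⸩) := by
  refine ⟨J 7 ^ 4 * invOfUnit (J 1) 1 ^ 4, ?_, ?_⟩
  · rw [map_mul, map_pow, map_pow, ← mul_assoc]
    rfl
  · simp [constantCoeff_J]

lemma hasLeadingTerm_tUnit_inv : HasLeadingTerm (-1) 1 (↑tUnit⁻¹ : ℤ⸨X⸩) := by
  refine ⟨J 1 ^ 4 * invOfUnit (J 7) 1 ^ 4, ?_, ?_⟩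
  · rw [map_mul, map_pow, map_pow, ← mul_assoc]
    rfl
  · simp [constantCoeff_J]

lemma hasLeadingTerm_tau : HasLeadingTerm (-7) 1 tau := hasLeadingTerm_tUnit_inv.dilate 7

lemma tau_eq : tau = -8 - (cycA + cycB + cycC) := by
  have hfactor : (tau - (8 + cycA + cycB + cycC)) * (tau + (8 + cycA + cycB + cycC)) = 0 := by
    linear_combination tau_sq_eq
  rcases mul_eq_zero.1 hfactor with h | h
  · exfalso
    have h8 : (8 : ℤ⸨X⸩).coeff (-7) = 0 := by
      rw [← map_ofNat toLaurent 8, coeff_toLaurent_of_neg _ (by norm_num)]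
    have hcoeff := congrArg (fun f => HahnSeries.coeff f (-7)) h
    simp only [HahnSeries.coeff_sub, HahnSeries.coeff_add, HahnSeries.coeff_zero, h8,
      hasLeadingTerm_tau.coeff_eq, hasLeadingTerm_cycA.coeff_eq,
      hasLeadingTerm_cycB.coeff_eq_zero (k := -7) (by norm_num),
      hasLeadingTerm_cycC.coeff_eq_zero (k := -7) (by norm_num)] at hcoeff
    norm_num at hcoeff
  · linear_combination h

lemma denom_mul_tau :
    denom * tau = denom * -8 - cycA * denom + vpar ^ 2 + cycA := by
  rw [tau_eq]
  linear_combination -denom_mul_cycB - denom_mul_cycC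

lemma dilate_two_cycA : dilate 2 cycA = lam ^ 2 * mu + lam := by
  have h : dilate 2 cycA = xiA₂ ^ 3 * xiB₂ := by rw [cycA, map_mul, map_pow, xiA₂, xiB₂]
  rw [h, xiA₂_eq, xiB₂_eq]
  have hC := cycC_mul_lam
  rw [cycC] at hC
  linear_combination lam ^ 2 * mu * hC + lam * lam_mul_mu_mul_nu

lemma dilate_two_cycB : dilate 2 cycB = mu ^ 2 * nu + mu := by
  have h : dilate 2 cycB = xiB₂ ^ 3 * xiC₂ := by rw [cycB, map_mul, map_pow, xiB₂, xiC₂]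
  rw [h, xiB₂_eq, xiC₂_eq]
  have hA := cycA_mul_mu
  rw [cycA] at hA
  linear_combination mu ^ 2 * nu * hA + mu * lam_mul_mu_mul_nu

lemma dilate_two_cycC : dilate 2 cycC = nu ^ 2 * lam + nu := by
  have h : dilate 2 cycC = xiC₂ ^ 3 * xiA₂ := by rw [cycC, map_mul, map_pow, xiC₂, xiA₂]
  rw [h, xiC₂_eq, xiA₂_eq]
  have hB := cycB_mul_nu
  rw [cycB] at hB
  linear_combination nu ^ 2 * lam * hB + nu * lam_mul_mu_mul_nu

lemma tau₂_eq_lam_mu_nu :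
    tau₂ = -8 - (lam ^ 2 * mu + lam + (mu ^ 2 * nu + mu) + (nu ^ 2 * lam + nu)) := by
  rw [tau₂, tau_eq]
  simp only [map_sub, map_neg, map_add, dilate_two_cycA, dilate_two_cycB, dilate_two_cycC,
    map_ofNat]

end Tau

section Sigma

/-- The function `p₀ / t` at `q⁷`, see `IsPZero.dilate_mul_tau`. -/
def sigma : ℤ⸨X⸩ := lam + mu + nu + 4

/-- The product of the nonconstant parts of the `7`-dissection of `xi² / xi₂`. -/
def phiProd : ℤ⸨X⸩ := phi1 * phi2 * phi4

lemma denom_mul_mu : denom * mu = vpar * (1 + lam) := by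
  rw [denom]
  linear_combination vpar * cycA_mul_mu

lemma denom_mul_nu : denom * nu = cycA * (0 - vpar - lam) := by
  rw [denom]
  linear_combination cycA * vpar_mul_nu

namespace CubicElt

/-- The representative of `cycA`. -/
def cycACode : CubicElt := v - (1 : ℤ)

/-- The representative of `denom`. -/
def denomCode : CubicElt := cycACode * v

/-- The representative of `denom * lam`. -/
def lamCode : CubicElt := denomCode * l

/-- The representative of `denom * mu`. -/
def muCode : CubicElt := v * ((1 : ℤ) + l)

/-- The representative of `denom * nu`. -/
def nuCode : CubicElt := cycACode * ((0 : ℤ) - v - l)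

/-- The representative of `denom * sigma`. -/
def sigmaCode : CubicElt := lamCode + muCode + nuCode + denomCode * (4 : ℤ)

/-- The representative of `denom * tau`. -/
def tauCode : CubicElt := denomCode * (-8 : ℤ) - cycACode * denomCode + v ^ 2 + cycACode

/-- The representative of `denom² * tau₂`. -/
def tau₂Code : CubicElt :=
  sigmaCode ^ 2 - denomCode * (sigmaCode * (7 : ℤ)) - denomCode * tauCode

lemma eval_cycACode : cycACode.eval = cycA := by
  rw [cycACode, eval_sub, eval_v, eval_intCast, vpar, Int.cast_one, add_sub_cancel_left]

lemma eval_denomCode : denomCode.eval = denom := by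
  rw [denomCode, eval_mul, eval_cycACode, eval_v, denom]

lemma eval_lamCode : lamCode.eval = denom * lam := by
  rw [lamCode, eval_mul, eval_denomCode, eval_l]

lemma eval_muCode : muCode.eval = denom * mu := by
  rw [muCode, eval_mul, eval_add, eval_v, eval_l, eval_intCast, Int.cast_one, denom_mul_mu]

lemma eval_nuCode : nuCode.eval = denom * nu := by
  rw [nuCode, eval_mul, eval_sub, eval_sub, eval_v, eval_l, eval_intCast, Int.cast_zero,
    eval_cycACode, denom_mul_nu]

lemma eval_sigmaCode : sigmaCode.eval = denom * sigma := by
  simp only [sigmaCode, eval_add, eval_mul, eval_intCast, eval_lamCode, eval_muCode, eval_nuCode,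
    eval_denomCode, sigma, mul_add, Int.cast_ofNat]

lemma eval_tauCode : tauCode.eval = denom * tau := by
  simp only [tauCode, eval_add, eval_sub, eval_mul, eval_pow, eval_intCast, eval_v, eval_cycACode,
    eval_denomCode, denom_mul_tau, Int.cast_neg, Int.cast_ofNat]

end CubicElt

open CubicElt

lemma tau₂_eq : tau₂ = sigma ^ 2 - 7 * sigma - tau := by
  have h := eval_eq_zero_of_isZero (x := lamCode ^ 2 * muCode + muCode ^ 2 * nuCode +
    nuCode ^ 2 * lamCode + denomCode ^ 2 * (lamCode + muCode + nuCode + denomCode * (8 : ℤ)) +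
    denomCode * tau₂Code) (by decide +kernel)
  simp only [tau₂Code, eval_add, eval_sub, eval_mul, eval_pow, eval_intCast, eval_lamCode,
    eval_muCode, eval_nuCode, eval_denomCode, eval_sigmaCode, eval_tauCode] at h
  push_cast at h
  refine mul_left_cancel₀ (pow_ne_zero 3 denom_ne_zero) ?_
  rw [tau₂_eq_lam_mu_nu]
  linear_combination -h

lemma CubicElt.eval_tau₂Code : tau₂Code.eval = denom ^ 2 * tau₂ := by
  simp only [tau₂Code, tau₂_eq, eval_sub, eval_mul, eval_pow, eval_intCast, eval_denomCode,
    eval_sigmaCode, eval_tauCode]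
  push_cast
  ring

lemma cyclic_phi_mul {A : Type*} [CommRing A] {x y z l m n : A} (hxyz : x * y * z = -1)
    (hz : z = x ^ 2 - x * y ^ 2) (hn : y ^ 3 * z * n = 1 + m) (hl : z ^ 3 * x * l = 1 + n)
    (hzx : z ^ 3 * x * (1 + x ^ 3 * y) = -1) :
    -(x * z + y * z * (n * y) + x * y * (m * x) * (n * y)) * y = m * (x ^ 3 * y + l) := by
  have h1 : x ^ 2 * y ^ 3 = 1 + x ^ 3 * y := by linear_combination x * y * hz - hxyz
  have h2 : (1 + x ^ 3 * y) * n = -(1 + x ^ 3 * y) - l := by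
    linear_combination l * hzx - (1 + x ^ 3 * y) * hl
  linear_combination -hxyz - hn - m * n * h1 - m * h2

lemma phi1_mul_xiB : phi1 * xiB = mu * (cycA + lam) := by
  rw [phi1_eq, xiC₂_eq, xiB₂_eq]
  exact cyclic_phi_mul xiA_mul_xiB_mul_xiC xiC_eq cycB_mul_nu cycC_mul_lam cycC_mul

lemma phi4_mul_xiC : phi4 * xiC = nu * (cycB + mu) := by
  rw [phi4_eq, xiA₂_eq, xiC₂_eq, cycB, ← cyclic_phi_mul (by rw [← xiA_mul_xiB_mul_xiC]; ring)
    xiA_eq cycC_mul_lam cycA_mul_mu cycA_mul]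
  ring

lemma phi2_mul_xiA : phi2 * xiA = lam * (cycC + nu) := by
  rw [phi2_eq, xiB₂_eq, xiA₂_eq, cycC, ← cyclic_phi_mul (by rw [← xiA_mul_xiB_mul_xiC]; ring)
    xiB_eq cycA_mul_mu cycB_mul_nu cycB_mul]
  ring

lemma phiProd_eq_cyc : phiProd = -((cycA + lam) * (cycB + mu) * (cycC + nu)) := by
  have h : phiProd * (xiA * xiB * xiC) =
      lam * mu * nu * ((cycA + lam) * (cycB + mu) * (cycC + nu)) := by
    calc phiProd * (xiA * xiB * xiC) = (phi1 * xiB) * (phi4 * xiC) * (phi2 * xiA) := by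
          rw [phiProd]
          ring
      _ = _ := by
          rw [phi1_mul_xiB, phi4_mul_xiC, phi2_mul_xiA]
          ring
  rw [xiA_mul_xiB_mul_xiC, lam_mul_mu_mul_nu] at h
  linear_combination -h

lemma phiProd_eq : phiProd = 8 + tau - sigma := by
  have h := eval_eq_zero_of_isZero (x := (denomCode * (cycACode + l)) * (muCode - v ^ 2) *
    (nuCode - cycACode) + denomCode ^ 2 * (denomCode * (8 : ℤ) + tauCode - sigmaCode))
    (by decide +kernel)
  simp only [eval_add, eval_sub, eval_mul, eval_pow, eval_intCast, eval_v, eval_l, eval_cycACode,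
    eval_muCode, eval_nuCode, eval_denomCode, eval_sigmaCode, eval_tauCode] at h
  push_cast at h
  refine mul_left_cancel₀ (pow_ne_zero 3 denom_ne_zero) ?_
  have hB : denom * (cycB + mu) = denom * mu - vpar ^ 2 := by linear_combination denom_mul_cycB
  have hC : denom * (cycC + nu) = denom * nu - cycA := by linear_combination denom_mul_cycC
  calc denom ^ 3 * phiProd = -(denom * (cycA + lam)) * (denom * (cycB + mu)) *
        (denom * (cycC + nu)) := by
        rw [phiProd_eq_cyc]
        ring
    _ = _ := by
        rw [hB, hC]
        linear_combination -h

lemma phiProd_mul_tau₂_sq : phiProd * tau₂ ^ 2 = tau * (tau + 7 * sigma) := by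
  have h := eval_eq_zero_of_isZero (x := (denomCode * (8 : ℤ) + tauCode - sigmaCode) *
    tau₂Code ^ 2 - denomCode ^ 3 * (tauCode * (tauCode + sigmaCode * (7 : ℤ))))
    (by decide +kernel)
  simp only [eval_add, eval_sub, eval_mul, eval_pow, eval_intCast, eval_denomCode, eval_sigmaCode,
    eval_tauCode, eval_tau₂Code] at h
  push_cast at h
  refine mul_left_cancel₀ (pow_ne_zero 5 denom_ne_zero) ?_
  rw [phiProd_eq]
  linear_combination h

lemma phiProd_mul_jL : phiProd * (jL 14 * jL 49 ^ 7) = 8 * qPow 14 * jL 98 ^ 7 * jL 7 := by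
  have hprod := congrArg toLaurent ramanujanTheta_mul_mul
  simp only [map_mul, map_pow] at hprod
  have hq : qPow 14 = qPow 1 * qPow 9 * qPow 4 := by
    rw [← qPow_add, ← qPow_add]
    norm_num
  have hinv := jL_pow_mul_jInv_pow 49 6
  simp only [phiProd, phi1, phi2, phi4, map_mul, map_neg, map_pow, map_ofNat, dilate_jL,
    dilate_jInv, dilate_toLaurent, expand_ramanujanTheta, hq]
  simp only [← jL.eq_1] at hprod
  norm_num
  linear_combination (8 * (qPow 1 * qPow 9 * qPow 4) * jL 98 ^ 3) * hprod +
    8 * (qPow 1 * qPow 9 * qPow 4) * jL 98 ^ 3 * toLaurent (ramanujanTheta 63 35) *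
      toLaurent (ramanujanTheta 91 7) * toLaurent (ramanujanTheta 77 21) * jL 14 * jL 49 * hinv

end Sigma

section EtaQuotients

/-- The inverse of `xi`. -/
def xiInv : ℤ⸨X⸩ := qPow 2 * jL 49 * jInv 1

lemma xiInv_mul_xi : xiInv * xi = 1 := by
  rw [xiInv, xi]
  linear_combination jL 49 * jInv 49 * jL 1 * jInv 1 * qPow_neg_mul_qPow 2 +
    jL 1 * jInv 1 * jL_mul_jInv 49 + jL_mul_jInv 1

lemma tUnit_eq : (tUnit : ℤ⸨X⸩) = xiInv ^ 4 * tau := by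
  have hq : qPow 1 = qPow 2 ^ 4 * qPow (-7) := by
    rw [qPow_pow, ← qPow_add]
    norm_num
  change qPow 1 * jL 7 ^ 4 * jInv 1 ^ 4 = _
  rw [xiInv, tau_eq_jL, hq]
  linear_combination
    (-qPow 2 ^ 4 * qPow (-7) * jL 7 ^ 4 * jInv 1 ^ 4) * jL_pow_mul_jInv_pow 49 4

/-- The function `p₁ = q⁻¹ J₂⁴ J₇⁴ / (J₁⁴ J₁₄⁴)`. -/
def p1 : ℤ⸨X⸩ := dilate 2 ↑tUnit⁻¹ * tUnit

lemma dilate_p1_mul_tau : dilate 7 p1 * tau = tau₂ := by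
  have hdilate : dilate 7 (dilate 2 (↑tUnit⁻¹ : ℤ⸨X⸩)) = tau₂ := by
    rw [tau₂_eq_jL]
    change dilate 7 (dilate 2 (qPow (-1) * jL 1 ^ 4 * jInv 7 ^ 4)) = _
    simp only [map_mul, map_pow, dilate_qPow, dilate_jL, dilate_jInv]
    norm_num
  rw [tau, ← map_mul, p1, Units.mul_inv_cancel_right, hdilate]

lemma p1_mul_tau₂ : p1 * tau₂ = tau * (xi₂ ^ 4 * xiInv ^ 4) := by
  have hxi : tau * (↑tUnit⁻¹ : ℤ⸨X⸩) = xi ^ 4 := by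
    rw [Units.mul_inv_eq_iff_eq_mul, tUnit_eq, mul_left_comm, ← mul_assoc, ← mul_pow, xiInv_mul_xi,
      one_pow, one_mul]
  have hxi₂ := congrArg (dilate 2) hxi
  rw [map_mul, map_pow, ← tau₂, ← xi₂] at hxi₂
  rw [p1, tUnit_eq]
  linear_combination xiInv ^ 4 * tau * hxi₂

/-- The defining equation of `p₀ = (8 J₂⁷ J₇ / (J₁⁷ J₁₄) - 1) / 7`. -/
def IsPZero (P : ℤ⸨X⸩) : Prop := (1 + 7 * P) * (jL 1 ^ 7 * jL 14) = 8 * jL 2 ^ 7 * jL 7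

lemma tau_mul_jL : tau * (qPow 7 * jL 49 ^ 4) = jL 7 ^ 4 := by
  rw [tau_eq_jL]
  linear_combination jL 7 ^ 4 * jL 49 ^ 4 * jInv 49 ^ 4 * qPow_neg_mul_qPow 7 +
    jL 7 ^ 4 * jL_pow_mul_jInv_pow 49 4

lemma tau₂_mul_jL : tau₂ * (qPow 14 * jL 98 ^ 4) = jL 14 ^ 4 := by
  rw [tau₂_eq_jL]
  linear_combination jL 14 ^ 4 * jL 98 ^ 4 * jInv 98 ^ 4 * qPow_neg_mul_qPow 14 +
    jL 14 ^ 4 * jL_pow_mul_jInv_pow 98 4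

lemma jL_ne_zero (b : ℕ) [NeZero b] : jL b ≠ 0 := left_ne_zero_of_mul_eq_one (jL_mul_jInv b)

lemma qPow_ne_zero (n : ℤ) : qPow n ≠ 0 := right_ne_zero_of_mul_eq_one (qPow_neg_mul_qPow n)

namespace IsPZero

variable {P : ℤ⸨X⸩}

lemma one_add_seven_mul (hP : IsPZero P) : 1 + 7 * P = phiProd * (xi₂ ^ 7 * xiInv ^ 7) := by
  have hxi : xi₂ ^ 7 * xiInv ^ 7 * (jL 1 ^ 7 * jL 98 ^ 7 * qPow 14) = jL 2 ^ 7 * jL 49 ^ 7 := by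
    have hq : qPow (-4) ^ 7 * qPow 2 ^ 7 * qPow 14 = 1 := by
      rw [qPow_pow, qPow_pow, ← qPow_add, ← qPow_add]
      exact qPow_zero
    rw [xi₂_eq_jL, xiInv]
    linear_combination jL 2 ^ 7 * jL 49 ^ 7 * (jL 1 ^ 7 * jInv 1 ^ 7 * jL 98 ^ 7 * jInv 98 ^ 7 *
      hq + jL 1 ^ 7 * jInv 1 ^ 7 * jL_pow_mul_jInv_pow 98 7 + jL_pow_mul_jInv_pow 1 7)
  have hne : jL 1 ^ 7 * jL 14 * (jL 98 ^ 7 * qPow 14) ≠ 0 := by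
    simp [jL_ne_zero, qPow_ne_zero]
  refine mul_right_cancel₀ hne ?_
  rw [← mul_assoc, hP]
  linear_combination -phiProd * jL 14 * hxi - jL 2 ^ 7 * phiProd_mul_jL

lemma dilate_mul_tau (hP : IsPZero P) : dilate 7 P * tau = sigma := by
  have hdilate := congrArg (dilate 7) hP
  simp only [map_mul, map_add, map_one, map_ofNat, map_pow, dilate_jL] at hdilate
  norm_num at hdilate
  have hq : qPow 14 = qPow 7 ^ 2 := by
    rw [qPow_pow]
    norm_num
  have hsq : (1 + 7 * dilate 7 P) * tau ^ 2 = phiProd * tau₂ ^ 2 := by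
    have hne : jL 7 ^ 7 * jL 98 * (qPow 7 * jL 49 ^ 4) ^ 2 * (qPow 14 * jL 98 ^ 4) ^ 2 *
        jL 14 ≠ 0 := by
      simp [jL_ne_zero, qPow_ne_zero]
    refine mul_left_cancel₀ hne ?_
    calc _ = (1 + 7 * dilate 7 P) * (jL 7 ^ 7 * jL 98) * (tau * (qPow 7 * jL 49 ^ 4)) ^ 2 *
          (qPow 14 * jL 98 ^ 4) ^ 2 * jL 14 := by ring
      _ = phiProd * (jL 14 * jL 49 ^ 7) * (tau₂ * (qPow 14 * jL 98 ^ 4)) ^ 2 *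
          (jL 49 * jL 98 * jL 7 ^ 7 * qPow 7 ^ 2) := by
        rw [hdilate, phiProd_mul_jL, tau_mul_jL, tau₂_mul_jL, hq]
        ring
      _ = _ := by ring
  rw [phiProd_mul_tau₂_sq] at hsq
  refine mul_left_cancel₀ (mul_ne_zero (OfNat.ofNat_ne_zero 7 : (7 : ℤ⸨X⸩) ≠ 0) tau_ne_zero) ?_
  linear_combination hsq

end IsPZero

lemma toLaurent_isPZero {p₀ : ℤ⟦X⟧} (h : (1 + 7 * p₀) * (J 1 ^ 7 * J 14) = 8 * J 2 ^ 7 * J 7) :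
    IsPZero (toLaurent p₀) := by
  have hL := congrArg toLaurent h
  simp only [map_mul, map_add, map_one, map_ofNat, map_pow] at hL
  exact hL

lemma toLaurent_eq_tUnit {t : ℤ⟦X⟧} (h : t * J 1 ^ 4 = X * J 7 ^ 4) : toLaurent t = tUnit := by
  have hL := congrArg toLaurent h
  have hX : toLaurent X = qPow 1 := by simpa using (qPow_natCast 1).symm
  rw [map_mul, map_mul, map_pow, map_pow, hX] at hL
  change _ * jL 1 ^ 4 = _ * jL 7 ^ 4 at hL
  change _ = qPow 1 * jL 7 ^ 4 * jInv 1 ^ 4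
  linear_combination jInv 1 ^ 4 * hL - toLaurent t * jL_pow_mul_jInv_pow 1 4

lemma eq_p1 {f : ℤ⸨X⸩}
    (h : f * toLaurent (X * J 1 ^ 4 * J 14 ^ 4) = toLaurent (J 2 ^ 4 * J 7 ^ 4)) : f = p1 := by
  have hX : toLaurent X = qPow 1 := by simpa using (qPow_natCast 1).symm
  simp only [map_mul, map_pow, hX, ← jL.eq_1] at h
  have hdilate : dilate 2 (↑tUnit⁻¹ : ℤ⸨X⸩) = qPow (-2) * jL 2 ^ 4 * jInv 14 ^ 4 := by
    change dilate 2 (qPow (-1) * jL 1 ^ 4 * jInv 7 ^ 4) = _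
    simp only [map_mul, map_pow, dilate_qPow, dilate_jL, dilate_jInv]
    norm_num
  have hq : qPow (-2) * qPow 1 * qPow 1 = 1 := by
    rw [← qPow_add, ← qPow_add]
    exact qPow_zero
  rw [p1, hdilate]
  change _ = _ * (qPow 1 * jL 7 ^ 4 * jInv 1 ^ 4)
  refine mul_right_cancel₀ (b := qPow 1 * jL 1 ^ 4 * jL 14 ^ 4)
    (by simp [jL_ne_zero, qPow_ne_zero]) ?_
  rw [h]
  linear_combination -jL 2 ^ 4 * jL 7 ^ 4 * (jL 1 ^ 4 * jInv 1 ^ 4 * jL 14 ^ 4 * jInv 14 ^ 4 * hq +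
    jL 1 ^ 4 * jInv 1 ^ 4 * jL_pow_mul_jInv_pow 14 4 + jL_pow_mul_jInv_pow 1 4)

/-- The multiplier `A₃ = q⁸ J₂³ J₄₉¹⁰ / (J₁¹⁰ J₉₈³)` of the tower, see `eq_a₃`. -/
def a₃ : ℤ⸨X⸩ := xi₂ ^ 3 * xiInv ^ 10

lemma eq_a₃ {f : ℤ⸨X⸩}
    (h : f * toLaurent (J 1 ^ 10 * J 98 ^ 3) = toLaurent (X ^ 8 * J 2 ^ 3 * J 49 ^ 10)) :
    f = a₃ := by
  simp only [map_mul, ← qPow_natCast] at h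
  simp only [map_pow, ← jL.eq_1] at h
  have hq : qPow (-4) ^ 3 * qPow 2 ^ 10 = qPow 8 := by
    rw [qPow_pow, qPow_pow, ← qPow_add]
    rfl
  refine mul_right_cancel₀ (b := jL 1 ^ 10 * jL 98 ^ 3) (by simp [jL_ne_zero]) ?_
  rw [h, a₃, xi₂_eq_jL, xiInv]
  push_cast
  linear_combination -jL 2 ^ 3 * jL 49 ^ 10 * (jL 1 ^ 10 * jInv 1 ^ 10 * jL 98 ^ 3 * jInv 98 ^ 3 *
    hq + qPow 8 * (jL 1 ^ 10 * jInv 1 ^ 10 * jL_pow_mul_jInv_pow 98 3 + jL_pow_mul_jInv_pow 1 10))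

end EtaQuotients

section PowersOfXi

lemma vpar_mul_hpar_sq_mul_xi :
    vpar * hpar ^ 2 * xi = hpar ^ 5 + vpar ^ 2 - vpar * (hpar + hpar ^ 2) := by
  rw [xi_eq]
  linear_combination
    hpar ^ 2 * vpar_mul_xiA + vpar * xiB_mul_hpar_sq + vpar * hpar * xiC_mul_hpar

lemma denom_mul_hpar_sq_mul_xi₂ : denom * hpar ^ 2 * xi₂ =
    (1 + lam) * hpar ^ 5 - denom * (vpar + lam + lam * hpar + hpar ^ 2) := by
  rw [xi₂_eq, xiA₂_eq, xiB₂_eq, xiC₂_eq, denom]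
  linear_combination cycA * mu * hpar ^ 2 * vpar_mul_xiA + hpar ^ 5 * cycA_mul_mu +
    cycA * vpar * nu * xiB_mul_hpar_sq + cycA * vpar * vpar_mul_nu +
    cycA * vpar * lam * hpar * xiC_mul_hpar

namespace SepticElt

/-- Multiplication by `v h² xi`. -/
def mulXi (x : SepticElt) : SepticElt :=
  mulH^[5] x + CubicElt.v ^ 2 • x + ((0 : ℤ) - CubicElt.v) • (x.mulH + x.mulH.mulH)

/-- Multiplication by `denom h² xi₂`. -/
def mulXi₂ (x : SepticElt) : SepticElt :=
  ((1 : ℤ) + CubicElt.l) • mulH^[5] x + ((0 : ℤ) - CubicElt.denomCode) •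
    ((CubicElt.v + CubicElt.l) • x + CubicElt.l • x.mulH + x.mulH.mulH)

lemma eval_mulXi (x : SepticElt) : x.mulXi.eval = vpar * hpar ^ 2 * xi * x.eval := by
  simp only [mulXi, eval_add, eval_smul, eval_mulH_iterate, eval_mulH, CubicElt.eval_pow,
    CubicElt.eval_sub, CubicElt.eval_intCast, CubicElt.eval_v, vpar_mul_hpar_sq_mul_xi]
  push_cast
  ring

lemma eval_mulXi₂ (x : SepticElt) : x.mulXi₂.eval = denom * hpar ^ 2 * xi₂ * x.eval := by
  simp only [mulXi₂, eval_add, eval_smul, eval_mulH_iterate, eval_mulH, CubicElt.eval_add,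
    CubicElt.eval_sub, CubicElt.eval_intCast, CubicElt.eval_v, CubicElt.eval_l,
    CubicElt.eval_denomCode, denom_mul_hpar_sq_mul_xi₂]
  push_cast
  ring

lemma eval_mulXi_iterate (n : ℕ) (x : SepticElt) :
    (mulXi^[n] x).eval = (vpar * hpar ^ 2 * xi) ^ n * x.eval := by
  induction n with
  | zero => simp
  | succ n ih => rw [Function.iterate_succ_apply', eval_mulXi, ih, pow_succ' _ n, ← mul_assoc]

lemma eval_mulXi₂_iterate (n : ℕ) (x : SepticElt) :
    (mulXi₂^[n] x).eval = (denom * hpar ^ 2 * xi₂) ^ n * x.eval := by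
  induction n with
  | zero => simp
  | succ n ih => rw [Function.iterate_succ_apply', eval_mulXi₂, ih, pow_succ' _ n, ← mul_assoc]

/-- The representative of `c xiᵏ (v h²)⁷`, for `k ≤ 7`. -/
def xiMonomial (c : ℤ) (k : ℕ) : SepticElt :=
  mulXi^[k] ((CubicElt.v ^ (7 - k) * (c : ℤ)) • mulH^[2 * (7 - k)] (1 : ℤ))

lemma eval_xiMonomial (c : ℤ) {k : ℕ} (hk : k ≤ 7) :
    (xiMonomial c k).eval = (vpar * hpar ^ 2) ^ 7 * (c * xi ^ k) := by
  obtain ⟨n, hn⟩ := Nat.exists_eq_add_of_le hk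
  rw [xiMonomial, eval_mulXi_iterate, eval_smul, eval_mulH_iterate, eval_intCast,
    CubicElt.eval_mul, CubicElt.eval_pow, CubicElt.eval_v, CubicElt.eval_intCast, hn,
    Nat.add_sub_cancel_left, pow_mul]
  push_cast
  ring

end SepticElt

open SepticElt in
lemma modular_equation : tau ^ 2 = xi ^ 7 + 7 * xi ^ 6 + 21 * xi ^ 5 + 49 * xi ^ 4 + 147 * xi ^ 3 +
    343 * xi ^ 2 + 343 * xi + tau * (7 * xi ^ 3 + 35 * xi ^ 2 + 49 * xi) := by
  have h := eval_eq_zero_of_isZero (x := CubicElt.denomCode ^ 2 • (xiMonomial 1 7 +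
    xiMonomial 7 6 + xiMonomial 21 5 + xiMonomial 49 4 + xiMonomial 147 3 + xiMonomial 343 2 +
    xiMonomial 343 1) + (CubicElt.denomCode * CubicElt.tauCode) • (xiMonomial 7 3 +
    xiMonomial 35 2 + xiMonomial 49 1) + CubicElt.tauCode ^ 2 • xiMonomial (-1) 0)
    (by decide +kernel)
  simp only [eval_add, eval_smul, CubicElt.eval_pow, CubicElt.eval_mul, CubicElt.eval_denomCode,
    CubicElt.eval_tauCode, eval_xiMonomial, Nat.reduceLeDiff, le_refl] at h
  push_cast at h
  refine mul_left_cancel₀ (mul_ne_zero (pow_ne_zero 7 (mul_ne_zero vpar_ne_zero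
    (pow_ne_zero 2 hpar_ne_zero))) (pow_ne_zero 2 denom_ne_zero)) ?_
  linear_combination -h

end PowersOfXi

section FundamentalRelations

/-! ### The fundamental relations -/

/-- The factor which clears the denominators of `xi₂ʲ xiᵏ` as an element of `ℚ(v, λ, h)`, apart
from a power of `h` with exponent at most `6`. -/
def scale (j k : ℕ) : ℤ⸨X⸩ :=
  vpar ^ (j + k) * cycA ^ j * (vpar ^ 3 - vpar ^ 2) ^ (2 * (j + k) / 7)

lemma scale_ne_zero (j k : ℕ) : scale j k ≠ 0 := by
  rw [scale, ← hpar_pow_seven]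
  simp [vpar_ne_zero, cycA_ne_zero, hpar_ne_zero]

namespace CubicElt

/-- The representative of `scale j k`. -/
def scaleCode (j k : ℕ) : CubicElt :=
  v ^ (j + k) * cycACode ^ j * (v ^ 3 - v ^ 2) ^ (2 * (j + k) / 7)

lemma eval_scaleCode (j k : ℕ) : (scaleCode j k).eval = scale j k := by
  simp only [scaleCode, scale, eval_mul, eval_pow, eval_sub, eval_v, eval_cycACode]

/-- The representative of the product of `scale j k` with the part of `xi₂ʲ xiᵏ` with exponents
divisible by `7`. -/
def componentCode (j k : ℕ) : CubicElt :=
  (SepticElt.mulXi^[k] (SepticElt.mulXi₂^[j] (1 : ℤ))).coord (Fin.ofNat 7 (2 * (j + k)))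

lemma eval_componentCode (j k : ℕ) :
    (componentCode j k).eval = scale j k * component (0 : ZMod 7) (xi₂ ^ j * xi ^ k) := by
  have hscale : scale j k ∈ residueClass (0 : ZMod 7) :=
    eval_scaleCode j k ▸ eval_mem_residueClass _
  rw [← sub_self (0 : ZMod 7), ← component_mul hscale]
  refine (SepticElt.component_eq_of_eval_eq _ ?_).symm
  have hpow : hpar ^ (2 * (j + k)) =
      hpar ^ (2 * (j + k) % 7) * (hpar ^ 7) ^ (2 * (j + k) / 7) := by
    rw [← pow_mul, ← pow_add, Nat.mod_add_div]
  rw [SepticElt.eval_mulXi_iterate, SepticElt.eval_mulXi₂_iterate, SepticElt.eval_intCast, scale,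
    ← hpar_pow_seven, denom, Fin.val_ofNat]
  calc _ = vpar ^ (j + k) * cycA ^ j * hpar ^ (2 * (j + k)) * (xi₂ ^ j * xi ^ k) := by
        rw [pow_mul hpar 2]
        push_cast
        ring
    _ = _ := by
        rw [hpow]
        ring

end CubicElt

/-- The value at `x` of the polynomial with the given list of coefficients. -/
def horner {A : Type*} [CommRing A] (x : A) (l : List ℤ) : A :=
  l.foldr (fun (c : ℤ) (y : A) => c + x * y) 0

lemma horner_nil {A : Type*} [CommRing A] (x : A) : horner x [] = 0 := rfl

lemma horner_cons {A : Type*} [CommRing A] (x : A) (c : ℤ) (l : List ℤ) :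
    horner x (c :: l) = c + x * horner x l := rfl

lemma map_horner {A B : Type*} [CommRing A] [CommRing B] (f : A →+* B) (x : A) (l : List ℤ) :
    f (horner x l) = horner (f x) l := by
  induction l with
  | nil => simp [horner_nil]
  | cons c l ih => rw [horner_cons, horner_cons, map_add, map_mul, ih, map_intCast]

/-- The element of `ℤ[tau] + ℤ[tau] sigma + ℤ[tau] tau₂` with the given coefficients. -/
def combination (d : Fin 3 → List ℤ) : ℤ⸨X⸩ :=
  horner tau (d 0) + horner tau (d 1) * sigma + horner tau (d 2) * tau₂

namespace CubicElt

/-- The representative of the product of `denomⁿ` with a polynomial in `tau` of degree at most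
`n`. -/
def hornerCode : ℕ → List ℤ → CubicElt
  | _, [] => (0 : ℤ)
  | n, c :: l => denomCode ^ n * (c : ℤ) + tauCode * hornerCode (n - 1) l

lemma eval_hornerCode {n : ℕ} {l : List ℤ} (h : l.length ≤ n + 1) :
    (hornerCode n l).eval = denom ^ n * horner tau l := by
  induction l generalizing n with
  | nil => simp [hornerCode, horner_nil, eval_intCast]
  | cons c l ih =>
    rw [hornerCode, horner_cons, eval_add, eval_mul, eval_mul, eval_pow, eval_intCast,
      eval_denomCode, eval_tauCode]
    rcases n with - | n
    · obtain rfl : l = [] := by simpa using h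
      simp [hornerCode, horner_nil, eval_intCast]
    · rw [Nat.add_sub_cancel, ih (by simpa using h)]
      ring

/-- The representative of the product of `denom⁷` with a `combination` of coefficients of degree at
most `5`. -/
def combinationCode (d : Fin 3 → List ℤ) : CubicElt :=
  hornerCode 5 (d 0) * denomCode ^ 2 + hornerCode 5 (d 1) * sigmaCode * denomCode +
    hornerCode 5 (d 2) * tau₂Code

lemma eval_combinationCode {d : Fin 3 → List ℤ} (h : ∀ i, (d i).length ≤ 6) :
    (combinationCode d).eval = denom ^ 7 * combination d := by
  simp only [combinationCode, combination, eval_add, eval_mul, eval_pow, eval_hornerCode (h _),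
    eval_denomCode, eval_sigmaCode, eval_tau₂Code]
  ring

end CubicElt

open CubicElt

lemma component_mul_tau_of_isZero {j k : ℕ} {d : Fin 3 → List ℤ} (hd : ∀ i, (d i).length ≤ 6)
    (h : (componentCode j k * (tauCode * denomCode ^ 6) -
      scaleCode j k * combinationCode d).isZero = true) :
    component (0 : ZMod 7) (xi₂ ^ j * xi ^ k) * tau = combination d := by
  have hzero := eval_eq_zero_of_isZero h
  simp only [eval_sub, eval_mul, eval_pow, eval_componentCode, eval_scaleCode, eval_tauCode,
    eval_denomCode, eval_combinationCode hd] at hzero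
  refine mul_left_cancel₀ (mul_ne_zero (scale_ne_zero j k) (pow_ne_zero 7 denom_ne_zero)) ?_
  linear_combination hzero

lemma component_mul_tau_sq_of_isZero {j k : ℕ} {d : Fin 3 → List ℤ} (hd : ∀ i, (d i).length ≤ 6)
    (h : (componentCode j k * (tauCode ^ 2 * denomCode ^ 7) -
      scaleCode j k * combinationCode d * tau₂Code).isZero = true) :
    component (0 : ZMod 7) (xi₂ ^ j * xi ^ k) * tau ^ 2 = tau₂ * combination d := by
  have hzero := eval_eq_zero_of_isZero h
  simp only [eval_sub, eval_mul, eval_pow, eval_componentCode, eval_scaleCode, eval_tauCode,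
    eval_tau₂Code, eval_denomCode, eval_combinationCode hd] at hzero
  refine mul_left_cancel₀ (mul_ne_zero (scale_ne_zero j k) (pow_ne_zero 9 denom_ne_zero)) ?_
  linear_combination hzero

lemma component_sub_mul_tau_of_isZero {j k i m : ℕ} {d : Fin 3 → List ℤ}
    (hd : ∀ i, (d i).length ≤ 6)
    (h : ((componentCode j k * (denomCode * (8 : ℤ) + tauCode - sigmaCode) * scaleCode i m -
      componentCode i m * denomCode * scaleCode j k) * (tauCode * denomCode ^ 5) -
      scaleCode j k * scaleCode i m * (combinationCode d * (7 : ℤ))).isZero = true) :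
    (phiProd * component (0 : ZMod 7) (xi₂ ^ j * xi ^ k) -
      component (0 : ZMod 7) (xi₂ ^ i * xi ^ m)) * tau = 7 * combination d := by
  have hzero := eval_eq_zero_of_isZero h
  simp only [eval_sub, eval_add, eval_mul, eval_pow, eval_componentCode, eval_scaleCode,
    eval_tauCode, eval_sigmaCode, eval_denomCode, eval_intCast, eval_combinationCode hd] at hzero
  push_cast at hzero
  refine mul_left_cancel₀ (mul_ne_zero (mul_ne_zero (scale_ne_zero j k) (scale_ne_zero i m))
    (pow_ne_zero 7 denom_ne_zero)) ?_
  rw [phiProd_eq]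
  linear_combination hzero

/-- The element of `ℤ[t⁻¹] t + ℤ[t⁻¹] P + ℤ[t⁻¹] p₁` with the given coefficients. -/
def expansion (P : ℤ⸨X⸩) (d : Fin 3 → List ℤ) : ℤ⸨X⸩ :=
  horner (↑tUnit⁻¹) (d 0) * tUnit + horner (↑tUnit⁻¹) (d 1) * P + horner (↑tUnit⁻¹) (d 2) * p1

/-- The coefficients of the fundamental relations for `φ = 1` and `K = 6`: the expansions of
`U₇ (φ xiᴷ⁻ⁿ)` for `0 ≤ n ≤ 6`, in the sense of `expansion`. -/
def relationsOne : Fin 7 → Fin 3 → List ℤ :=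
  ![![[0, 49], [], []],
    ![[0, 49, 10], [], []],
    ![[0, -7, -4], [], []],
    ![[0, -7], [], []],
    ![[0, 1], [], []],
    ![[0, -1], [], []],
    ![[0, 1], [], []]]

/-- The analogue of `relationsOne` for `φ = p₀` and `K = 13`. -/
def relationsP0 : Fin 7 → Fin 3 → List ℤ :=
  ![![[0, 117649, 40817, 3136, -105], [0, -16807, -8232, -910, -7], [0, 4802, 735, 7]],
    ![[0, -16807, -2401, 0, 64], [0, 2401], []],
    ![[0, 16807, 3430, 273, 3], [0, -2401, -294, 22], [0, 0, -28]],
    ![[0, 2401, 343], [0, -343], []],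
    ![[0, -2401, -441, 3], [0, 343, 84, 1], [0, -49, -1]],
    ![[0, -343, -49, -12], [0, 49], []],
    ![[0, 0, -7], [0, 0, -6], [0, 7]]]

/-- The analogue of `relationsOne` for `φ = p₁` and `K = 10`. -/
def relationsP1 : Fin 7 → Fin 3 → List ℤ :=
  ![![[-705894, -201684, -16807, -280], [100842, 28812, 2009, 8], [-14406, -1715, -7]],
    ![[117649, 40817, 3920, 35], [-16807, -5831, -532, -1], [2401, 441, 1]],
    ![[-16807, -2401, 0, 24], [2401, 343], [-343]],
    ![[16807, 3430, 182], [-2401, -490, -10], [343, 7]],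
    ![[2401, 343], [-343, -49], [49]],
    ![[-2401, -441, -8], [343, 63], [-49]],
    ![[-343, -49, -4], [49, 7], [-7]]]

/-- The analogue of `relationsOne` for `φ = A₃` and `K = 16`. -/
def relationsA : Fin 7 → Fin 3 → List ℤ :=
  ![![[0, 2401, 490, -6], [0, -686, -112], [0, 98, 28]],
    ![[0, -343, -245], [0, 0, 35], [0, 0, -5]],
    ![[0, -343, 14], [0, 98, 3], [0, 7]],
    ![[0, 49], [], []],
    ![[0, -49, 1], [0, 7], [0, -4]],
    ![[0, 42], [0, -7], [0, 1]],
    ![[0, -7], [], []]]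

/-- The analogue of `relationsOne` for `φ = A₃ p₀` and `K = 23`. -/
def relationsAP0 : Fin 7 → Fin 3 → List ℤ :=
  ![![[0, -823543, -117649, 14406, 5439, 6], [0, 117649, 100842, 10290, -525],
      [0, 0, 28812, 2940, 93]],
    ![[0, 823543, 184877, 14406, -490], [0, -117649, -38416, -4998, -84], [0, 0, -6860, -1078, -4]],
    ![[0, 117649, 16807, -686, -14], [0, -16807, -2401, -147, 1], [0, 16807, 2401, 63]],
    ![[0, -117649, -26411, -784, -35], [0, 16807, 2058, -77], [0, -4802, -784, 70]],
    ![[0, -16807, -2401, -784], [0, 2401, 0, 112], [0, 0, 0, -16]],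
    ![[0, 0, 0, 161], [0, 0, 343, 8], [0, -343, 56, 1]],
    ![[0, 2401, 343], [0, -343], []]]

/-- The analogue of `relationsOne` for `φ = A₃ p₁` and `K = 20`. -/
def relationsAP1 : Fin 7 → Fin 3 → List ℤ :=
  ![![[5764801, 2235331, 259308, 6174, 49], [-823543, -319333, -32242, -147],
      [117649, 28812, 1176, -154]],
    ![[-823543, -117649, 0, 2205], [117649, 16807, 0, -315], [-16807, 0, 0, 45]],
    ![[823543, 184877, 13034, -98], [-117649, -26411, -1862, -14], [16807, 1372, -28, -4]],
    ![[117649, 16807], [-16807, -2401], [2401]],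
    ![[-117649, -26411, -980, -7], [16807, 3773, 91], [-2401, -196, 22]],
    ![[-16807, -2401, -392], [2401, 343, 56], [-343, 0, -8]],
    ![[0, 0, 49], [], [0, 0, 1]]]

lemma component_one_mul_tau (n : Fin 7) :
    component (0 : ZMod 7) (xi₂ ^ 0 * xi ^ (6 - n : ℕ)) * tau = combination (relationsOne n) := by
  apply component_mul_tau_of_isZero <;> revert n <;> decide +kernel

lemma component_p0_mul_tau (n : Fin 7) :
    (phiProd * component (0 : ZMod 7) (xi₂ ^ 7 * xi ^ (6 - n : ℕ)) -
      component (0 : ZMod 7) (xi₂ ^ 0 * xi ^ (13 - n : ℕ))) * tau =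
        7 * combination (relationsP0 n) := by
  apply component_sub_mul_tau_of_isZero <;> revert n <;> decide +kernel

lemma component_p1_mul_tau_sq (n : Fin 7) :
    component (0 : ZMod 7) (xi₂ ^ 4 * xi ^ (6 - n : ℕ)) * tau ^ 2 =
      tau₂ * combination (relationsP1 n) := by
  apply component_mul_tau_sq_of_isZero <;> revert n <;> decide +kernel

lemma component_a₃_mul_tau (n : Fin 7) :
    component (0 : ZMod 7) (xi₂ ^ 3 * xi ^ (6 - n : ℕ)) * tau = combination (relationsA n) := by
  apply component_mul_tau_of_isZero <;> revert n <;> decide +kernel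

lemma component_a₃_p0_mul_tau (n : Fin 7) :
    (phiProd * component (0 : ZMod 7) (xi₂ ^ 10 * xi ^ (6 - n : ℕ)) -
      component (0 : ZMod 7) (xi₂ ^ 3 * xi ^ (13 - n : ℕ))) * tau =
        7 * combination (relationsAP0 n) := by
  apply component_sub_mul_tau_of_isZero <;> revert n <;> decide +kernel

lemma component_a₃_p1_mul_tau_sq (n : Fin 7) :
    component (0 : ZMod 7) (xi₂ ^ 7 * xi ^ (6 - n : ℕ)) * tau ^ 2 =
      tau₂ * combination (relationsAP1 n) := by
  apply component_mul_tau_sq_of_isZero <;> revert n <;> decide +kernel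

end FundamentalRelations

section AtkinUExpansions

lemma xi_pow_mul_xiInv_pow {k n : ℕ} (h : n ≤ k) : xi ^ k * xiInv ^ n = xi ^ (k - n) := by
  obtain ⟨j, rfl⟩ := Nat.exists_eq_add_of_le h
  rw [Nat.add_sub_cancel_left, pow_add, mul_right_comm, ← mul_pow, mul_comm xi, xiInv_mul_xi,
    one_pow, one_mul]

lemma xiInv_pow_mul_xi_pow_mul_xiInv_pow (j : ℕ) {k n : ℕ} (h : n ≤ k) :
    xiInv ^ j * xi ^ (j + k) * xiInv ^ n = xi ^ (k - n) := by
  rw [pow_add, ← mul_assoc, ← mul_pow, xiInv_mul_xi, one_pow, one_mul, xi_pow_mul_xiInv_pow h]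

lemma tau_mem_residueClass : tau ∈ residueClass (0 : ZMod 7) := dilate_self_mem_residueClass _

lemma tau₂_mem_residueClass : tau₂ ∈ residueClass (0 : ZMod 7) :=
  dilate_mem_residueClass 2 tau_mem_residueClass

variable {P : ℤ⸨X⸩}

lemma IsPZero.phiProd_mem_residueClass (hP : IsPZero P) : phiProd ∈ residueClass (0 : ZMod 7) := by
  rw [phiProd_eq, ← hP.dilate_mul_tau, tau, ← map_mul, ← map_ofNat (dilate 7) 8, ← map_add,
    ← map_sub]
  exact dilate_self_mem_residueClass _

lemma eq_expansion (hP : IsPZero P) {g : ℤ⸨X⸩} {d : Fin 3 → List ℤ}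
    (h : dilate 7 g * tau = combination d) : g = expansion P d := by
  refine dilate_injective 7 (mul_right_cancel₀ tau_ne_zero ?_)
  have ht : dilate 7 (tUnit : ℤ⸨X⸩) * tau = 1 := by
    rw [tau, ← map_mul, Units.mul_inv, map_one]
  rw [h, expansion, map_add, map_add, map_mul, map_mul, map_mul, map_horner, map_horner, map_horner,
    ← tau, combination, ← hP.dilate_mul_tau, ← dilate_p1_mul_tau]
  linear_combination -horner tau (d 0) * ht

lemma atkinU_eq_expansion (hP : IsPZero P) {f : ℤ⸨X⸩} {d : Fin 3 → List ℤ}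
    (h : component (0 : ZMod 7) f * tau = combination d) : atkinU 7 f = expansion P d :=
  eq_expansion hP (by rwa [dilate_atkinU])

lemma atkinU_eq_expansion_of_tau₂_mul (hP : IsPZero P) {f g : ℤ⸨X⸩} {d : Fin 3 → List ℤ}
    (hfg : tau₂ * f = tau * g)
    (h : component (0 : ZMod 7) g * tau ^ 2 = tau₂ * combination d) :
    atkinU 7 f = expansion P d := by
  refine atkinU_eq_expansion hP (mul_left_cancel₀ tau₂_ne_zero ?_)
  have hcomp := congrArg (component (0 : ZMod 7)) hfg
  rw [component_mul tau₂_mem_residueClass, component_mul tau_mem_residueClass, sub_zero] at hcomp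
  linear_combination h + tau * hcomp

lemma atkinU_eq_expansion_of_seven_mul (hP : IsPZero P) {f g k : ℤ⸨X⸩} {d : Fin 3 → List ℤ}
    (hfg : 7 * f = phiProd * g - k)
    (h : (phiProd * component (0 : ZMod 7) g - component (0 : ZMod 7) k) * tau =
      7 * combination d) : atkinU 7 f = expansion P d := by
  refine atkinU_eq_expansion hP
    (mul_left_cancel₀ (OfNat.ofNat_ne_zero 7 : (7 : ℤ⸨X⸩) ≠ 0) ?_)
  have hcomp := congrArg (component (0 : ZMod 7)) hfg
  have hseven : component (0 : ZMod 7) (7 * f) = 7 * component (0 : ZMod 7) f := by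
    simpa using map_nsmul (component (0 : ZMod 7)) 7 f
  rw [hseven, map_sub, component_mul hP.phiProd_mem_residueClass, sub_zero] at hcomp
  linear_combination h + tau * hcomp

lemma atkinU_xi (hP : IsPZero P) (n : Fin 7) :
    atkinU 7 (1 * xi ^ 6 * xiInv ^ (n : ℕ)) = expansion P (relationsOne n) := by
  refine atkinU_eq_expansion hP ?_
  rw [one_mul, xi_pow_mul_xiInv_pow (by lia), ← component_one_mul_tau, pow_zero, one_mul]

lemma atkinU_p0_xi (hP : IsPZero P) (n : Fin 7) :
    atkinU 7 (P * xi ^ 13 * xiInv ^ (n : ℕ)) = expansion P (relationsP0 n) := by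
  refine atkinU_eq_expansion_of_seven_mul hP ?_ (component_p0_mul_tau n)
  rw [← xi_pow_mul_xiInv_pow (k := 13) (by lia), ← xiInv_pow_mul_xi_pow_mul_xiInv_pow 7 (by lia)]
  linear_combination xi ^ 13 * xiInv ^ (n : ℕ) * hP.one_add_seven_mul

lemma atkinU_p1_xi (hP : IsPZero P) (n : Fin 7) :
    atkinU 7 (p1 * xi ^ 10 * xiInv ^ (n : ℕ)) = expansion P (relationsP1 n) := by
  refine atkinU_eq_expansion_of_tau₂_mul hP ?_ (component_p1_mul_tau_sq n)
  rw [← xiInv_pow_mul_xi_pow_mul_xiInv_pow 4 (by lia)]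
  linear_combination xi ^ 10 * xiInv ^ (n : ℕ) * p1_mul_tau₂

lemma atkinU_a₃_xi (hP : IsPZero P) (n : Fin 7) :
    atkinU 7 (a₃ * xi ^ 16 * xiInv ^ (n : ℕ)) = expansion P (relationsA n) := by
  refine atkinU_eq_expansion hP ?_
  rw [← component_a₃_mul_tau, ← xiInv_pow_mul_xi_pow_mul_xiInv_pow 10 (by lia), a₃]
  simp only [mul_assoc]

lemma atkinU_a₃_p0_xi (hP : IsPZero P) (n : Fin 7) :
    atkinU 7 (a₃ * P * xi ^ 23 * xiInv ^ (n : ℕ)) = expansion P (relationsAP0 n) := by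
  refine atkinU_eq_expansion_of_seven_mul hP ?_ (component_a₃_p0_mul_tau n)
  rw [← xiInv_pow_mul_xi_pow_mul_xiInv_pow 10 (k := 13) (by lia),
    ← xiInv_pow_mul_xi_pow_mul_xiInv_pow 17 (by lia), a₃]
  linear_combination xi₂ ^ 3 * xiInv ^ 10 * xi ^ 23 * xiInv ^ (n : ℕ) * hP.one_add_seven_mul

lemma atkinU_a₃_p1_xi (hP : IsPZero P) (n : Fin 7) :
    atkinU 7 (a₃ * p1 * xi ^ 20 * xiInv ^ (n : ℕ)) = expansion P (relationsAP1 n) := by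
  refine atkinU_eq_expansion_of_tau₂_mul hP ?_ (component_a₃_p1_mul_tau_sq n)
  rw [← xiInv_pow_mul_xi_pow_mul_xiInv_pow 14 (by lia), a₃]
  linear_combination xi₂ ^ 3 * xiInv ^ 10 * xi ^ 20 * xiInv ^ (n : ℕ) * p1_mul_tau₂

end AtkinUExpansions

/-! ### Lattices of bounded `7`-adic weight -/

section Lattice

/-- The basis `1, P, p₁` over `ℤ[t, t⁻¹]` in which the tower is expanded. -/
def basisElt (P : ℤ⸨X⸩) : Fin 3 → ℤ⸨X⸩ := ![1, P, p1]

/-- The multiple `7ᴺ bᵢ tᵐ` of a basis element. -/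
def generator (P : ℤ⸨X⸩) (i : Fin 3) (m : ℤ) (N : ℕ) : ℤ⸨X⸩ :=
  7 ^ N * basisElt P i * (tUnit ^ m : ℤ⸨X⸩ˣ)

/-- The group spanned by the `7ᴺ bᵢ tᵐ` with `7 m - k ≥ sᵢ` and `N ≥ (7 m - k + eᵢ) / 4`. In all
applications `bᵢ tᵐ` is a term of `U₇ (φ tᵏ)`; each further power of `t` costs `7/4` powers
of `7`. -/
def lattice (P : ℤ⸨X⸩) (e s : Fin 3 → ℤ) (k : ℤ) : AddSubgroup ℤ⸨X⸩ :=
  AddSubgroup.closure {x | ∃ (i : Fin 3) (m : ℤ) (N : ℕ),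
    7 * m - k + e i ≤ 4 * N ∧ s i ≤ 7 * m - k ∧ generator P i m N = x}

variable {P : ℤ⸨X⸩} {e s : Fin 3 → ℤ} {k : ℤ}

lemma generator_natCast (i : Fin 3) (n N : ℕ) :
    generator P i n N = 7 ^ N * (basisElt P i * tUnit ^ n) := by
  rw [generator, zpow_natCast, Units.val_pow_eq_pow_val, mul_assoc]

lemma pow_mul_tUnit_zpow_mul_generator (i : Fin 3) (m j : ℤ) (N r : ℕ) :
    7 ^ r * ↑(tUnit ^ j) * generator P i m N = generator P i (m + j) (N + r) := by
  rw [generator, generator, zpow_add, Units.val_mul, pow_add]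
  ring

lemma generator_mem_lattice {i : Fin 3} {m : ℤ} {N : ℕ} (he : 7 * m - k + e i ≤ 4 * N)
    (hs : s i ≤ 7 * m - k) : generator P i m N ∈ lattice P e s k :=
  AddSubgroup.subset_closure ⟨i, m, N, he, hs, rfl⟩

lemma map_mem_of_mem_lattice (f : ℤ⸨X⸩ →+ ℤ⸨X⸩) {S : AddSubgroup ℤ⸨X⸩}
    (hf : ∀ i (m : ℤ) (N : ℕ), 7 * m - k + e i ≤ 4 * N → s i ≤ 7 * m - k →
      f (generator P i m N) ∈ S) {x : ℤ⸨X⸩} (hx : x ∈ lattice P e s k) : f x ∈ S := by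
  have hle : lattice P e s k ≤ S.comap f := by
    refine (AddSubgroup.closure_le _).2 ?_
    rintro _ ⟨i, m, N, he, hs, rfl⟩
    exact hf i m N he hs
  exact hle hx

lemma intCast_mul_mem (S : AddSubgroup ℤ⸨X⸩) (a : ℤ) {x : ℤ⸨X⸩} (hx : x ∈ S) :
    (a : ℤ⸨X⸩) * x ∈ S := by
  rw [← zsmul_eq_mul]
  exact S.zsmul_mem hx a

lemma pow_mul_tUnit_zpow_mul_mem_lattice {l : ℤ} (r : ℕ) (j : ℤ) (he : 7 * j + k - l ≤ 4 * r)
    (hs : l ≤ 7 * j + k) {x : ℤ⸨X⸩} (hx : x ∈ lattice P e s k) :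
    7 ^ r * ↑(tUnit ^ j) * x ∈ lattice P e s l := by
  refine map_mem_of_mem_lattice (AddMonoidHom.mulLeft (7 ^ r * (tUnit ^ j : ℤ⸨X⸩ˣ)))
    (S := lattice P e s l) (fun i m N hme hms => ?_) hx
  rw [AddMonoidHom.coe_mulLeft, pow_mul_tUnit_zpow_mul_generator]
  exact generator_mem_lattice (by push_cast; linarith) (by linarith)

/-- Sufficient condition for the terms `aⱼ bᵢ tᵐ⁻ʲ` with coefficients `aⱼ` from the given list to
lie in `lattice P e s k`, where `e`, `s` stand for `e i`, `s i`. -/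
abbrev AreAdmissible (e s k m : ℤ) (l : List ℤ) : Prop :=
  ∀ j : Fin l.length, l.get j = 0 ∨ s ≤ 7 * (m - j) - k ∧
    (7 : ℤ) ^ ((7 * (m - j) - k + e + 3) / 4).toNat ∣ l.get j

lemma horner_mul_mem_lattice (i : Fin 3) {m : ℤ} {l : List ℤ}
    (h : AreAdmissible (e i) (s i) k m l) :
    horner (↑tUnit⁻¹) l * basisElt P i * (tUnit ^ m : ℤ⸨X⸩ˣ) ∈ lattice P e s k := by
  induction l generalizing m with
  | nil => simp [horner_nil]
  | cons a l ih =>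
    have hsplit : horner (↑tUnit⁻¹) (a :: l) * basisElt P i * (tUnit ^ m : ℤ⸨X⸩ˣ) =
        a * basisElt P i * (tUnit ^ m : ℤ⸨X⸩ˣ) +
          horner (↑tUnit⁻¹) l * basisElt P i * (tUnit ^ (m - 1) : ℤ⸨X⸩ˣ) := by
      rw [horner_cons, zpow_sub_one, Units.val_mul]
      ring
    obtain ⟨hhead, htail⟩ := Fin.forall_fin_succ.1 h
    rw [hsplit]
    refine add_mem ?_ (ih fun j => ?_)
    · rcases hhead with h0 | ⟨hs, b, hb⟩
      · obtain rfl : a = 0 := h0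
        simp
      · simp only [List.get_eq_getElem, Fin.val_zero, List.getElem_cons_zero, Nat.cast_zero,
          sub_zero] at hs hb
        have hterm : a * basisElt P i * (tUnit ^ m : ℤ⸨X⸩ˣ) =
            b * generator P i m ((7 * m - k + e i + 3) / 4).toNat := by
          rw [hb, generator]
          push_cast
          ring
        rw [hterm]
        refine intCast_mul_mem _ b (generator_mem_lattice ?_ hs)
        have := Int.self_le_toNat ((7 * m - k + e i + 3) / 4)
        lia
    · simpa [sub_sub, add_comm] using htail j

lemma expansion_mem_lattice {d : Fin 3 → List ℤ}
    (h : ∀ i, AreAdmissible (e i) (s i) k (![1, 0, 0] i) (d i)) :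
    expansion P d ∈ lattice P e s k := by
  have hsum := add_mem (add_mem (horner_mul_mem_lattice (P := P) 0 (h 0))
    (horner_mul_mem_lattice 1 (h 1))) (horner_mul_mem_lattice 2 (h 2))
  simpa [basisElt, expansion] using hsum

end Lattice

section Recurrence

/-- The coefficients of `xiInv` in its equation of degree `7` over `ℤ[t(q⁷)]`. -/
def recurrenceCoeff : Fin 7 → ℤ⸨X⸩ :=
  ![tUnit ^ 2, 7 * tUnit ^ 2, 21 * tUnit ^ 2, 49 * tUnit ^ 2, 147 * tUnit ^ 2 + 7 * tUnit,
    343 * tUnit ^ 2 + 35 * tUnit, 343 * tUnit ^ 2 + 49 * tUnit]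

lemma xiInv_pow_seven :
    xiInv ^ 7 = ∑ r : Fin 7, dilate 7 (recurrenceCoeff r) * xiInv ^ (r : ℕ) := by
  have ht : dilate 7 (tUnit : ℤ⸨X⸩) * tau = 1 := by
    rw [tau, ← map_mul, Units.mul_inv, map_one]
  have hxi (n : ℕ) : xiInv ^ n * xi ^ n = 1 := by rw [← mul_pow, xiInv_mul_xi, one_pow]
  have hmod : xiInv ^ 7 * tau ^ 2 = 1 + 7 * xiInv + 21 * xiInv ^ 2 + 49 * xiInv ^ 3 +
      147 * xiInv ^ 4 + 343 * xiInv ^ 5 + 343 * xiInv ^ 6 +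
      tau * (7 * xiInv ^ 4 + 35 * xiInv ^ 5 + 49 * xiInv ^ 6) := by
    linear_combination xiInv ^ 7 * modular_equation + hxi 7 + 7 * xiInv * hxi 6 +
      21 * xiInv ^ 2 * hxi 5 + 49 * xiInv ^ 3 * hxi 4 +
      (147 * xiInv ^ 4 + 7 * tau * xiInv ^ 4) * hxi 3 +
      (343 * xiInv ^ 5 + 35 * tau * xiInv ^ 5) * hxi 2 +
      (343 * xiInv ^ 6 + 49 * tau * xiInv ^ 6) * hxi 1
  have hsum : ∑ r : Fin 7, dilate 7 (recurrenceCoeff r) * xiInv ^ (r : ℕ) =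
      dilate 7 tUnit ^ 2 * (1 + 7 * xiInv + 21 * xiInv ^ 2 + 49 * xiInv ^ 3 + 147 * xiInv ^ 4 +
        343 * xiInv ^ 5 + 343 * xiInv ^ 6) +
      dilate 7 tUnit * (7 * xiInv ^ 4 + 35 * xiInv ^ 5 + 49 * xiInv ^ 6) := by
    simp only [Fin.sum_univ_seven, recurrenceCoeff, Matrix.cons_val, map_add (dilate 7),
      map_mul (dilate 7), map_pow (dilate 7), map_ofNat (dilate 7)]
    norm_num
    ring
  rw [hsum]
  generalize dilate 7 (tUnit : ℤ⸨X⸩) = t₇ at ht ⊢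
  linear_combination t₇ ^ 2 * hmod + (-xiInv ^ 7 * (t₇ * tau + 1) +
    t₇ * (7 * xiInv ^ 4 + 35 * xiInv ^ 5 + 49 * xiInv ^ 6)) * ht

lemma atkinU_mul_xiInv_pow_add_seven (ψ : ℤ⸨X⸩) (n : ℕ) : atkinU 7 (ψ * xiInv ^ (n + 7)) =
    ∑ r : Fin 7, recurrenceCoeff r * atkinU 7 (ψ * xiInv ^ (n + r)) := by
  rw [pow_add, xiInv_pow_seven, Finset.mul_sum, Finset.mul_sum, map_sum]
  refine Finset.sum_congr rfl fun r _ => ?_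
  rw [← atkinU_dilate_mul, pow_add]
  congr 1
  ring

variable {P : ℤ⸨X⸩} {e s : Fin 3 → ℤ} {k : ℤ}

lemma recurrenceCoeff_mul_mem_lattice (r : Fin 7) {x : ℤ⸨X⸩} (hx : x ∈ lattice P e s (k + 2 * r)) :
    recurrenceCoeff r * x ∈ lattice P e s (k + 14) := by
  have hsq (a : ℤ) (v : ℕ) (hv : (r : ℤ) ≤ 2 * v) :
      a * (7 ^ v * (tUnit : ℤ⸨X⸩) ^ 2 * x) ∈ lattice P e s (k + 14) := by
    have hmem := pow_mul_tUnit_zpow_mul_mem_lattice v 2 (l := k + 14) (by lia) (by lia) hx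
    rw [zpow_ofNat, Units.val_pow_eq_pow_val] at hmem
    exact intCast_mul_mem _ a hmem
  have hlin (a : ℤ) (v : ℕ) (hv : 2 * (r : ℤ) ≤ 4 * v + 7) (hr : 4 ≤ (r : ℤ)) :
      a * (7 ^ v * (tUnit : ℤ⸨X⸩) * x) ∈ lattice P e s (k + 14) := by
    have hmem := pow_mul_tUnit_zpow_mul_mem_lattice v 1 (l := k + 14) (by lia) (by lia) hx
    rw [zpow_one] at hmem
    exact intCast_mul_mem _ a hmem
  fin_cases r
  on_goal 1 => convert hsq 1 0 (by simp) using 1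
  on_goal 2 => convert hsq 1 1 (by simp) using 1
  on_goal 3 => convert hsq 3 1 (by simp) using 1
  on_goal 4 => convert hsq 1 2 (by simp) using 1
  on_goal 5 => convert add_mem (hsq 3 2 (by simp)) (hlin 1 1 (by simp) (by simp)) using 1
  on_goal 6 => convert add_mem (hsq 1 3 (by simp)) (hlin 5 1 (by simp) (by simp)) using 1
  on_goal 7 => convert add_mem (hsq 1 3 (by simp)) (hlin 1 2 (by simp) (by simp)) using 1
  all_goals
    dsimp [recurrenceCoeff]
    push_cast
    ring

lemma atkinU_mul_xiInv_pow_mem_lattice {ψ : ℤ⸨X⸩}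
    (h : ∀ n : Fin 7, atkinU 7 (ψ * xiInv ^ (n : ℕ)) ∈ lattice P e s (k + 2 * n)) (n : ℕ) :
    atkinU 7 (ψ * xiInv ^ n) ∈ lattice P e s (k + 2 * n) := by
  induction n using Nat.strong_induction_on with
  | _ n ih =>
    rcases Nat.lt_or_ge n 7 with hn | hn
    · exact h ⟨n, hn⟩
    · obtain ⟨n, rfl⟩ := Nat.exists_eq_add_of_le' hn
      rw [atkinU_mul_xiInv_pow_add_seven, show k + 2 * (n + 7 : ℕ) = k + 2 * n + 14 by lia]
      refine sum_mem fun r _ => recurrenceCoeff_mul_mem_lattice r ?_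
      convert ih (n + r) (by lia) using 1
      push_cast
      ring_nf

lemma atkinU_mul_tUnit_pow_mem_lattice {φ : ℤ⸨X⸩} (K : ℕ) {d : Fin 7 → Fin 3 → List ℤ}
    (hrel : ∀ n : Fin 7, atkinU 7 (φ * xi ^ K * xiInv ^ (n : ℕ)) = expansion P (d n))
    (hd : ∀ (n : Fin 7) (i : Fin 3),
      AreAdmissible (e i) (s i) (-2 * K + 2 * n) (![1, 0, 0] i) (d n i)) (n : ℕ) :
    atkinU 7 (φ * tUnit ^ n) ∈ lattice P e s n := by
  have hfamily := atkinU_mul_xiInv_pow_mem_lattice (P := P)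
    (fun r => hrel r ▸ expansion_mem_lattice (hd r)) (4 * n + K)
  have ht : φ * (tUnit : ℤ⸨X⸩) ^ n =
      dilate 7 (↑tUnit⁻¹ ^ n) * (φ * xi ^ K * xiInv ^ (4 * n + K)) := by
    have hxi : xi ^ K * xiInv ^ K = 1 := by
      rw [xi_pow_mul_xiInv_pow le_rfl, Nat.sub_self, pow_zero]
    rw [map_pow, ← tau, tUnit_eq, mul_pow, ← pow_mul, pow_add]
    linear_combination (-φ * xiInv ^ (4 * n) * tau ^ n) * hxi
  have hmem := pow_mul_tUnit_zpow_mul_mem_lattice 0 (-n) (l := n) (by push_cast; lia)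
    (by push_cast; lia) hfamily
  rw [ht, atkinU_dilate_mul]
  simpa using hmem

end Recurrence

/-! ### The tower -/

section Tower

variable {P : ℤ⸨X⸩}

/-- The lattice which contains the members of the tower of odd index, up to the power of `7` carried
by the index. -/
def oddLattice (P : ℤ⸨X⸩) : AddSubgroup ℤ⸨X⸩ := lattice P ![-19, -16, -19] ![21, 14, 21] 0

/-- The lattice which contains the members of the tower of even index, up to the power of `7`
carried by the index. -/
def evenLattice (P : ℤ⸨X⸩) : AddSubgroup ℤ⸨X⸩ := lattice P ![-10, -7, -10] ![7, 0, 7] 0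

lemma atkinU_basisElt_mem_lattice (hP : IsPZero P) (i : Fin 3) (n : ℕ) :
    atkinU 7 (basisElt P i * tUnit ^ n) ∈ lattice P ![-4, -1, -4] ![0, -3, 4] n := by
  fin_cases i
  · exact atkinU_mul_tUnit_pow_mem_lattice 6 (atkinU_xi hP) (by decide +kernel) n
  · exact atkinU_mul_tUnit_pow_mem_lattice 13 (atkinU_p0_xi hP) (by decide +kernel) n
  · exact atkinU_mul_tUnit_pow_mem_lattice 10 (atkinU_p1_xi hP) (by decide +kernel) n

lemma atkinU_a₃_mul_basisElt_mem_lattice (hP : IsPZero P) (i : Fin 3) (n : ℕ) :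
    atkinU 7 (a₃ * (basisElt P i * tUnit ^ n)) ∈
      lattice P ![-18, -15, -18] ![17, 14, ![15, 15, 14] i] n := by
  rw [← mul_assoc]
  fin_cases i
  · have hone : a₃ * basisElt P 0 = a₃ := mul_one a₃
    change atkinU 7 (a₃ * basisElt P 0 * tUnit ^ n) ∈ lattice P ![-18, -15, -18] ![17, 14, 15] n
    rw [hone]
    exact atkinU_mul_tUnit_pow_mem_lattice 16 (atkinU_a₃_xi hP) (by decide +kernel) n
  · exact atkinU_mul_tUnit_pow_mem_lattice 23 (atkinU_a₃_p0_xi hP) (by decide +kernel) n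
  · exact atkinU_mul_tUnit_pow_mem_lattice 20 (atkinU_a₃_p1_xi hP) (by decide +kernel) n

lemma map_seven_pow_mul {R S : Type*} [Ring R] [Ring S] (f : R →+ S) (N : ℕ) (x : R) :
    f (7 ^ N * x) = 7 ^ N * f x := by
  simpa only [nsmul_eq_mul, Nat.cast_pow, Nat.cast_ofNat] using map_nsmul f (7 ^ N) x

lemma map_mem_of_map_basisElt_mem_lattice (f : ℤ⸨X⸩ →+ ℤ⸨X⸩) {e e' s' : Fin 3 → ℤ}
    {s : Fin 3 → Fin 3 → ℤ}
    (hf : ∀ i (n : ℕ), f (basisElt P i * tUnit ^ n) ∈ lattice P e (s i) n)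
    (hs' : ∀ i, 0 ≤ s' i) {S : AddSubgroup ℤ⸨X⸩}
    (hS : ∀ i (m : ℤ) (N : ℕ) j (m' : ℤ) (N' : ℕ), 7 * m + e' i ≤ 4 * N → s' i ≤ 7 * m →
      7 * m' - m + e j ≤ 4 * N' → s i j ≤ 7 * m' - m → generator P j m' (N' + N) ∈ S)
    {x : ℤ⸨X⸩} (hx : x ∈ lattice P e' s' 0) : f x ∈ S := by
  refine map_mem_of_mem_lattice f (fun i m N hme hms => ?_) hx
  rw [sub_zero] at hme hms
  obtain ⟨n, rfl⟩ := Int.eq_ofNat_of_zero_le (show 0 ≤ m by have := hs' i; lia)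
  rw [generator_natCast, map_seven_pow_mul]
  refine map_mem_of_mem_lattice (AddMonoidHom.mulLeft (7 ^ N)) (fun j m' N' hme' hms' => ?_)
    (hf i n)
  have hgen := pow_mul_tUnit_zpow_mul_generator (P := P) j m' 0 N' N
  rw [zpow_zero, Units.val_one, mul_one, add_zero] at hgen
  rw [AddMonoidHom.coe_mulLeft, hgen]
  exact hS i n N j m' N' hme hms hme' hms'

lemma atkinU_a₃_mem_oddLattice (hP : IsPZero P) : atkinU 7 a₃ ∈ oddLattice P := by
  have hmem := atkinU_a₃_mul_basisElt_mem_lattice hP 0 0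
  have hone : a₃ * (basisElt P 0 * (tUnit : ℤ⸨X⸩) ^ 0) = a₃ := by simp [basisElt]
  rw [hone] at hmem
  refine map_mem_of_mem_lattice (AddMonoidHom.id _) (fun i m N hme hms => ?_) hmem
  refine generator_mem_lattice ?_ ?_ <;> fin_cases i <;> simp at hme hms ⊢ <;> lia

lemma atkinU_a₃_mul_mem_oddLattice (hP : IsPZero P) {x : ℤ⸨X⸩} (hx : x ∈ evenLattice P) :
    atkinU 7 (a₃ * x) ∈ oddLattice P := by
  refine map_mem_of_map_basisElt_mem_lattice ((atkinU 7).comp (AddMonoidHom.mulLeft a₃))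
    (atkinU_a₃_mul_basisElt_mem_lattice hP) (by decide) ?_ hx
  intro i m N j m' N' hme hms hme' hms'
  refine generator_mem_lattice ?_ ?_ <;> fin_cases i <;> fin_cases j <;>
    simp at hme hms hme' hms' ⊢ <;> lia

lemma atkinU_mem_of_mem_oddLattice (hP : IsPZero P) {x : ℤ⸨X⸩} (hx : x ∈ oddLattice P) :
    atkinU 7 x ∈ (evenLattice P).map (AddMonoidHom.mulLeft 7) ⊔ AddSubgroup.zmultiples P := by
  refine map_mem_of_map_basisElt_mem_lattice (atkinU 7)
    (atkinU_basisElt_mem_lattice hP) (by decide) ?_ hx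
  intro i m N j m' N' hme hms hme' hms'
  by_cases hj : j = 1 ∧ m' = 0
  · obtain ⟨rfl, rfl⟩ := hj
    refine AddSubgroup.mem_sup_right (AddSubgroup.mem_zmultiples_iff.2 ⟨7 ^ (N' + N), ?_⟩)
    simp [generator, basisElt]
  · have hN : 1 ≤ N' + N := by
      fin_cases i <;> fin_cases j <;> simp at hj hme hms hme' hms' ⊢ <;> lia
    obtain ⟨M, hM⟩ := Nat.exists_eq_add_of_le' hN
    refine AddSubgroup.mem_sup_left ⟨generator P j m' M, generator_mem_lattice ?_ ?_, ?_⟩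
    · fin_cases i <;> fin_cases j <;> simp at hj hme hms hme' hms' ⊢ <;> lia
    · fin_cases i <;> fin_cases j <;> simp at hj hme hms hme' hms' ⊢ <;> lia
    · rw [hM, AddMonoidHom.coe_mulLeft, generator, generator, pow_succ']
      ring

lemma hasLeadingTerm_basisElt (hP : HasLeadingTerm 0 1 P) (i : Fin 3) :
    HasLeadingTerm (![0, 0, -1] i) 1 (basisElt P i) := by
  have hone : HasLeadingTerm 0 1 (1 : ℤ⸨X⸩) := by simpa using hasLeadingTerm_toLaurent 1
  have hp1 : HasLeadingTerm (-1) 1 p1 := by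
    simpa [p1] using (hasLeadingTerm_tUnit_inv.dilate 2).mul hasLeadingTerm_tUnit
  fin_cases i
  exacts [hone, hP, hp1]

lemma coeff_zero_of_mem_oddLattice (hP : HasLeadingTerm 0 1 P) {x : ℤ⸨X⸩}
    (hx : x ∈ oddLattice P) : x.coeff 0 = 0 := by
  have hle : oddLattice P ≤ (HahnSeries.coeff.addMonoidHom (0 : ℤ)).ker := by
    refine (AddSubgroup.closure_le _).2 ?_
    rintro _ ⟨i, m, N, -, hms, rfl⟩
    have hm : 2 ≤ m := by fin_cases i <;> simp at hms <;> lia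
    obtain ⟨n, rfl⟩ := Int.eq_ofNat_of_zero_le (zero_le_two.trans hm)
    have hcoeff : (basisElt P i * tUnit ^ n).coeff 0 = 0 := by
      refine ((hasLeadingTerm_basisElt hP i).mul (hasLeadingTerm_tUnit.pow n)).coeff_eq_zero ?_
      fin_cases i <;> simp at hm ⊢ <;> lia
    change HahnSeries.coeff.addMonoidHom (0 : ℤ) (generator P i n N) = 0
    rw [generator_natCast, map_seven_pow_mul]
    exact mul_eq_zero_of_right _ hcoeff
  exact hle hx

/-- The multiple of `P` left over by `atkinU_mem_of_mem_oddLattice` is divisible by `7`, because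
`U₇` preserves the constant coefficient, which vanishes on `oddLattice`. -/
lemma exists_mem_evenLattice_atkinU_eq (hP : IsPZero P) (hP0 : HasLeadingTerm 0 1 P) {x : ℤ⸨X⸩}
    (hx : x ∈ oddLattice P) : ∃ y ∈ evenLattice P, atkinU 7 x = 7 * y := by
  obtain ⟨_, ⟨y, hy, rfl⟩, _, ⟨d, rfl⟩, hsum⟩ :=
    AddSubgroup.mem_sup.1 (atkinU_mem_of_mem_oddLattice hP hx)
  change 7 * y + d • P = atkinU 7 x at hsum
  have hd : 7 * y.coeff 0 + d = 0 := by
    have hcoeff := congrArg (HahnSeries.coeff.addMonoidHom (0 : ℤ)) hsum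
    have hseven := map_seven_pow_mul (HahnSeries.coeff.addMonoidHom (0 : ℤ)) 1 y
    have hx0 : (HahnSeries.coeff.addMonoidHom (0 : ℤ)) (atkinU 7 x) = 0 :=
      coeff_zero_of_mem_oddLattice hP0 hx
    have hP1 : (HahnSeries.coeff.addMonoidHom (0 : ℤ)) P = 1 := hP0.coeff_eq
    rw [pow_one, pow_one] at hseven
    rw [hx0, map_add, hseven, map_zsmul, hP1, smul_eq_mul, mul_one] at hcoeff
    exact hcoeff
  have hPmem : P ∈ evenLattice P := by
    have hgen : generator P 1 0 0 ∈ evenLattice P := generator_mem_lattice (by simp) (by simp)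
    simpa [generator, basisElt] using hgen
  refine ⟨y - y.coeff 0 • P, sub_mem hy ((evenLattice P).zsmul_mem hPmem _), ?_⟩
  rw [← hsum, eq_neg_of_add_eq_zero_right hd, zsmul_eq_mul, zsmul_eq_mul]
  push_cast
  ring

lemma exists_mem_evenLattice_tower_eq (hP : IsPZero P) (hP0 : HasLeadingTerm 0 1 P)
    {L : ℕ → ℤ⸨X⸩} (hzero : L 0 = 1) (hodd : ∀ β, L (2 * β + 1) = atkinU 7 (a₃ * L (2 * β)))
    (heven : ∀ β, L (2 * β + 2) = atkinU 7 (L (2 * β + 1))) (α : ℕ) :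
    ∃ x ∈ evenLattice P, L (2 * (α + 1)) = 7 ^ (α + 1) * x := by
  induction α with
  | zero =>
    obtain ⟨y, hy, hxy⟩ := exists_mem_evenLattice_atkinU_eq hP hP0 (atkinU_a₃_mem_oddLattice hP)
    have hL1 : L 1 = atkinU 7 a₃ := by simpa [hzero] using hodd 0
    refine ⟨y, hy, ?_⟩
    rw [zero_add, mul_one, pow_one, ← hxy, ← hL1]
    exact heven 0
  | succ α ih =>
    obtain ⟨x, hx, hLx⟩ := ih
    obtain ⟨y, hy, hxy⟩ :=
      exists_mem_evenLattice_atkinU_eq hP hP0 (atkinU_a₃_mul_mem_oddLattice hP hx)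
    refine ⟨y, hy, ?_⟩
    calc L (2 * (α + 1) + 2) = atkinU 7 (atkinU 7 (7 ^ (α + 1) * (a₃ * x))) := by
          rw [heven, hodd, hLx, mul_left_comm]
      _ = 7 ^ (α + 1) * (7 * y) := by rw [map_seven_pow_mul, map_seven_pow_mul, hxy]
      _ = 7 ^ (α + 1 + 1) * y := by ring

end Tower

section Extraction

lemma tpowSum_single {t : ℤ⟦X⟧} (ht : X ∣ t) (n : ℕ) (a : ℤ) :
    tpowSum t (Pi.single n a) = C a * t ^ n := by
  ext m
  simp only [tpowSum, coeff_mk, coeff_C_mul, Pi.single_apply, ite_mul, zero_mul,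
    Finset.sum_ite_eq', Finset.mem_range]
  split_ifs with hn
  · rfl
  · rw [X_pow_dvd_iff.1 (pow_dvd_pow_of_dvd ht n) m (by lia), mul_zero]

/-- The homomorphism `c ↦ ∑_{n ≥ 1} c(n) 7^{ε(n)} tⁿ`. -/
def weightedSum (t : ℤ⟦X⟧) (ε : ℕ → ℕ) : (ℕ → ℤ) →+ ℤ⟦X⟧ :=
  AddMonoidHom.mk' (fun c => tpowSum t fun n => if 1 ≤ n then c n * 7 ^ ε n else 0) fun c c' => by
    ext m
    simp only [tpowSum, coeff_mk, map_add, Pi.add_apply, ← Finset.sum_add_distrib]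
    refine Finset.sum_congr rfl fun n _ => ?_
    split_ifs <;> ring

lemma weightedSum_single {t : ℤ⟦X⟧} (ht : X ∣ t) (ε : ℕ → ℕ) {n : ℕ} (hn : 1 ≤ n) (a : ℤ) :
    weightedSum t ε (Pi.single n a) = C (a * 7 ^ ε n) * t ^ n := by
  rw [← tpowSum_single ht]
  change tpowSum t _ = _
  congr 1
  funext k
  rcases eq_or_ne k n with rfl | hk
  · simp [hn]
  · simp [hk]

/-- The group of all `∑_{n ≥ 1} c(n) 7^{ε(n)} φ tⁿ` with integers `c(n)`. -/
def weightedSums (t : ℤ⟦X⟧) (φ : ℤ⸨X⸩) (ε : ℕ → ℕ) : AddSubgroup ℤ⸨X⸩ :=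
  ((AddMonoidHom.mulLeft φ).comp (toLaurent.toAddMonoidHom.comp (weightedSum t ε))).range

lemma seven_pow_mul_mem_weightedSums {t : ℤ⟦X⟧} (ht : X ∣ t) (φ : ℤ⸨X⸩) {ε : ℕ → ℕ} {n M : ℕ}
    (hn : 1 ≤ n) (hM : ε n ≤ M) : 7 ^ M * (φ * toLaurent t ^ n) ∈ weightedSums t φ ε := by
  refine ⟨Pi.single n (7 ^ (M - ε n)), ?_⟩
  change φ * toLaurent (weightedSum t ε _) = _
  rw [weightedSum_single ht ε hn, ← pow_add, Nat.sub_add_cancel hM]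
  simp only [map_mul, map_pow, map_ofNat]
  ring

lemma seven_pow_mul_mem_of_mem_evenLattice {t : ℤ⟦X⟧} (ht : X ∣ t) (htUnit : toLaurent t = tUnit)
    {P : ℤ⸨X⸩} (α : ℕ) {x : ℤ⸨X⸩} (hx : x ∈ evenLattice P) :
    7 ^ α * x ∈ AddSubgroup.zmultiples (7 ^ α * P) ⊔
      weightedSums t P (fun n => (7 * n - 4) / 4 + α) ⊔
      weightedSums t p1 (fun n => (7 * n - 7) / 4 + α) ⊔
      weightedSums t 1 (fun n => (7 * n - 7) / 4 + α) := by
  refine map_mem_of_mem_lattice (AddMonoidHom.mulLeft (7 ^ α)) (fun i m N hme hms => ?_) hx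
  obtain ⟨n, rfl⟩ := Int.eq_ofNat_of_zero_le (show 0 ≤ m by fin_cases i <;> simp at hms <;> lia)
  rw [AddMonoidHom.coe_mulLeft, generator_natCast, ← htUnit, ← mul_assoc, ← pow_add]
  fin_cases i
  · exact AddSubgroup.mem_sup_right (seven_pow_mul_mem_weightedSums ht 1
      (by simp at hms; lia) (by simp at hme; lia))
  · refine AddSubgroup.mem_sup_left (AddSubgroup.mem_sup_left ?_)
    rcases Nat.eq_zero_or_pos n with rfl | hn
    · refine AddSubgroup.mem_sup_left (AddSubgroup.mem_zmultiples_iff.2 ⟨7 ^ N, ?_⟩)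
      change _ = 7 ^ (α + N) * (P * toLaurent t ^ 0)
      rw [zsmul_eq_mul]
      push_cast
      ring
    · exact AddSubgroup.mem_sup_right (seven_pow_mul_mem_weightedSums ht P hn (by simp at hme; lia))
  · exact AddSubgroup.mem_sup_left (AddSubgroup.mem_sup_right
      (seven_pow_mul_mem_weightedSums ht p1 (by simp at hms; lia) (by simp at hme; lia)))

lemma exists_tpowSum_eq_of_mem_evenLattice {t p₀ : ℤ⟦X⟧} (ht : X ∣ t)
    (htUnit : toLaurent t = tUnit) (α : ℕ) {x : ℤ⸨X⸩} (hx : x ∈ evenLattice (toLaurent p₀)) :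
    ∃ (d₀₀ : ℤ) (d : ℕ → ℕ → ℤ), 7 ^ α * x =
      ((d₀₀ * 7 ^ α : ℤ) : ℤ⸨X⸩) * toLaurent p₀
      + toLaurent (p₀ * tpowSum t fun n =>
          if 1 ≤ n then d n 0 * 7 ^ ((7 * n - 4) / 4 + α) else 0)
      + p1 * toLaurent (tpowSum t fun n =>
          if 1 ≤ n then d n 1 * 7 ^ ((7 * n - 7) / 4 + α) else 0)
      + toLaurent (tpowSum t fun n =>
          if 1 ≤ n then d n 2 * 7 ^ ((7 * n - 7) / 4 + α) else 0) := by
  obtain ⟨_, h₁, _, ⟨c₂, rfl⟩, hsum⟩ :=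
    AddSubgroup.mem_sup.1 (seven_pow_mul_mem_of_mem_evenLattice ht htUnit α hx)
  obtain ⟨_, h₀, _, ⟨c₁, rfl⟩, rfl⟩ := AddSubgroup.mem_sup.1 h₁
  obtain ⟨_, ⟨d₀₀, rfl⟩, _, ⟨c₀, rfl⟩, rfl⟩ := AddSubgroup.mem_sup.1 h₀
  refine ⟨d₀₀, fun n => fun | 0 => c₀ n | 1 => c₁ n | _ => c₂ n, ?_⟩
  rw [← hsum, map_mul]
  congr 1
  · congr 1
    congr 1
    change d₀₀ • _ = _
    rw [zsmul_eq_mul]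
    push_cast
    ring
  · exact one_mul _

lemma X_dvd_of_mul_J_pow_eq {t : ℤ⟦X⟧} (h : t * J 1 ^ 4 = X * J 7 ^ 4) : X ∣ t := by
  have hcoeff := congrArg constantCoeff h
  simpa [X_dvd_iff, constantCoeff_J] using hcoeff

lemma hasLeadingTerm_of_one_add_seven_mul {p₀ : ℤ⟦X⟧}
    (h : (1 + 7 * p₀) * (J 1 ^ 7 * J 14) = 8 * J 2 ^ 7 * J 7) :
    HasLeadingTerm 0 1 (toLaurent p₀) := by
  have hcoeff := congrArg constantCoeff h
  simp only [map_mul, map_add, map_pow, map_one, map_ofNat, constantCoeff_J, Nat.ofNat_pos,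
    zero_lt_one] at hcoeff
  have hone : constantCoeff p₀ = 1 := by lia
  simpa [hone] using hasLeadingTerm_toLaurent p₀

end Extraction

end D3Tower

open D3Tower

/-- in the d₃ tower, for every `α ≥ 1` there are integers `d(0,0)`, `d(n,i)`
with `L_{2α} = d(0,0)·7^α·p₀ + p₀·∑_{n≥1} d(n,0)·7^{⌊(7n−4)/4⌋+α}·tⁿ
 + p₁·∑_{n≥1} d(n,1)·7^{⌊(7n−7)/4⌋+α}·tⁿ + ∑_{n≥1} d(n,2)·7^{⌊(7n−7)/4⌋+α}·tⁿ`.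
Here `t = q·J_7^4/J_1^4`, `p₀ = (8·J_2^7·J_7/(J_1^7·J_14) − 1)/7`,
`p₁ = q⁻¹·J_2^4·J_7^4/(J_1^4·J_14^4)`, all given by their defining equations. -/
theorem stmt12
    (t : PowerSeries ℤ) (ht : t * (J 1) ^ 4 = PowerSeries.X * (J 7) ^ 4)
    (p0 : PowerSeries ℤ)
    (hp0 : (1 + 7 * p0) * ((J 1) ^ 7 * J 14) = 8 * (J 2) ^ 7 * J 7)
    (p1 : LaurentSeries ℤ)
    (hp1 : p1 * HahnSeries.ofPowerSeries ℤ ℤ (PowerSeries.X * (J 1) ^ 4 * (J 14) ^ 4)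
        = HahnSeries.ofPowerSeries ℤ ℤ ((J 2) ^ 4 * (J 7) ^ 4))
    (U : LaurentSeries ℤ → LaurentSeries ℤ)
    (hU : ∀ (f : LaurentSeries ℤ) (n : ℤ), (U f).coeff n = f.coeff (7 * n))
    (A3 : LaurentSeries ℤ)
    (hA3 : A3 * HahnSeries.ofPowerSeries ℤ ℤ ((J 1) ^ 10 * (J 98) ^ 3)
        = HahnSeries.ofPowerSeries ℤ ℤ (PowerSeries.X ^ 8 * (J 2) ^ 3 * (J 49) ^ 10))
    (L : ℕ → LaurentSeries ℤ) (hL0 : L 0 = 1)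
    (hLodd : ∀ β : ℕ, L (2 * β + 1) = U (A3 * L (2 * β)))
    (hLeven : ∀ β : ℕ, L (2 * β + 2) = U (L (2 * β + 1)))
    (α : ℕ) (hα : 1 ≤ α) :
    ∃ d00 : ℤ, ∃ d : ℕ → ℕ → ℤ,
      L (2 * α)
        = ((d00 * 7 ^ α : ℤ) : LaurentSeries ℤ) * HahnSeries.ofPowerSeries ℤ ℤ p0
        + HahnSeries.ofPowerSeries ℤ ℤ
            (p0 * tpowSum t fun n =>
              if 1 ≤ n then d n 0 * 7 ^ ((7 * n - 4) / 4 + α) else 0)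
        + p1 * HahnSeries.ofPowerSeries ℤ ℤ
            (tpowSum t fun n =>
              if 1 ≤ n then d n 1 * 7 ^ ((7 * n - 7) / 4 + α) else 0)
        + HahnSeries.ofPowerSeries ℤ ℤ
            (tpowSum t fun n =>
              if 1 ≤ n then d n 2 * 7 ^ ((7 * n - 7) / 4 + α) else 0) := by
  obtain rfl := eq_a₃ hA3
  obtain rfl := eq_p1 hp1
  obtain rfl : U = atkinU 7 := funext fun f => HahnSeries.ext (funext (hU f))
  obtain ⟨β, rfl⟩ := Nat.exists_eq_add_of_le' hα
  obtain ⟨x, hx, hLx⟩ := exists_mem_evenLattice_tower_eq (toLaurent_isPZero hp0)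
    (hasLeadingTerm_of_one_add_seven_mul hp0) hL0 hLodd hLeven β
  rw [hLx]
  exact exists_tpowSum_eq_of_mem_evenLattice (X_dvd_of_mul_J_pow_eq ht) (toLaurent_eq_tUnit ht)
    (β + 1) hx
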